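/- arXiv:2504.17932 — 2 statements merged into one kernel-verified Lean document; each statement's English description precedes it below -/
import Mathlib

section
/- Let d ≥ 2, μ > 0, and ψ ∈ C_c^∞(ℝ^{d−1}) with supp ψ ⊆ {η : 0 < c₀ ≤ |η| ≤ c₁}. Let q > 2 and r ≥ 2 satisfy 1/q = ((d−1)/2)(1/2 − 1/r). Then there exists C > 0, depending only on d, μ, ψ, q, r, such that for every j ≥ 0 and every f₀ ∈ 𝒮(ℝ^{d−1}), the solution f(t, x′) := (2π)^{1−d} ∫_{ℝ^{d−1}} e^{i x′·ξ′} cos(t μ^{1/2} |ξ′|^{1/2}) ψ(2^{−2j} ξ′) f̂₀(ξ′) dξ′ of the initial value problem ∂_t² f + μ|∇_{x′}| f = 0, (f, ∂_t f)(0) = (ψ(2^{−2j}D_{x′}) f₀, 0), satisfies ‖f‖_{L^q([0,1]; L^r(ℝ^{d−1}))} ≤ C · 2^{2j·(3(d−1)/4)(1/2 − 1/r)} ‖ψ(2^{−2j}D_{x′}) f₀‖_{L²(ℝ^{d−1})}. -/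
open Real MeasureTheory
open scoped RealInnerProductSpace

noncomputable section

/-- The Fourier transform `f̂(ξ) = ∫ e^{−ix·ξ} f(x) dx`. -/
def fhat {n : ℕ} (φ : EuclideanSpace ℝ (Fin n) → ℂ)
    (ξ : EuclideanSpace ℝ (Fin n)) : ℂ :=
  ∫ x : EuclideanSpace ℝ (Fin n), Complex.exp (-Complex.I * (⟪x, ξ⟫ : ℝ)) * φ x

/-- The solution `f(t,x′)` of `∂_t²f + μ|∇_{x′}|f = 0` with frequency-localized
initial data `(ψ(2^{−2j}D)f₀, 0)`. -/
def halfWave (d : ℕ) (μ : ℝ) (ψ : EuclideanSpace ℝ (Fin (d - 1)) → ℝ) (j : ℕ)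
    (f₀ : EuclideanSpace ℝ (Fin (d - 1)) → ℂ)
    (t : ℝ) (x' : EuclideanSpace ℝ (Fin (d - 1))) : ℂ :=
  (((2 * π) ^ ((1 : ℤ) - (d : ℤ)) : ℝ) : ℂ) *
    ∫ ξ : EuclideanSpace ℝ (Fin (d - 1)),
      Complex.exp (Complex.I * (⟪x', ξ⟫ : ℝ)) *
        (Real.cos (t * Real.sqrt μ * Real.sqrt ‖ξ‖) : ℂ) *
        (ψ (((2 : ℝ) ^ (2 * j))⁻¹ • ξ) : ℂ) * fhat f₀ ξ

/-- The frequency cutoff `ψ(2^{−2j}D_{x′})f₀`. -/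
def cutoff (d : ℕ) (ψ : EuclideanSpace ℝ (Fin (d - 1)) → ℝ) (j : ℕ)
    (f₀ : EuclideanSpace ℝ (Fin (d - 1)) → ℂ)
    (x' : EuclideanSpace ℝ (Fin (d - 1))) : ℂ :=
  (((2 * π) ^ ((1 : ℤ) - (d : ℤ)) : ℝ) : ℂ) *
    ∫ ξ : EuclideanSpace ℝ (Fin (d - 1)),
      Complex.exp (Complex.I * (⟪x', ξ⟫ : ℝ)) *
        (ψ (((2 : ℝ) ^ (2 * j))⁻¹ • ξ) : ℂ) * fhat f₀ ξ

/-!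
By the `TT*` method it suffices to bound `∫ χ |T* F|²`, where `T` is the propagator with phase
`t √μ √|ξ|` and `χ` cuts off to the frequency shell. At unit frequency the kernel of the
cut-off propagator decays like `|t| ^ (-n / 2)`, `n = d - 1`: its squared modulus is an integral
over `h` of oscillatory integrals with phase `t (φ (ξ + h) - φ ξ)`, and since `φ = √|·|` has an
injective gradient and a nondegenerate Hessian away from `0`, the gradient of this phase is at least
of order `|t| |h|` and integrating by parts bounds them by `(1 + |t h|) ^ (-n - 1)`. Rescaling to
frequency `L = 2 ^ (2 * j)` costs the factor `L ^ (3 * n / 4)`. Interpolating (Riesz–Thorin) with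
the trivial `L²` bound gives `L^{r'} → L^r` decay `|t - s| ^ (-2 / q)`, which
Hardy–Littlewood–Sobolev integrates in time because `q > 2`; duality of mixed norms returns to the
propagator, and the cosine is the mean of the two propagators with phases `± t √μ √|ξ|`.
-/

open scoped ENNReal NNReal ContDiff

section HardyLittlewoodSobolev

variable {a : ℝ}

lemma lintegral_comp_abs (f : ℝ → ℝ≥0∞) :
    ∫⁻ s, f |s| = 2 * ∫⁻ s in Set.Ioi 0, f s := by
  have right_half : ∫⁻ s in Set.Ioi 0, f |s| = ∫⁻ s in Set.Ioi 0, f s :=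
    setLIntegral_congr_fun measurableSet_Ioi fun s hs ↦ by rw [abs_of_pos hs]
  have left_half : ∫⁻ s in Set.Iic 0, f |s| = ∫⁻ s in Set.Ioi 0, f |s| := by
    rw [setLIntegral_congr Ioi_ae_eq_Ici, ← lintegral_indicator measurableSet_Iic,
      ← lintegral_indicator measurableSet_Ici, ← lintegral_neg_eq_self]
    simp only [Set.indicator, Set.mem_Iic, Set.mem_Ici, abs_neg, Left.neg_nonpos_iff]
  rw [← lintegral_add_compl _ measurableSet_Iic, Set.compl_Iic, left_half, right_half, two_mul]

lemma lintegral_ball_abs_rpow_neg (ha : a < 1) {R : ℝ} (hR : 0 < R) :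
    ∫⁻ s in Metric.ball 0 R, ENNReal.ofReal (|s| ^ (-a))
      = ENNReal.ofReal (2 / (1 - a) * R ^ (1 - a)) := by
  have hint : IntegrableOn (fun s : ℝ ↦ s ^ (-a)) (Set.Ioo 0 R) :=
    (intervalIntegral.integrableOn_Ioo_rpow_iff hR).2 (by linarith)
  have half_line : ∫⁻ s in Set.Ioo 0 R, ENNReal.ofReal (s ^ (-a))
      = ENNReal.ofReal (R ^ (1 - a) / (1 - a)) := by
    rw [← ofReal_integral_eq_lintegral_ofReal hint, ← integral_Ioc_eq_integral_Ioo,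
      ← intervalIntegral.integral_of_le hR.le, integral_rpow (Or.inl (by linarith)),
      Real.zero_rpow (by linarith)]
    · ring_nf
    · filter_upwards [ae_restrict_mem measurableSet_Ioo] with s hs
      exact Real.rpow_nonneg hs.1.le _
  calc _ = ∫⁻ s : ℝ, (Set.Iio R).indicator (fun s ↦ ENNReal.ofReal (s ^ (-a))) |s| := by
        rw [← lintegral_indicator measurableSet_ball]
        simp only [Set.indicator, mem_ball_zero_iff, Real.norm_eq_abs, Set.mem_Iio]
    _ = 2 * ENNReal.ofReal (R ^ (1 - a) / (1 - a)) := by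
        rw [lintegral_comp_abs, setLIntegral_indicator measurableSet_Iio, Set.inter_comm,
          Set.Ioi_inter_Iio, half_line]
    _ = _ := by
        rw [← ENNReal.ofReal_ofNat, ← ENNReal.ofReal_mul (by norm_num)]
        ring_nf

lemma lintegral_compl_ball_abs_rpow_neg {b : ℝ} (hb : 1 < b) {R : ℝ} (hR : 0 < R) :
    ∫⁻ s in (Metric.ball 0 R)ᶜ, ENNReal.ofReal (|s| ^ (-b))
      = ENNReal.ofReal (2 / (b - 1) * R ^ (1 - b)) := by
  have half_line : ∫⁻ s in Set.Ici R, ENNReal.ofReal (s ^ (-b))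
      = ENNReal.ofReal (R ^ (1 - b) / (b - 1)) := by
    rw [← setLIntegral_congr Ioi_ae_eq_Ici,
      ← ofReal_integral_eq_lintegral_ofReal (integrableOn_Ioi_rpow_of_lt (by linarith) hR),
      integral_Ioi_rpow_of_lt (by linarith) hR]
    · rw [neg_div, ← div_neg]
      ring_nf
    · filter_upwards [ae_restrict_mem measurableSet_Ioi] with s hs
      exact Real.rpow_nonneg (hR.le.trans (le_of_lt hs)) _
  calc _ = ∫⁻ s : ℝ, (Set.Ici R).indicator (fun s ↦ ENNReal.ofReal (s ^ (-b))) |s| := by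
        rw [← lintegral_indicator measurableSet_ball.compl]
        simp only [Set.indicator, Set.mem_compl_iff, mem_ball_zero_iff, Real.norm_eq_abs, not_lt,
          Set.mem_Ici]
    _ = 2 * ENNReal.ofReal (R ^ (1 - b) / (b - 1)) := by
        rw [lintegral_comp_abs, setLIntegral_indicator measurableSet_Ici,
          Set.inter_eq_left.2 (Set.Ici_subset_Ioi.2 hR), half_line]
    _ = _ := by
        rw [← ENNReal.ofReal_ofNat, ← ENNReal.ofReal_mul (by norm_num)]
        ring_nf

lemma lintegral_compl_ball_abs_sub_rpow_neg_mul_le (ha0 : 0 < a) (ha1 : a < 1) {φ : ℝ → ℝ≥0∞}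
    (hφ : Measurable φ) {R : ℝ} (hR : 0 < R) (t : ℝ) :
    ∫⁻ s in (Metric.ball t R)ᶜ, ENNReal.ofReal (|t - s| ^ (-a)) * φ s
      ≤ ENNReal.ofReal (2 * R⁻¹) ^ (a / 2) * (∫⁻ s, φ s ^ (2 / (2 - a))) ^ ((2 - a) / 2) := by
  have h2a : 0 < 2 - a := by linarith
  have hconj : (2 / a).HolderConjugate (2 / (2 - a)) := by
    refine Real.holderConjugate_iff.2 ⟨by rw [lt_div_iff₀ ha0]; linarith, ?_⟩
    field_simp
    ring
  have hkernel : ∫⁻ s in (Metric.ball t R)ᶜ, ENNReal.ofReal (|t - s| ^ (-a)) ^ (2 / a)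
      = ENNReal.ofReal (2 * R⁻¹) := by
    have htail := lintegral_compl_ball_abs_rpow_neg one_lt_two hR
    rw [← lintegral_indicator measurableSet_ball.compl, ← lintegral_sub_left_eq_self _ t] at htail
    rw [← lintegral_indicator measurableSet_ball.compl]
    have hpow (s : ℝ) : ENNReal.ofReal (|t - s| ^ (-a)) ^ (2 / a)
        = ENNReal.ofReal (|t - s| ^ (-2 : ℝ)) := by
      rw [ENNReal.ofReal_rpow_of_nonneg (by positivity) (by positivity),
        ← Real.rpow_mul (abs_nonneg _), neg_mul, mul_div_cancel₀ _ ha0.ne']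
    have hvalue : (2 : ℝ) / (2 - 1) * R ^ (1 - 2 : ℝ) = 2 * R⁻¹ := by
      rw [show (1 - 2 : ℝ) = -1 by norm_num, Real.rpow_neg_one]
      norm_num
    rw [← hvalue, ← htail]
    simp only [hpow, Set.indicator, Set.mem_compl_iff, Metric.mem_ball, dist_eq_norm, sub_zero,
      norm_sub_rev]
  calc _ ≤ (∫⁻ s in (Metric.ball t R)ᶜ, ENNReal.ofReal (|t - s| ^ (-a)) ^ (2 / a)) ^ (1 / (2 / a))
        * (∫⁻ s in (Metric.ball t R)ᶜ, φ s ^ (2 / (2 - a))) ^ (1 / (2 / (2 - a))) :=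
        ENNReal.lintegral_mul_le_Lp_mul_Lq _ hconj (by fun_prop) (by fun_prop)
    _ ≤ _ := by
        rw [hkernel, one_div_div, one_div_div]
        gcongr
        exact Measure.restrict_le_self

lemma lintegral_ball_abs_sub_rpow_neg (ha : a < 1) {R : ℝ} (hR : 0 < R) (t : ℝ) :
    ∫⁻ s in Metric.ball t R, ENNReal.ofReal (|t - s| ^ (-a))
      = ENNReal.ofReal (2 / (1 - a) * R ^ (1 - a)) := by
  rw [← lintegral_ball_abs_rpow_neg ha hR, ← lintegral_indicator measurableSet_ball,
    ← lintegral_indicator measurableSet_ball, ← lintegral_sub_left_eq_self _ t]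
  simp only [Set.indicator, Metric.mem_ball, dist_eq_norm, sub_sub_cancel_left, norm_neg,
    sub_sub_cancel, sub_zero]

/- Hedberg's trick: bound `φ` by `h` near `t` and use Hölder's inequality away from `t`, at the
radius balancing the two contributions. -/
lemma lintegral_abs_sub_rpow_neg_mul_min_le (ha0 : 0 < a) (ha1 : a < 1) {φ : ℝ → ℝ≥0∞}
    (hφ : Measurable φ) {N h : ℝ} (hN : 0 < N) (hh : 0 < h)
    (hφN : ∫⁻ s, φ s ^ (2 / (2 - a)) = ENNReal.ofReal N) (t : ℝ) :
    ∫⁻ s, ENNReal.ofReal (|t - s| ^ (-a)) * min (φ s) (ENNReal.ofReal h)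
      ≤ ENNReal.ofReal ((2 / (1 - a) + 2 ^ (a / 2)) * (N ^ (1 - a) * h ^ (a / (2 - a)))) := by
  have : 0 < 1 - a := by linarith
  have h2a : 0 < 2 - a := by linarith
  set R := N * h ^ (-(2 / (2 - a))) with hR_def
  have hR : 0 < R := by positivity
  have near : ∫⁻ s in Metric.ball t R,
      ENNReal.ofReal (|t - s| ^ (-a)) * min (φ s) (ENNReal.ofReal h)
        ≤ ENNReal.ofReal (2 / (1 - a) * R ^ (1 - a)) * ENNReal.ofReal h := by
    rw [← lintegral_ball_abs_sub_rpow_neg ha1 hR t, ← lintegral_mul_const _ (by fun_prop)]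
    gcongr
    exact min_le_right _ _
  have far : ∫⁻ s in (Metric.ball t R)ᶜ,
      ENNReal.ofReal (|t - s| ^ (-a)) * min (φ s) (ENNReal.ofReal h)
        ≤ ENNReal.ofReal (2 * R⁻¹) ^ (a / 2) * ENNReal.ofReal N ^ ((2 - a) / 2) := by
    refine le_trans ?_
      (hφN ▸ lintegral_compl_ball_abs_sub_rpow_neg_mul_le ha0 ha1 hφ hR t)
    gcongr
    exact min_le_left _ _
  have near_value : R ^ (1 - a) * h = N ^ (1 - a) * h ^ (a / (2 - a)) := by
    have hexp : a / (2 - a) = -(2 / (2 - a)) * (1 - a) + 1 := by field_simp; ring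
    rw [hR_def, Real.mul_rpow hN.le (by positivity), ← Real.rpow_mul hh.le, hexp,
      Real.rpow_add_one hh.ne', mul_assoc]
  have far_value : (2 * R⁻¹) ^ (a / 2) * N ^ ((2 - a) / 2)
      = 2 ^ (a / 2) * (N ^ (1 - a) * h ^ (a / (2 - a))) := by
    have hexp : 1 - a = -(a / 2) + (2 - a) / 2 := by ring
    have hexp' : a / (2 - a) = 2 / (2 - a) * (a / 2) := by field_simp
    rw [hR_def, mul_inv, ← Real.rpow_neg hh.le, neg_neg,
      Real.mul_rpow (by norm_num) (by positivity), Real.mul_rpow (by positivity) (by positivity),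
      ← Real.rpow_mul hh.le, ← hexp',
      Real.inv_rpow hN.le, ← Real.rpow_neg hN.le, hexp, Real.rpow_add hN]
    ring
  rw [← lintegral_add_compl _ (measurableSet_ball (x := t) (ε := R))]
  refine (add_le_add near far).trans_eq ?_
  rw [← ENNReal.ofReal_mul (by positivity), mul_assoc, near_value,
    ENNReal.ofReal_rpow_of_nonneg (by positivity) (by positivity),
    ENNReal.ofReal_rpow_of_nonneg hN.le (by positivity), ← ENNReal.ofReal_mul (by positivity),
    far_value, ← ENNReal.ofReal_add (by positivity) (by positivity), add_mul]

lemma lintegral_abs_sub_rpow_neg_mul_min_self_le (ha0 : 0 < a) (ha1 : a < 1) {φ : ℝ → ℝ≥0∞}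
    (hφ : Measurable φ) (h0 : ∫⁻ s, φ s ^ (2 / (2 - a)) ≠ 0)
    (htop : ∫⁻ s, φ s ^ (2 / (2 - a)) ≠ ⊤) {t : ℝ} (ht : φ t ≠ ⊤) :
    ∫⁻ s, ENNReal.ofReal (|t - s| ^ (-a)) * (φ t * min (φ s) (φ t))
      ≤ ENNReal.ofReal (2 / (1 - a) + 2 ^ (a / 2)) * (∫⁻ s, φ s ^ (2 / (2 - a))) ^ (1 - a)
        * φ t ^ (2 / (2 - a)) := by
  have : 0 < 1 - a := by linarith
  have h2a : 0 < 2 - a := by linarith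
  rcases eq_or_ne (φ t) 0 with hφt | hφt
  · simp [hφt]
  obtain ⟨N, hN, hNφ⟩ : ∃ N : ℝ, 0 < N ∧ ∫⁻ s, φ s ^ (2 / (2 - a)) = ENNReal.ofReal N :=
    ⟨_, ENNReal.toReal_pos h0 htop, (ENNReal.ofReal_toReal htop).symm⟩
  obtain ⟨h, hh, hhφ⟩ : ∃ h : ℝ, 0 < h ∧ φ t = ENNReal.ofReal h :=
    ⟨_, ENNReal.toReal_pos hφt ht, (ENNReal.ofReal_toReal ht).symm⟩
  calc _ = φ t * ∫⁻ s, ENNReal.ofReal (|t - s| ^ (-a)) * min (φ s) (φ t) := by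
        rw [← lintegral_const_mul _ (by fun_prop)]
        simp only [mul_left_comm]
    _ ≤ ENNReal.ofReal h
        * ENNReal.ofReal ((2 / (1 - a) + 2 ^ (a / 2)) * (N ^ (1 - a) * h ^ (a / (2 - a)))) := by
        rw [hhφ]
        gcongr
        exact lintegral_abs_sub_rpow_neg_mul_min_le ha0 ha1 hφ hN hh hNφ t
    _ = _ := by
        have hexp : 2 / (2 - a) = a / (2 - a) + 1 := by field_simp; ring
        rw [hNφ, hhφ, ENNReal.ofReal_rpow_of_pos hh, ENNReal.ofReal_rpow_of_pos hN,
          ← ENNReal.ofReal_mul hh.le, ← ENNReal.ofReal_mul (by positivity),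
          ← ENNReal.ofReal_mul (by positivity), hexp, Real.rpow_add_one hh.ne']
        ring_nf

/- `f x * f y = max (f x) (f y) * min (f x) (f y)`, so by symmetry the region where `f x` is the
larger factor controls the whole integral. -/
lemma lintegral_lintegral_mul_le_two_mul_min {X : Type*} [MeasurableSpace X] {ν : Measure X}
    [SFinite ν] {k : X → X → ℝ≥0∞} (hk : Measurable (Function.uncurry k))
    (hsymm : ∀ x y, k x y = k y x) {f : X → ℝ≥0∞} (hf : Measurable f) :
    ∫⁻ x, ∫⁻ y, k x y * (f x * f y) ∂ν ∂ν
      ≤ 2 * ∫⁻ x, ∫⁻ y, k x y * (f x * min (f y) (f x)) ∂ν ∂ν := by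
  have hswap : ∫⁻ x, ∫⁻ y, k x y * (f y * min (f y) (f x)) ∂ν ∂ν
      = ∫⁻ x, ∫⁻ y, k x y * (f x * min (f y) (f x)) ∂ν ∂ν := by
    rw [lintegral_lintegral_swap (by fun_prop)]
    simp only [hsymm, min_comm]
  calc _ ≤ ∫⁻ x, ∫⁻ y, (k x y * (f x * min (f y) (f x)) + k x y * (f y * min (f y) (f x)))
        ∂ν ∂ν := by
        gcongr with x y
        rw [← mul_add, ← add_mul]
        refine mul_le_mul_right ?_ _
        rcases le_total (f y) (f x) with h | h
        · rw [min_eq_left h]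
          gcongr
          exact le_self_add
        · rw [min_eq_right h, mul_comm]
          gcongr
          exact le_add_self
    _ = _ := by
        rw [two_mul]
        nth_rw 2 [← hswap]
        rw [← lintegral_add_left (by fun_prop)]
        congr! with x
        rw [← lintegral_add_left (by fun_prop)]

theorem hardy_littlewood_sobolev_diagonal (ha0 : 0 < a) (ha1 : a < 1) :
    ∃ C : ℝ≥0, ∀ φ : ℝ → ℝ≥0∞, Measurable φ →
      ∫⁻ t, ∫⁻ s, ENNReal.ofReal (|t - s| ^ (-a)) * (φ t * φ s)
        ≤ C * (∫⁻ s, φ s ^ (2 / (2 - a))) ^ (2 - a) := by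
  have : 0 < 1 - a := by linarith
  have h2a : 0 < 2 - a := by linarith
  have hC : 0 < 2 / (1 - a) + 2 ^ (a / 2) := by positivity
  refine ⟨2 * (2 / (1 - a) + 2 ^ (a / 2)).toNNReal, fun φ hφ ↦ ?_⟩
  set I := ∫⁻ s, φ s ^ (2 / (2 - a)) with hI
  rcases eq_or_ne I ⊤ with htop | htop
  · rw [htop, ENNReal.top_rpow_of_pos h2a, ENNReal.mul_top (by simp [hC])]
    exact le_top
  have hφtop : ∀ᵐ t, φ t ≠ ⊤ := by
    filter_upwards [ae_lt_top (by fun_prop) htop] with t ht h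
    simp [h, h2a] at ht
  rcases eq_or_ne I 0 with h0 | h0
  · have hφ0 : ∀ᵐ t, φ t = 0 := by
      filter_upwards [(lintegral_eq_zero_iff (by fun_prop)).1 h0] with t ht
      exact (ENNReal.rpow_eq_zero_iff_of_pos (by positivity)).1 ht
    rw [(lintegral_eq_zero_iff (by fun_prop)).2 (by filter_upwards [hφ0] with t ht; simp [ht])]
    exact zero_le
  calc _ ≤ 2 * ∫⁻ t, ∫⁻ s, ENNReal.ofReal (|t - s| ^ (-a)) * (φ t * min (φ s) (φ t)) :=
        lintegral_lintegral_mul_le_two_mul_min (by fun_prop)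
          (fun t s ↦ by rw [abs_sub_comm]) hφ
    _ ≤ 2 * ∫⁻ t, ENNReal.ofReal (2 / (1 - a) + 2 ^ (a / 2)) * I ^ (1 - a)
        * φ t ^ (2 / (2 - a)) := by
        gcongr 2 * ?_
        refine lintegral_mono_ae ?_
        filter_upwards [hφtop] with t ht
        exact lintegral_abs_sub_rpow_neg_mul_min_self_le ha0 ha1 hφ h0 htop ht
    _ = _ := by
        have hpow : I ^ (2 - a) = I ^ (1 - a) * I := by
          rw [show 2 - a = 1 - a + 1 by ring, ENNReal.rpow_add _ _ h0 htop, ENNReal.rpow_one]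
        rw [lintegral_const_mul _ (by fun_prop), ← hI, hpow]
        push_cast
        rw [ENNReal.ofReal]
        ring

end HardyLittlewoodSobolev

section RieszThorin

lemma differentiable_integral_mul_exp {Y : Type*} [MeasurableSpace Y] {ν : Measure Y} {c : Y → ℂ}
    (hc : Integrable c ν) {L : Y → ℝ} (hL : Measurable L) {M : ℝ} (hLM : ∀ y, |L y| ≤ M) :
    Differentiable ℂ fun z : ℂ ↦ ∫ y, c y * Complex.exp (z * L y) ∂ν := by
  intro z₀
  have hexp (z : ℂ) (hz : z ∈ Metric.ball z₀ 1) (y : Y) :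
      ‖Complex.exp (z * L y)‖ ≤ Real.exp ((‖z₀‖ + 1) * M) := by
    have hz' : ‖z‖ ≤ ‖z₀‖ + 1 := by
      linarith [norm_le_norm_add_norm_sub' z z₀, mem_ball_iff_norm.1 hz]
    refine (Complex.norm_exp_le_exp_norm _).trans (Real.exp_le_exp.2 ?_)
    rw [norm_mul, Complex.norm_real]
    gcongr
    exact hLM y
  refine (hasDerivAt_integral_of_dominated_loc_of_deriv_le (𝕜 := ℂ) (s := Metric.ball z₀ 1)
    (F' := fun z y ↦ c y * (Complex.exp (z * L y) * L y))
    (bound := fun y ↦ ‖c y‖ * (Real.exp ((‖z₀‖ + 1) * M) * M)) (Metric.ball_mem_nhds _ one_pos)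
    (.of_forall fun z ↦ hc.1.mul (by fun_prop)) ?_ (hc.1.mul (by fun_prop)) ?_
    (hc.norm.mul_const _) ?_).2.differentiableAt
  · exact hc.mul_bdd (by fun_prop) (.of_forall (hexp z₀ (Metric.mem_ball_self one_pos)))
  · refine .of_forall fun y z hz ↦ ?_
    rw [norm_mul, norm_mul, Complex.norm_real]
    gcongr
    · exact hexp z hz y
    · exact hLM y
  · refine .of_forall fun y z _ ↦ .const_mul _ ?_
    simpa using ((hasDerivAt_id z).mul_const (L y : ℂ)).cexp

lemma bddAbove_integral_mul_exp {Y : Type*} [MeasurableSpace Y] {ν : Measure Y} {c : Y → ℂ}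
    {L : Y → ℝ} {N : ℝ} (hc : Integrable c ν) (hLN : ∀ y, |L y| ≤ N) :
    BddAbove ((norm ∘ fun z : ℂ ↦ ∫ y, c y * Complex.exp (z * L y) ∂ν) ''
      Complex.HadamardThreeLines.verticalClosedStrip 0 1) := by
  refine ⟨∫ y, ‖c y‖ * Real.exp N ∂ν, ?_⟩
  rintro _ ⟨z, ⟨hz0, hz1⟩, rfl⟩
  refine norm_integral_le_of_norm_le (hc.norm.mul_const _) (.of_forall fun y ↦ ?_)
  rw [norm_mul, Complex.norm_exp, Complex.re_mul_ofReal]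
  gcongr
  calc z.re * L y ≤ |z.re| * |L y| := (le_abs_self _).trans_eq (abs_mul _ _)
    _ ≤ 1 * N := by
        gcongr
        · exact abs_le.2 ⟨by linarith, hz1⟩
        · exact hLN y
    _ = N := one_mul N

lemma enorm_integral_mul_exp_le {Y : Type*} [MeasurableSpace Y] {ν : Measure Y} {c : Y → ℂ}
    (hc : Integrable c ν) {L : Y → ℝ} (hL : Measurable L) {N : ℝ} (hLN : ∀ y, |L y| ≤ N)
    {A B : ℝ≥0∞} (hA : A ≠ ⊤) (hB : B ≠ ⊤)
    (h₀ : ∀ z : ℂ, z.re = 0 → ‖∫ y, c y * Complex.exp (z * L y) ∂ν‖ₑ ≤ A)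
    (h₁ : ∀ z : ℂ, z.re = 1 → ‖∫ y, c y * Complex.exp (z * L y) ∂ν‖ₑ ≤ B) {θ : ℝ}
    (hθ : θ ∈ Set.Icc (0 : ℝ) 1) :
    ‖∫ y, c y * Complex.exp (θ * L y) ∂ν‖ₑ ≤ A ^ (1 - θ) * B ^ θ := by
  have three_lines := Complex.HadamardThreeLines.norm_le_interp_of_mem_verticalClosedStrip₀₁'
    (fun z ↦ ∫ y, c y * Complex.exp (z * L y) ∂ν) (z := θ) (a := A.toReal) (b := B.toReal)
    (by simpa [Complex.HadamardThreeLines.verticalClosedStrip] using hθ)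
    (differentiable_integral_mul_exp hc hL hLN).diffContOnCl (bddAbove_integral_mul_exp hc hLN)
    (fun z hz ↦ by simpa using ENNReal.toReal_mono hA (h₀ z hz))
    (fun z hz ↦ by simpa using ENNReal.toReal_mono hB (h₁ z hz))
  rw [Complex.ofReal_re, ENNReal.toReal_rpow, ENNReal.toReal_rpow,
    ← ENNReal.toReal_mul] at three_lines
  rw [← ofReal_norm]
  exact (ENNReal.ofReal_le_ofReal three_lines).trans ENNReal.ofReal_toReal_le

/-- The complex power `w |w| ^ (α - 1)`, keeping the argument of `w` when `α` is real. The junk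
value `Real.log 0 = 0` is harmless as the first factor vanishes at `w = 0`. -/
def signedPow (α w : ℂ) : ℂ := w / ‖w‖ * Complex.exp (α * Real.log ‖w‖)

@[fun_prop]
lemma measurable_signedPow (α : ℂ) : Measurable (signedPow α) := by
  unfold signedPow
  fun_prop

@[simp]
lemma signedPow_zero_right (α : ℂ) : signedPow α 0 = 0 := by simp [signedPow]

@[simp]
lemma signedPow_one_left (w : ℂ) : signedPow 1 w = w := by
  rcases eq_or_ne w 0 with rfl | hw
  · simp
  · rw [signedPow, one_mul, ← Complex.ofReal_exp, Real.exp_log (norm_pos_iff.2 hw),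
      div_mul_cancel₀ _ (by simpa using hw)]

lemma signedPow_add_mul (α β z w : ℂ) :
    signedPow (α + z * β) w = signedPow α w * Complex.exp (z * (β * Real.log ‖w‖)) := by
  rw [signedPow, signedPow, mul_assoc, ← Complex.exp_add]
  ring_nf

lemma norm_signedPow {α : ℂ} (hα : α.re ≠ 0) (w : ℂ) : ‖signedPow α w‖ = ‖w‖ ^ α.re := by
  rcases eq_or_ne w 0 with rfl | hw
  · simp [Real.zero_rpow hα]
  · rw [signedPow, norm_mul, norm_div, Complex.norm_real, norm_norm,
      div_self (norm_ne_zero_iff.2 hw), one_mul, Complex.norm_exp, Complex.re_mul_ofReal,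
      Real.rpow_def_of_pos (norm_pos_iff.2 hw), mul_comm]

lemma enorm_signedPow {α : ℂ} (hα : 0 < α.re) (w : ℂ) : ‖signedPow α w‖ₑ = ‖w‖ₑ ^ α.re := by
  rw [← ofReal_norm, ← ofReal_norm, norm_signedPow hα.ne',
    ENNReal.ofReal_rpow_of_nonneg (norm_nonneg _) hα.le]

lemma log_norm_signedPow (α w : ℂ) : Real.log ‖signedPow α w‖ = α.re * Real.log ‖w‖ := by
  rcases eq_or_ne w 0 with rfl | hw
  · simp
  · rw [signedPow, norm_mul, norm_div, Complex.norm_real, norm_norm,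
      div_self (norm_ne_zero_iff.2 hw), one_mul, Complex.norm_exp, Real.log_exp,
      Complex.re_mul_ofReal]

/-- The test functions of the interpolation and duality arguments: measurable functions vanishing
off `S` and bounded above and away from zero where they do not vanish. As `Real.log 0 = 0`, both
bounds are expressed by boundedness of `log ‖F‖`. -/
structure IsTestFunctionOn {X : Type*} [MeasurableSpace X] (S : Set X) (F : X → ℂ) : Prop where
  measurable : Measurable F
  bddLog : ∃ M, ∀ x, |Real.log ‖F x‖| ≤ M
  eq_zero_of_notMem : ∀ x ∉ S, F x = 0

namespace IsTestFunctionOn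

variable {X Y : Type*} [MeasurableSpace X] [MeasurableSpace Y] {μ : Measure X} {ν : Measure Y}
  {S : Set X} {T : Set Y} {F : X → ℂ} {G : Y → ℂ}

lemma exists_norm_le (hF : IsTestFunctionOn S F) : ∃ M, ∀ x, ‖F x‖ ≤ M := by
  obtain ⟨M, hM⟩ := hF.bddLog
  refine ⟨Real.exp M, fun x ↦ ?_⟩
  rcases eq_or_ne (F x) 0 with h | h
  · rw [h, norm_zero]
    positivity
  · rw [← Real.exp_log (norm_pos_iff.2 h)]
    exact Real.exp_le_exp.2 ((le_abs_self _).trans (hM x))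

lemma signedPow_comp (hF : IsTestFunctionOn S F) (α : ℂ) :
    IsTestFunctionOn S fun x ↦ signedPow α (F x) where
  measurable := (measurable_signedPow α).comp hF.measurable
  bddLog := by
    obtain ⟨M, hM⟩ := hF.bddLog
    refine ⟨|α.re| * M, fun x ↦ ?_⟩
    rw [log_norm_signedPow, abs_mul]
    gcongr
    exact hM x
  eq_zero_of_notMem x hx := by rw [hF.eq_zero_of_notMem x hx, signedPow_zero_right]

lemma memLp (hF : IsTestFunctionOn S F) (hS : μ S ≠ ⊤) (p : ℝ≥0∞) : MemLp F p μ := by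
  obtain ⟨M, hM⟩ := hF.exists_norm_le
  have : IsFiniteMeasure (μ.restrict S) := ⟨by simpa using hS.lt_top⟩
  have hrestrict : MemLp F p (μ.restrict S) :=
    .of_bound hF.measurable.aestronglyMeasurable M (.of_forall hM)
  refine ⟨hF.measurable.aestronglyMeasurable, ?_⟩
  rw [← eLpNorm_restrict_eq_of_support_subset
    (Function.support_subset_iff'.2 hF.eq_zero_of_notMem)]
  exact hrestrict.2

lemma integrable (hF : IsTestFunctionOn S F) (hS : μ S ≠ ⊤) : Integrable F μ :=
  memLp_one_iff_integrable.1 (hF.memLp hS 1)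

lemma lintegral_enorm_rpow_ne_top (hF : IsTestFunctionOn S F) (hS : μ S ≠ ⊤) {p : ℝ}
    (hp : 0 < p) : ∫⁻ x, ‖F x‖ₑ ^ p ∂μ ≠ ⊤ := by
  have := lintegral_rpow_enorm_lt_top_of_eLpNorm_lt_top (p := ENNReal.ofReal p)
    (by simpa using hp) ENNReal.ofReal_ne_top (hF.memLp hS _).2
  rw [ENNReal.toReal_ofReal hp.le] at this
  exact this.ne

lemma integrable_kernel_mul (hF : IsTestFunctionOn S F) (hG : IsTestFunctionOn T G) [SFinite μ]
    [SFinite ν] (hS : μ S ≠ ⊤) (hT : ν T ≠ ⊤) {k : X × Y → ℂ} (hk : Measurable k) {M : ℝ}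
    (hkM : ∀ z, ‖k z‖ ≤ M) : Integrable (fun z ↦ k z * (F z.1 * G z.2)) (μ.prod ν) :=
  ((hF.integrable hS).mul_prod (hG.integrable hT)).bdd_mul hk.aestronglyMeasurable
    (.of_forall hkM)

variable {k : X × Y → ℂ} {M : ℝ} [SFinite μ] [SFinite ν]

/- Along the family `z ↦ signedPow (α + z α')` the integrand is a fixed integrable function times
`exp (z L)` with `L` real and bounded. -/
lemma exists_kernel_signedPow_eq (hF : IsTestFunctionOn S F) (hG : IsTestFunctionOn T G)
    (hS : μ S ≠ ⊤) (hT : ν T ≠ ⊤) (hk : Measurable k) (hkM : ∀ z, ‖k z‖ ≤ M) (α α' β β' : ℝ) :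
    ∃ (c : X × Y → ℂ) (L : X × Y → ℝ) (N : ℝ), Integrable c (μ.prod ν) ∧ Measurable L ∧
      (∀ w, |L w| ≤ N) ∧ ∀ (z : ℂ) (w : X × Y),
        k w * (signedPow (α + z * α') (F w.1) * signedPow (β + z * β') (G w.2))
          = c w * Complex.exp (z * L w) := by
  obtain ⟨MF, hMF⟩ := hF.bddLog
  obtain ⟨MG, hMG⟩ := hG.bddLog
  have hFm := hF.measurable
  have hGm := hG.measurable
  refine ⟨fun w ↦ k w * (signedPow α (F w.1) * signedPow β (G w.2)),
    fun w ↦ α' * Real.log ‖F w.1‖ + β' * Real.log ‖G w.2‖, |α'| * MF + |β'| * MG,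
    (hF.signedPow_comp α).integrable_kernel_mul (hG.signedPow_comp β) hS hT hk hkM, by fun_prop,
    fun w ↦ ?_, fun z w ↦ ?_⟩
  · refine (abs_add_le _ _).trans ?_
    rw [abs_mul, abs_mul]
    gcongr
    · exact hMF _
    · exact hMG _
  · simp only [signedPow_add_mul, Complex.ofReal_add, Complex.ofReal_mul, mul_add,
      Complex.exp_add]
    ring

end IsTestFunctionOn

section FormBound

variable {X Y : Type*} [MeasurableSpace X] [MeasurableSpace Y] {μ : Measure X} {ν : Measure Y}
  {k : X × Y → ℂ} {S : Set X} {T : Set Y} {F : X → ℂ} {G : Y → ℂ}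

variable (μ ν k) in
/-- The form `∬ k(x, y) F(x) G(y)` satisfies a bound of type `L^{1/a} × L^{1/b} → ℂ` with constant
`B` on test functions. Reciprocal exponents are used since they are affine along an interpolation
scale. -/
def FormBound (S : Set X) (T : Set Y) (a b : ℝ) (B : ℝ≥0∞) : Prop :=
  ∀ F G, IsTestFunctionOn S F → IsTestFunctionOn T G →
    ‖∫ z, k z * (F z.1 * G z.2) ∂(μ.prod ν)‖ₑ
      ≤ B * ((∫⁻ x, ‖F x‖ₑ ^ a⁻¹ ∂μ) ^ a * (∫⁻ y, ‖G y‖ₑ ^ b⁻¹ ∂ν) ^ b)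

lemma FormBound.enorm_integral_signedPow_le {a b a' b' : ℝ} {B : ℝ≥0∞}
    (h : FormBound μ ν k S T a b B) (hF : IsTestFunctionOn S F) (hG : IsTestFunctionOn T G)
    (ha : 0 < a) (hb : 0 < b) (ha' : 0 < a') (hb' : 0 < b') {α β : ℂ} (hα : α.re = a / a')
    (hβ : β.re = b / b') :
    ‖∫ z, k z * (signedPow α (F z.1) * signedPow β (G z.2)) ∂(μ.prod ν)‖ₑ
      ≤ B * ((∫⁻ x, ‖F x‖ₑ ^ a'⁻¹ ∂μ) ^ a * (∫⁻ y, ‖G y‖ₑ ^ b'⁻¹ ∂ν) ^ b) := by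
  have hα0 : 0 < α.re := hα ▸ div_pos ha ha'
  have hβ0 : 0 < β.re := hβ ▸ div_pos hb hb'
  have := h _ _ (hF.signedPow_comp α) (hG.signedPow_comp β)
  simp only [enorm_signedPow hα0, enorm_signedPow hβ0, ← ENNReal.rpow_mul] at this
  rwa [hα, hβ, div_mul_eq_mul_div, mul_inv_cancel₀ ha.ne', div_mul_eq_mul_div,
    mul_inv_cancel₀ hb.ne', one_div, one_div] at this

lemma interpolated_exponent_pos {θ : ℝ} (hθ : θ ∈ Set.Icc (0 : ℝ) 1) {c₀ c₁ : ℝ} (hc₀ : 0 < c₀)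
    (hc₁ : 0 < c₁) : 0 < (1 - θ) * c₀ + θ * c₁ :=
  convex_Ioi (0 : ℝ) hc₀ hc₁ (sub_nonneg.2 hθ.2) hθ.1 (sub_add_cancel 1 θ)

lemma rpow_interpolated_exponent {θ : ℝ} (hθ : θ ∈ Set.Icc (0 : ℝ) 1) {c₀ c₁ : ℝ} (hc₀ : 0 < c₀)
    (hc₁ : 0 < c₁) (x : ℝ≥0∞) :
    x ^ ((1 - θ) * c₀ + θ * c₁) = (x ^ c₀) ^ (1 - θ) * (x ^ c₁) ^ θ := by
  rw [ENNReal.rpow_add_of_nonneg _ _ (mul_nonneg (sub_nonneg.2 hθ.2) hc₀.le)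
    (mul_nonneg hθ.1 hc₁.le), mul_comm _ c₀, mul_comm _ c₁, ENNReal.rpow_mul, ENNReal.rpow_mul]

lemma signedPow_interpolated_exponent {θ c₀ c₁ : ℝ} (hc : (1 - θ) * c₀ + θ * c₁ ≠ 0) (w : ℂ) :
    signedPow (((c₀ / ((1 - θ) * c₀ + θ * c₁) : ℝ) : ℂ)
      + θ * (((c₁ - c₀) / ((1 - θ) * c₀ + θ * c₁) : ℝ) : ℂ)) w = w := by
  have : c₀ / ((1 - θ) * c₀ + θ * c₁) + θ * ((c₁ - c₀) / ((1 - θ) * c₀ + θ * c₁)) = 1 := by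
    rw [mul_div_assoc', ← add_div, div_eq_one_iff_eq hc]
    ring
  rw [← Complex.ofReal_mul, ← Complex.ofReal_add, this, Complex.ofReal_one, signedPow_one_left]

/- Riesz–Thorin: the analytic family `z ↦ ∬ k (F ^ α(z)) (G ^ β(z))`, with `α`, `β` affine, is
bounded on the sides of the strip by the two hypotheses and equals `∬ k F G` at `z = θ`. -/
theorem FormBound.interpolate [SFinite μ] [SFinite ν] (hS : μ S ≠ ⊤) (hT : ν T ≠ ⊤)
    (hk : Measurable k) {M : ℝ} (hkM : ∀ z, ‖k z‖ ≤ M) {a₀ a₁ b₀ b₁ : ℝ} (ha₀ : 0 < a₀)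
    (ha₁ : 0 < a₁) (hb₀ : 0 < b₀) (hb₁ : 0 < b₁) {B₀ B₁ : ℝ≥0∞} (hB₀ : B₀ ≠ ⊤) (hB₁ : B₁ ≠ ⊤)
    (h₀ : FormBound μ ν k S T a₀ b₀ B₀) (h₁ : FormBound μ ν k S T a₁ b₁ B₁) {θ : ℝ}
    (hθ : θ ∈ Set.Icc (0 : ℝ) 1) :
    FormBound μ ν k S T ((1 - θ) * a₀ + θ * a₁) ((1 - θ) * b₀ + θ * b₁)
      (B₀ ^ (1 - θ) * B₁ ^ θ) := by
  intro F G hF hG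
  have ha := interpolated_exponent_pos hθ ha₀ ha₁
  have hb := interpolated_exponent_pos hθ hb₀ hb₁
  rw [rpow_interpolated_exponent hθ ha₀ ha₁, rpow_interpolated_exponent hθ hb₀ hb₁]
  have hF_fin := hF.lintegral_enorm_rpow_ne_top hS (inv_pos.2 ha)
  have hG_fin := hG.lintegral_enorm_rpow_ne_top hT (inv_pos.2 hb)
  have hF_eq := fun x ↦ signedPow_interpolated_exponent ha.ne' (F x)
  have hG_eq := fun y ↦ signedPow_interpolated_exponent hb.ne' (G y)
  set a := (1 - θ) * a₀ + θ * a₁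
  set b := (1 - θ) * b₀ + θ * b₁
  set P := ∫⁻ x, ‖F x‖ₑ ^ a⁻¹ ∂μ
  set Q := ∫⁻ y, ‖G y‖ₑ ^ b⁻¹ ∂ν
  have endpoint_ne_top {B : ℝ≥0∞} (hB : B ≠ ⊤) {c d : ℝ} (hc : 0 < c) (hd : 0 < d) :
      B * (P ^ c * Q ^ d) ≠ ⊤ :=
    ENNReal.mul_ne_top hB (ENNReal.mul_ne_top (ENNReal.rpow_ne_top_of_nonneg hc.le hF_fin)
      (ENNReal.rpow_ne_top_of_nonneg hd.le hG_fin))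
  obtain ⟨c, L, N, hc, hL, hLN, hcL⟩ := hF.exists_kernel_signedPow_eq hG hS hT hk hkM
    (a₀ / a) ((a₁ - a₀) / a) (b₀ / b) ((b₁ - b₀) / b)
  have three_lines := enorm_integral_mul_exp_le hc hL hLN (endpoint_ne_top hB₀ ha₀ hb₀)
    (endpoint_ne_top hB₁ ha₁ hb₁)
    (fun z hz ↦ by
      simpa only [← hcL] using h₀.enorm_integral_signedPow_le hF hG ha₀ hb₀ ha hb
        (by simp [hz]) (by simp [hz]))
    (fun z hz ↦ by
      simpa only [← hcL] using h₁.enorm_integral_signedPow_le hF hG ha₁ hb₁ ha hb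
        (by simp [hz]; ring) (by simp [hz]; ring)) hθ
  simp only [← hcL, hF_eq, hG_eq] at three_lines
  refine three_lines.trans_eq ?_
  simp only [ENNReal.mul_rpow_of_nonneg _ _ (sub_nonneg.2 hθ.2),
    ENNReal.mul_rpow_of_nonneg _ _ hθ.1]
  ring

end FormBound

end RieszThorin

section PartialDerivative

variable {P E G : Type*} [NormedAddCommGroup P] [NormedSpace ℝ P] [NormedAddCommGroup E]
  [NormedSpace ℝ E] [NormedAddCommGroup G] [NormedSpace ℝ G] {F : P × E → G}

/-- The derivative of `F` in the direction `v` of its second variable, as a function on the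
product. -/
def fderivSnd (F : P × E → G) (v : E) (w : P × E) : G := fderiv ℝ F w (0, v)

lemma contDiff_fderivSnd (hF : ContDiff ℝ ∞ F) (v : E) : ContDiff ℝ ∞ (fderivSnd F v) :=
  (hF.fderiv_right (m := ∞) (by simp)).clm_apply contDiff_const

lemma contDiff_slice (hF : ContDiff ℝ ∞ F) (p : P) : ContDiff ℝ ∞ fun ξ ↦ F (p, ξ) :=
  hF.comp (contDiff_const.prodMk contDiff_id)

lemma hasFDerivAt_slice (hF : ContDiff ℝ ∞ F) (p : P) (ξ : E) :
    HasFDerivAt (fun ξ ↦ F (p, ξ)) ((fderiv ℝ F (p, ξ)).comp (.inr ℝ P E)) ξ :=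
  (hF.differentiable (by simp) (p, ξ)).hasFDerivAt.comp ξ (hasFDerivAt_prodMk_right p ξ)

lemma fderiv_slice_apply (hF : ContDiff ℝ ∞ F) (p : P) (ξ v : E) :
    fderiv ℝ (fun ξ ↦ F (p, ξ)) ξ v = fderivSnd F v (p, ξ) := by
  simp [(hasFDerivAt_slice hF p ξ).fderiv, fderivSnd]

end PartialDerivative

section NonstationaryPhase

lemma hasCompactSupport_slice {X Y G : Type*} [TopologicalSpace X] [TopologicalSpace Y] [R1Space Y]
    [Zero G] {F : X × Y → G} {K : Set (X × Y)} (hK : IsCompact K) {x : X}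
    (hFK : ∀ y, (x, y) ∉ K → F (x, y) = 0) : HasCompactSupport fun y ↦ F (x, y) :=
  .intro (hK.image continuous_snd) fun y hy ↦ hFK y fun h ↦ hy ⟨(x, y), h, rfl⟩

lemma exists_norm_integral_exp_mul_le {X Y : Type*} [TopologicalSpace X] [TopologicalSpace Y]
    [MeasurableSpace Y] {ν : Measure Y} [IsFiniteMeasureOnCompacts ν] (Φ : X × Y → ℝ)
    {a : X × Y → ℂ} (ha : Continuous a) {S : Set X} {K : Set (X × Y)} (hK : IsCompact K)
    (haK : ∀ x ∈ S, ∀ y, (x, y) ∉ K → a (x, y) = 0) :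
    ∃ C : ℝ, ∀ x ∈ S, ∀ l : ℝ,
      ‖∫ y, Complex.exp (Complex.I * (l * Φ (x, y) : ℝ)) * a (x, y) ∂ν‖ ≤ C := by
  obtain ⟨M, hM⟩ := hK.exists_bound_of_continuousOn ha.continuousOn
  refine ⟨|M| * ν.real (Prod.snd '' K), fun x hx l ↦ ?_⟩
  have haK' (y : Y) (hy : y ∉ Prod.snd '' K) : a (x, y) = 0 :=
    haK x hx y fun h ↦ hy ⟨(x, y), h, rfl⟩
  rw [← setIntegral_eq_integral_of_forall_compl_eq_zero (s := Prod.snd '' K)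
    fun y hy ↦ by rw [haK' y hy, mul_zero]]
  refine norm_setIntegral_le_of_norm_le_const (hK.image continuous_snd).measure_lt_top
    fun y _ ↦ ?_
  rw [norm_mul, Complex.norm_exp_I_mul_ofReal, one_mul]
  by_cases hy : (x, y) ∈ K
  · exact (hM _ hy).trans (le_abs_self M)
  · rw [haK x hx y hy, norm_zero]
    positivity

variable {P E ι : Type*} [NormedAddCommGroup P] [NormedSpace ℝ P] [NormedAddCommGroup E]
  [NormedSpace ℝ E] [Fintype ι] {e : ι → E} {Φ : P × E → ℝ} {b : ι → P × E → ℝ} {S : Set P}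
  {K : Set (P × E)} {a : P × E → ℂ}

/-- The operator `a ↦ ∑ᵢ ∂ᵢ(bᵢ a)` in the second variable, minus the transpose of the vector field
`∑ᵢ bᵢ ∂ᵢ`. -/
def divergenceMul (e : ι → E) (b : ι → P × E → ℝ) (a : P × E → ℂ) (w : P × E) : ℂ :=
  ∑ i, fderivSnd (fun w ↦ (b i w : ℂ) * a w) (e i) w

lemma contDiff_ofReal_mul {c : P × E → ℝ} (hc : ContDiff ℝ ∞ c) (ha : ContDiff ℝ ∞ a) :
    ContDiff ℝ ∞ fun w ↦ (c w : ℂ) * a w :=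
  (Complex.ofRealCLM.contDiff.comp hc).mul ha

lemma contDiff_divergenceMul (hb : ∀ i, ContDiff ℝ ∞ (b i)) (ha : ContDiff ℝ ∞ a) :
    ContDiff ℝ ∞ (divergenceMul e b a) :=
  ContDiff.sum fun i _ ↦ contDiff_fderivSnd (contDiff_ofReal_mul (hb i) ha) (e i)

lemma divergenceMul_eq_zero_of_notMem (hb : ∀ i, ContDiff ℝ ∞ (b i)) (ha : ContDiff ℝ ∞ a)
    (hK : IsClosed K) {p : P} (haK : ∀ ξ, (p, ξ) ∉ K → a (p, ξ) = 0) {ξ : E}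
    (hξ : (p, ξ) ∉ K) : divergenceMul e b a (p, ξ) = 0 := by
  refine Finset.sum_eq_zero fun i _ ↦ ?_
  have hloc : (fun ξ ↦ (b i (p, ξ) : ℂ) * a (p, ξ)) =ᶠ[nhds ξ] fun _ ↦ 0 := by
    filter_upwards [(Continuous.prodMk_right p).continuousAt.eventually
      (hK.isOpen_compl.mem_nhds hξ)] with η hη
    rw [haK η hη, mul_zero]
  rw [← fderiv_slice_apply (contDiff_ofReal_mul (hb i) ha), hloc.fderiv_eq]
  simp

lemma contDiff_exp_I_mul_slice (hΦ : ContDiff ℝ ∞ Φ) (l : ℝ) (p : P) :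
    ContDiff ℝ ∞ fun ξ ↦ Complex.exp (Complex.I * (l * Φ (p, ξ) : ℝ)) :=
  (contDiff_const.mul
    (Complex.ofRealCLM.contDiff.comp (contDiff_const.mul (contDiff_slice hΦ p)))).cexp

lemma fderiv_exp_I_mul_slice (hΦ : ContDiff ℝ ∞ Φ) (l : ℝ) (p : P) (ξ v : E) :
    fderiv ℝ (fun ξ ↦ Complex.exp (Complex.I * (l * Φ (p, ξ) : ℝ))) ξ v
      = Complex.exp (Complex.I * (l * Φ (p, ξ) : ℝ)) *
        (Complex.I * (l * fderivSnd Φ v (p, ξ) : ℝ)) := by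
  have h := ((Complex.ofRealCLM.hasFDerivAt.comp ξ
    ((hasFDerivAt_slice hΦ p ξ).const_mul l)).const_mul Complex.I).cexp
  exact (DFunLike.congr_fun h.fderiv v).trans (by simp [fderivSnd])

lemma sum_mul_fderiv_exp_eq (hΦ : ContDiff ℝ ∞ Φ) {p : P} {ξ : E}
    (hbK : (p, ξ) ∈ K → ∑ i, b i (p, ξ) * fderivSnd Φ (e i) (p, ξ) = 1)
    (haK : (p, ξ) ∉ K → a (p, ξ) = 0) (l : ℝ) :
    ∑ i, b i (p, ξ) * a (p, ξ) *
        fderiv ℝ (fun ξ ↦ Complex.exp (Complex.I * (l * Φ (p, ξ) : ℝ))) ξ (e i)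
      = Complex.I * l * (Complex.exp (Complex.I * (l * Φ (p, ξ) : ℝ)) * a (p, ξ)) := by
  have hsum : a (p, ξ) * (∑ i, b i (p, ξ) * fderivSnd Φ (e i) (p, ξ) : ℝ) = a (p, ξ) := by
    by_cases hξ : (p, ξ) ∈ K
    · rw [hbK hξ, Complex.ofReal_one, mul_one]
    · rw [haK hξ, zero_mul]
  conv_rhs => rw [← hsum, Complex.ofReal_sum, Finset.mul_sum, Finset.mul_sum, Finset.mul_sum]
  refine Finset.sum_congr rfl fun i _ ↦ ?_
  rw [fderiv_exp_I_mul_slice hΦ]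
  push_cast
  ring

variable [FiniteDimensional ℝ E] [MeasurableSpace E] [BorelSpace E] {ν : Measure E}
  [ν.IsAddHaarMeasure]

lemma integral_mul_fderiv_eq_neg {f g : E → ℂ} (hf : ContDiff ℝ ∞ f) (hg : ContDiff ℝ ∞ g)
    (hfc : HasCompactSupport f) (v : E) :
    ∫ ξ, f ξ * fderiv ℝ g ξ v ∂ν = -∫ ξ, fderiv ℝ f ξ v * g ξ ∂ν := by
  have hf' := (hf.continuous_fderiv (by simp)).clm_apply (continuous_const (y := v))
  have hg' := (hg.continuous_fderiv (by simp)).clm_apply (continuous_const (y := v))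
  exact integral_mul_fderiv_eq_neg_fderiv_mul_of_integrable
    ((hf'.mul hg.continuous).integrable_of_hasCompactSupport
      ((hfc.fderiv_apply ℝ v).mul_right))
    ((hf.continuous.mul hg').integrable_of_hasCompactSupport hfc.mul_right)
    ((hf.continuous.mul hg.continuous).integrable_of_hasCompactSupport hfc.mul_right)
    (fun ξ _ ↦ hf.differentiable (by simp) ξ) fun ξ _ ↦ hg.differentiable (by simp) ξ

lemma integral_exp_mul_eq_integral_divergenceMul (hΦ : ContDiff ℝ ∞ Φ)
    (hb : ∀ i, ContDiff ℝ ∞ (b i)) (ha : ContDiff ℝ ∞ a) (hK : IsCompact K)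
    (hbK : ∀ w ∈ K, ∑ i, b i w * fderivSnd Φ (e i) w = 1) {p : P}
    (haK : ∀ ξ, (p, ξ) ∉ K → a (p, ξ) = 0) (l : ℝ) :
    Complex.I * l * ∫ ξ, Complex.exp (Complex.I * (l * Φ (p, ξ) : ℝ)) * a (p, ξ) ∂ν
      = -∫ ξ, Complex.exp (Complex.I * (l * Φ (p, ξ) : ℝ)) * divergenceMul e b a (p, ξ) ∂ν := by
  set g : E → ℂ := fun ξ ↦ Complex.exp (Complex.I * (l * Φ (p, ξ) : ℝ)) with hg_def
  set f : ι → E → ℂ := fun i ξ ↦ (b i (p, ξ) : ℂ) * a (p, ξ) with hf_def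
  have hg : ContDiff ℝ ∞ g := contDiff_exp_I_mul_slice hΦ l p
  have hf (i : ι) : ContDiff ℝ ∞ (f i) := contDiff_slice (contDiff_ofReal_mul (hb i) ha) p
  have hfc (i : ι) : HasCompactSupport (f i) := (hasCompactSupport_slice hK haK).mul_left
  have hint (i : ι) : Integrable (fun ξ ↦ f i ξ * fderiv ℝ g ξ (e i)) ν :=
    ((hf i).continuous.mul ((hg.continuous_fderiv (by simp)).clm_apply
      continuous_const)).integrable_of_hasCompactSupport (hfc i).mul_right
  have hint' (i : ι) : Integrable (fun ξ ↦ fderiv ℝ (f i) ξ (e i) * g ξ) ν :=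
    ((((hf i).continuous_fderiv (by simp)).clm_apply continuous_const).mul
      hg.continuous).integrable_of_hasCompactSupport ((hfc i).fderiv_apply ℝ (e i)).mul_right
  calc Complex.I * l * ∫ ξ, g ξ * a (p, ξ) ∂ν
      = ∑ i, ∫ ξ, f i ξ * fderiv ℝ g ξ (e i) ∂ν := by
        rw [← integral_const_mul, ← integral_finsetSum _ fun i _ ↦ hint i]
        simp only [hg_def, hf_def, sum_mul_fderiv_exp_eq hΦ (hbK _) (haK _)]
    _ = -∫ ξ, ∑ i, fderiv ℝ (f i) ξ (e i) * g ξ ∂ν := by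
        rw [integral_finsetSum _ fun i _ ↦ hint' i, ← Finset.sum_neg_distrib]
        exact Finset.sum_congr rfl fun i _ ↦ integral_mul_fderiv_eq_neg (hf i) hg (hfc i) (e i)
    _ = -∫ ξ, g ξ * divergenceMul e b a (p, ξ) ∂ν := by
        simp only [hf_def, fderiv_slice_apply (contDiff_ofReal_mul (hb _) ha), divergenceMul,
          Finset.sum_mul, mul_comm (g _)]

/- Each application of the vector field `∑ᵢ bᵢ ∂ᵢ`, which reproduces `exp (i l Φ)` up to the factor
`i l`, followed by an integration by parts gains a power of `l`. -/
lemma exists_pow_mul_norm_integral_exp_mul_le (hΦ : ContDiff ℝ ∞ Φ)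
    (hb : ∀ i, ContDiff ℝ ∞ (b i)) (hK : IsCompact K)
    (hbK : ∀ w ∈ K, ∑ i, b i w * fderivSnd Φ (e i) w = 1) (N : ℕ) (ha : ContDiff ℝ ∞ a)
    (haK : ∀ p ∈ S, ∀ ξ, (p, ξ) ∉ K → a (p, ξ) = 0) :
    ∃ C : ℝ, ∀ p ∈ S, ∀ l : ℝ,
      |l| ^ N * ‖∫ ξ, Complex.exp (Complex.I * (l * Φ (p, ξ) : ℝ)) * a (p, ξ) ∂ν‖ ≤ C := by
  induction N generalizing a with
  | zero =>
    obtain ⟨C, hC⟩ := exists_norm_integral_exp_mul_le (ν := ν) Φ ha.continuous hK haK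
    exact ⟨C, fun p hp l ↦ by simpa using hC p hp l⟩
  | succ N ih =>
    obtain ⟨C, hC⟩ := ih (contDiff_divergenceMul (e := e) hb ha) fun p hp ξ ↦
      divergenceMul_eq_zero_of_notMem hb ha hK.isClosed (haK p hp)
    refine ⟨C, fun p hp l ↦ ?_⟩
    have hparts := congrArg norm
      (integral_exp_mul_eq_integral_divergenceMul (ν := ν) hΦ hb ha hK hbK (haK p hp) l)
    rw [norm_neg, norm_mul, norm_mul, Complex.norm_I, one_mul, Complex.norm_real,
      Real.norm_eq_abs] at hparts
    rw [pow_succ, mul_assoc, hparts]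
    exact hC p hp l

end NonstationaryPhase

section NonvanishingGradient

lemma exists_contDiff_pos_eq_self {m : ℝ} (hm : 0 < m) :
    ∃ η : ℝ → ℝ, ContDiff ℝ ∞ η ∧ (∀ y, 0 < η y) ∧ ∀ y, m ≤ y → η y = y := by
  have : ContDiff ℝ ∞ fun y : ℝ ↦ Real.smoothTransition (2 * y / m - 1) :=
    Real.smoothTransition.contDiff.comp (by fun_prop)
  refine ⟨fun y ↦ Real.smoothTransition (2 * y / m - 1) * y +
    (1 - Real.smoothTransition (2 * y / m - 1)), by fun_prop, fun y ↦ ?_, fun y hy ↦ ?_⟩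
  · have h0 := Real.smoothTransition.nonneg (2 * y / m - 1)
    rcases le_or_gt y 0 with hy | hy
    · have : 2 * y / m ≤ 0 := div_nonpos_of_nonpos_of_nonneg (by linarith) hm.le
      simp [Real.smoothTransition.zero_of_nonpos (show 2 * y / m - 1 ≤ 0 by linarith)]
    · rcases (Real.smoothTransition.le_one (2 * y / m - 1)).lt_or_eq with h | h
      · nlinarith
      · simpa [h] using hy
  · have : 2 ≤ 2 * y / m := (le_div_iff₀ hm).2 (by linarith)
    simp [Real.smoothTransition.one_of_one_le (show 1 ≤ 2 * y / m - 1 by linarith)]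

variable {P E ι : Type*} [NormedAddCommGroup P] [NormedSpace ℝ P] [NormedAddCommGroup E]
  [NormedSpace ℝ E] {Φ : P × E → ℝ} {K : Set (P × E)}

lemma exists_sum_mul_fderivSnd_eq_one [Fintype ι] (e : Module.Basis ι ℝ E)
    (hΦ : ContDiff ℝ ∞ Φ) (hK : IsCompact K) (hne : ∀ w ∈ K, ∃ v, fderivSnd Φ v w ≠ 0) :
    ∃ b : ι → P × E → ℝ, (∀ i, ContDiff ℝ ∞ (b i)) ∧
      ∀ w ∈ K, ∑ i, b i w * fderivSnd Φ (e i) w = 1 := by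
  have hsq_smooth : ContDiff ℝ ∞ fun w ↦ ∑ i, fderivSnd Φ (e i) w ^ 2 :=
    ContDiff.sum fun i _ ↦ (contDiff_fderivSnd hΦ (e i)).pow 2
  have hsq_pos (w : P × E) (hw : w ∈ K) : 0 < ∑ i, fderivSnd Φ (e i) w ^ 2 := by
    refine (Finset.sum_nonneg fun i _ ↦ sq_nonneg _).lt_of_ne fun h0 ↦ ?_
    obtain ⟨v, hv⟩ := hne w hw
    have hzero : ((fderiv ℝ Φ w).comp (.inr ℝ P E)).toLinearMap = 0 := e.ext fun i ↦ by
      simpa [fderivSnd] using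
        (Finset.sum_eq_zero_iff_of_nonneg fun i _ ↦ sq_nonneg _).1 h0.symm i (Finset.mem_univ i)
    exact hv (by simpa [fderivSnd] using DFunLike.congr_fun hzero v)
  obtain ⟨m, hm, hm_le⟩ := hK.exists_forall_le' hsq_smooth.continuous.continuousOn hsq_pos
  obtain ⟨η, hη, hη_pos, hη_eq⟩ := exists_contDiff_pos_eq_self hm
  refine ⟨fun i w ↦ fderivSnd Φ (e i) w / η (∑ i, fderivSnd Φ (e i) w ^ 2), fun i ↦
    (contDiff_fderivSnd hΦ (e i)).div (hη.comp hsq_smooth) fun w ↦ (hη_pos _).ne', fun w hw ↦ ?_⟩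
  simp only [hη_eq _ (hm_le w hw), div_mul_eq_mul_div, ← sq, ← Finset.sum_div]
  exact div_self (hsq_pos w hw).ne'

theorem nonstationary_phase [FiniteDimensional ℝ E] [MeasurableSpace E] [BorelSpace E]
    (ν : Measure E) [ν.IsAddHaarMeasure] {S : Set P} {a : P × E → ℂ} (hΦ : ContDiff ℝ ∞ Φ)
    (ha : ContDiff ℝ ∞ a) (hK : IsCompact K) (haK : ∀ p ∈ S, ∀ ξ, (p, ξ) ∉ K → a (p, ξ) = 0)
    (hne : ∀ w ∈ K, ∃ v, fderivSnd Φ v w ≠ 0) (N : ℕ) :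
    ∃ C : ℝ, ∀ p ∈ S, ∀ l : ℝ,
      (1 + |l|) ^ N * ‖∫ ξ, Complex.exp (Complex.I * (l * Φ (p, ξ) : ℝ)) * a (p, ξ) ∂ν‖ ≤ C := by
  obtain ⟨b, hb, hbK⟩ := exists_sum_mul_fderivSnd_eq_one (Module.finBasis ℝ E) hΦ hK hne
  obtain ⟨C₀, hC₀⟩ := exists_pow_mul_norm_integral_exp_mul_le (ν := ν) hΦ hb hK hbK 0 ha haK
  obtain ⟨C, hC⟩ := exists_pow_mul_norm_integral_exp_mul_le (ν := ν) hΦ hb hK hbK N ha haK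
  refine ⟨2 ^ (N - 1) * (C₀ + C), fun p hp l ↦ ?_⟩
  have hpow := add_pow_le zero_le_one (abs_nonneg l) N
  rw [one_pow] at hpow
  refine (mul_le_mul_of_nonneg_right hpow (norm_nonneg _)).trans ?_
  rw [mul_assoc, add_mul]
  gcongr
  · simpa using hC₀ p hp l
  · exact hC p hp l

end NonvanishingGradient

section DifferenceQuotient

lemma contDiff_integral_zero_one {P G : Type*} [NormedAddCommGroup P] [NormedSpace ℝ P]
    [NormedAddCommGroup G] [NormedSpace ℝ G] {F : P × ℝ → G} (hF : ContDiff ℝ ∞ F) :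
    ContDiff ℝ ∞ fun p ↦ ∫ u in (0 : ℝ)..1, F (p, u) := by
  let ρ : ContDiffBump (0 : ℝ) := ⟨1, 2, one_pos, one_lt_two⟩
  have hsmooth : ContDiff ℝ ∞ fun z : P × ℝ ↦ ρ z.2 • F (z.1, -z.2) :=
    (ρ.contDiff.comp contDiff_snd).smul (hF.comp (contDiff_fst.prodMk contDiff_snd.neg))
  have hconv := contDiffOn_convolution_right_with_param_comp (𝕜 := ℝ) (μ := volume) (n := ⊤)
    (s := Set.univ) (v := fun _ : P ↦ (0 : ℝ)) (f := (Set.Ioc (0 : ℝ) 1).indicator fun _ ↦ (1 : ℝ))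
    (g := fun p u ↦ ρ u • F (p, -u)) (.lsmul ℝ ℝ) contDiffOn_const isOpen_univ
    (isCompact_closedBall (0 : ℝ) 2) (fun p u _ hu ↦ ?_) ?_ hsmooth.contDiffOn
  · convert contDiffOn_univ.1 hconv using 2 with p
    rw [intervalIntegral.integral_of_le zero_le_one, ← integral_indicator measurableSet_Ioc]
    refine integral_congr_ae (.of_forall fun u ↦ ?_)
    by_cases hu : u ∈ Set.Ioc (0 : ℝ) 1
    · have : ρ (-u) = 1 := ρ.one_of_mem_closedBall (by
        simpa [ρ, abs_le] using ⟨by linarith [hu.1], hu.2⟩)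
      simp [hu, this]
    · simp [hu]
  · have : ρ u = 0 := ρ.zero_of_le_dist (by
      simpa [ρ] using (not_le.1 fun h ↦ hu (Metric.mem_closedBall.2 (by simpa using h))).le)
    simp [this]
  · exact ((integrable_indicator_iff measurableSet_Ioc).2 (by simp)).locallyIntegrable

variable {E : Type*} [NormedAddCommGroup E] [NormedSpace ℝ E] {φ : E → ℝ}

/-- The difference quotient `(φ(ξ + κ o) - φ(ξ)) / κ` at `((κ, o), ξ)`, written as an integral of
the derivative so that it is smooth across `κ = 0`. -/
def diffQuotient (φ : E → ℝ) (w : (ℝ × E) × E) : ℝ :=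
  ∫ u in (0 : ℝ)..1, fderiv ℝ φ (w.2 + u • w.1.1 • w.1.2) w.1.2

lemma contDiff_diffQuotient (hφ : ContDiff ℝ ∞ φ) : ContDiff ℝ ∞ (diffQuotient φ) :=
  contDiff_integral_zero_one
    (F := fun z : ((ℝ × E) × E) × ℝ ↦ fderiv ℝ φ (z.1.2 + z.2 • z.1.1.1 • z.1.1.2) z.1.1.2)
    (((hφ.fderiv_right (m := ∞) (by simp)).comp (by fun_prop)).clm_apply (by fun_prop))

lemma mul_diffQuotient (hφ : ContDiff ℝ ∞ φ) (κ : ℝ) (o ξ : E) :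
    κ * diffQuotient φ ((κ, o), ξ) = φ (ξ + κ • o) - φ ξ := by
  have hderiv (u : ℝ) : HasDerivAt (fun u : ℝ ↦ φ (ξ + u • κ • o))
      (κ * fderiv ℝ φ (ξ + u • κ • o) o) u := by
    have hline : HasDerivAt (fun u : ℝ ↦ ξ + u • κ • o) (κ • o) u := by
      simpa using ((hasDerivAt_id u).smul_const (κ • o)).const_add ξ
    simpa [Function.comp_def] using
      (hφ.differentiable (by simp) _).hasFDerivAt.comp_hasDerivAt u hline
  have hcont : Continuous fun u : ℝ ↦ κ * fderiv ℝ φ (ξ + u • κ • o) o :=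
    continuous_const.mul (((hφ.continuous_fderiv (by simp)).comp (by fun_prop)).clm_apply
      continuous_const)
  rw [diffQuotient, ← intervalIntegral.integral_const_mul,
    intervalIntegral.integral_eq_sub_of_hasDerivAt (fun u _ ↦ hderiv u)
      (hcont.intervalIntegrable 0 1)]
  simp

lemma mul_fderivSnd_diffQuotient (hφ : ContDiff ℝ ∞ φ) (κ : ℝ) (o ξ v : E) :
    κ * fderivSnd (diffQuotient φ) v ((κ, o), ξ) = fderiv ℝ φ (ξ + κ • o) v - fderiv ℝ φ ξ v := by
  have hdiff := hφ.differentiable (by simp)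
  have hleft := (hasFDerivAt_slice (contDiff_diffQuotient hφ) (κ, o) ξ).const_mul κ
  have hright := ((hasFDerivAt_comp_add_right (κ • o)).2 (hdiff (ξ + κ • o)).hasFDerivAt).sub
    (hdiff ξ).hasFDerivAt
  simp only [mul_diffQuotient hφ] at hleft
  simpa [fderivSnd] using DFunLike.congr_fun (hleft.unique hright) v

lemma fderivSnd_diffQuotient_zero (hφ : ContDiff ℝ ∞ φ) (o ξ v : E) :
    fderivSnd (diffQuotient φ) v ((0, o), ξ) = fderiv ℝ (fderiv ℝ φ) ξ o v := by
  have hslice : (fun ξ ↦ diffQuotient φ ((0, o), ξ)) = fun ξ ↦ fderiv ℝ φ ξ o := by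
    simp [diffQuotient]
  have hdiff := (hφ.fderiv_right (m := ∞) (by simp)).differentiable (by simp)
  rw [← fderiv_slice_apply (contDiff_diffQuotient hφ), hslice,
    fderiv_clm_apply (hdiff ξ) (differentiableAt_const o),
    hφ.contDiffAt.isSymmSndFDerivAt (by simp [ENat.LEInfty.out]) o v]
  simp

lemma exists_fderivSnd_diffQuotient_ne_zero {K : Set E} (hφ : ContDiff ℝ ∞ φ)
    (hinj : Set.InjOn (fderiv ℝ φ) K)
    (hhess : ∀ ξ ∈ K, Function.Injective (fderiv ℝ (fderiv ℝ φ) ξ)) {κ : ℝ} {o ξ : E}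
    (ho : o ≠ 0) (hξ : ξ ∈ K) (hξκ : ξ + κ • o ∈ K) :
    ∃ v, fderivSnd (diffQuotient φ) v ((κ, o), ξ) ≠ 0 := by
  by_contra! hzero
  rcases eq_or_ne κ 0 with rfl | hκ
  · refine ho (hhess ξ hξ (ContinuousLinearMap.ext fun v ↦ ?_))
    rw [← fderivSnd_diffQuotient_zero hφ, hzero, map_zero, zero_apply]
  · have heq : ξ + κ • o = ξ := hinj hξκ hξ (ContinuousLinearMap.ext fun v ↦ by
      rw [← sub_eq_zero, ← mul_fderivSnd_diffQuotient hφ, hzero, mul_zero])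
    simp [hκ, ho] at heq

end DifferenceQuotient

section DispersiveEstimate

lemma norm_integral_sq_eq_integral_integral_mul_conj {G : Type*} [AddCommGroup G]
    [MeasurableSpace G] [MeasurableAdd₂ G] {ν : Measure G} [SFinite ν] [ν.IsAddLeftInvariant]
    {f : G → ℂ} (hf : Integrable f ν) :
    (‖∫ ξ, f ξ ∂ν‖ ^ 2 : ℂ) = ∫ h, ∫ ξ, f (ξ + h) * (starRingEnd ℂ) (f ξ) ∂ν ∂ν := by
  have hconj : Integrable (fun ξ ↦ (starRingEnd ℂ) (f ξ)) ν :=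
    Complex.conjLIE.toContinuousLinearEquiv.toContinuousLinearMap.integrable_comp hf
  have hprod : Integrable (fun z : G × G ↦ f (z.1 + z.2) * (starRingEnd ℂ) (f z.1))
      (ν.prod ν) := by
    simpa only [Function.comp_def, mul_comm] using
      (measurePreserving_prod_add ν ν).integrable_comp_of_integrable (hconj.mul_prod hf)
  rw [← Complex.mul_conj', ← integral_conj, ← integral_integral_swap hprod, ← integral_const_mul]
  simp only [integral_mul_const, integral_add_left_eq_self]

lemma exp_mul_mul_conj_exp_mul {E : Type*} [AddCommGroup E] [Module ℝ E] [TopologicalSpace E]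
    (ℓ : E →L[ℝ] ℝ) (φ : E → ℝ) (χ : E → ℂ) (s : ℝ) (h ξ : E) :
    Complex.exp (Complex.I * (ℓ (ξ + h) + s * φ (ξ + h) : ℝ)) * χ (ξ + h) *
        (starRingEnd ℂ) (Complex.exp (Complex.I * (ℓ ξ + s * φ ξ : ℝ)) * χ ξ)
      = Complex.exp (Complex.I * (ℓ h : ℝ)) * (Complex.exp (Complex.I *
        (s * (φ (ξ + h) - φ ξ) : ℝ)) * (χ (ξ + h) * (starRingEnd ℂ) (χ ξ))) := by
  simp only [map_mul, ← Complex.exp_conj, Complex.conj_I, Complex.conj_ofReal, map_add]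
  rw [mul_mul_mul_comm, ← Complex.exp_add, ← mul_assoc (Complex.exp (Complex.I * (ℓ h : ℝ))),
    ← Complex.exp_add]
  push_cast
  ring_nf

variable {E : Type*} [NormedAddCommGroup E] [NormedSpace ℝ E] [FiniteDimensional ℝ E]
  {φ : E → ℝ} {χ : E → ℂ}

lemma isCompact_setOf_segment_endpoints_mem {T : Set E} (hT : IsCompact T) :
    IsCompact {w : (ℝ × E) × E | ‖w.1.2‖ = 1 ∧ w.2 ∈ T ∧ w.2 + w.1.1 • w.1.2 ∈ T} := by
  have := FiniteDimensional.proper ℝ E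
  obtain ⟨R, hR⟩ := hT.isBounded.exists_norm_le
  refine (((isCompact_Icc (a := -(2 * R)) (b := 2 * R)).prod (isCompact_sphere (0 : E) 1)).prod
    hT).of_isClosed_subset ?_ ?_
  · exact (isClosed_eq (by fun_prop) continuous_const).inter
      ((hT.isClosed.preimage (by fun_prop)).inter (hT.isClosed.preimage (by fun_prop)))
  · rintro ⟨⟨κ, o⟩, ξ⟩ ⟨ho, hξ, hξκ⟩
    have hκ : |κ| ≤ 2 * R := calc
      |κ| = ‖ξ + κ • o - ξ‖ := by simp_all [norm_smul]
      _ ≤ ‖ξ + κ • o‖ + ‖ξ‖ := norm_sub_le _ _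
      _ ≤ 2 * R := by linarith [hR _ hξ, hR _ hξκ]
    exact ⟨⟨abs_le.1 hκ, by simpa using ho⟩, hξ⟩

variable [Nontrivial E] [MeasurableSpace E] [BorelSpace E] (ν : Measure E) [ν.IsAddHaarMeasure]

lemma exists_norm_integral_exp_sub_mul_conj_le (hφ : ContDiff ℝ ∞ φ) (hχ : ContDiff ℝ ∞ χ)
    (hχc : HasCompactSupport χ) (hinj : Set.InjOn (fderiv ℝ φ) (tsupport χ))
    (hhess : ∀ ξ ∈ tsupport χ, Function.Injective (fderiv ℝ (fderiv ℝ φ) ξ)) (N : ℕ) :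
    ∃ C : ℝ, ∀ (s : ℝ) (h : E),
      ‖∫ ξ, Complex.exp (Complex.I * (s * (φ (ξ + h) - φ ξ) : ℝ)) *
        (χ (ξ + h) * (starRingEnd ℂ) (χ ξ)) ∂ν‖ ≤ C * (1 + ‖s • h‖) ^ (-(N : ℝ)) := by
  have ha : ContDiff ℝ ∞ fun w : (ℝ × E) × E ↦
      χ (w.2 + w.1.1 • w.1.2) * (starRingEnd ℂ) (χ w.2) :=
    (hχ.comp (by fun_prop)).mul (Complex.conjCLE.contDiff.comp (hχ.comp contDiff_snd))
  have haK (p : ℝ × E) (hp : ‖p.2‖ = 1) (ξ : E)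
      (hξ : ¬(‖p.2‖ = 1 ∧ ξ ∈ tsupport χ ∧ ξ + p.1 • p.2 ∈ tsupport χ)) :
      χ (ξ + p.1 • p.2) * (starRingEnd ℂ) (χ ξ) = 0 := by
    rw [mul_eq_zero, map_eq_zero]
    by_contra! hne
    exact hξ ⟨hp, subset_tsupport χ hne.2, subset_tsupport χ hne.1⟩
  obtain ⟨C, hC⟩ := nonstationary_phase ν (S := {p : ℝ × E | ‖p.2‖ = 1})
    (contDiff_diffQuotient hφ) ha (isCompact_setOf_segment_endpoints_mem hχc) haK
    (fun w hw ↦ exists_fderivSnd_diffQuotient_ne_zero hφ hinj hhess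
      (norm_pos_iff.1 (hw.1 ▸ one_pos)) hw.2.1 hw.2.2) N
  refine ⟨C, fun s h ↦ ?_⟩
  obtain ⟨o, ho, hho⟩ : ∃ o : E, ‖o‖ = 1 ∧ ‖h‖ • o = h := by
    rcases eq_or_ne h 0 with rfl | hh
    · obtain ⟨o, ho⟩ := exists_norm_eq E zero_le_one
      exact ⟨o, ho, by simp⟩
    · exact ⟨‖h‖⁻¹ • h, norm_smul_inv_norm hh, smul_inv_smul₀ (norm_ne_zero_iff.2 hh) h⟩
  rw [Real.rpow_neg (by positivity), Real.rpow_natCast, ← div_eq_mul_inv,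
    le_div_iff₀' (by positivity)]
  simpa only [mul_assoc s, mul_diffQuotient hφ, hho, abs_mul, abs_norm, norm_smul,
    Real.norm_eq_abs] using hC (‖h‖, o) ho (s * ‖h‖)

/- In place of stationary phase, `|I|²` is written as an integral over `h` of oscillatory integrals
with phase `s (φ(ξ + h) - φ(ξ))`, which has no critical point and decays like `(1 + |s h|)⁻ᴺ`. -/
theorem dispersive_estimate (hφ : ContDiff ℝ ∞ φ) (hχ : ContDiff ℝ ∞ χ)
    (hχc : HasCompactSupport χ) (hinj : Set.InjOn (fderiv ℝ φ) (tsupport χ))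
    (hhess : ∀ ξ ∈ tsupport χ, Function.Injective (fderiv ℝ (fderiv ℝ φ) ξ)) :
    ∃ C : ℝ, ∀ s : ℝ, s ≠ 0 → ∀ ℓ : E →L[ℝ] ℝ,
      ‖∫ ξ, Complex.exp (Complex.I * (ℓ ξ + s * φ ξ : ℝ)) * χ ξ ∂ν‖
        ≤ C * |s| ^ (-(Module.finrank ℝ E : ℝ) / 2) := by
  set n := Module.finrank ℝ E
  obtain ⟨C, hC⟩ := exists_norm_integral_exp_sub_mul_conj_le ν hφ hχ hχc hinj hhess (n + 1)
  set A := ∫ h : E, (1 + ‖h‖) ^ (-((n + 1 : ℕ) : ℝ)) ∂ν with hA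
  have hdecay : Integrable (fun h : E ↦ (1 + ‖h‖) ^ (-((n + 1 : ℕ) : ℝ))) ν :=
    integrable_one_add_norm (by simp [n])
  refine ⟨√(C * A), fun s hs ℓ ↦ ?_⟩
  set f : E → ℂ := fun ξ ↦ Complex.exp (Complex.I * (ℓ ξ + s * φ ξ : ℝ)) * χ ξ
  have hf : Integrable f ν := by
    have := hφ.continuous
    have := hχ.continuous
    exact Continuous.integrable_of_hasCompactSupport (by fun_prop) hχc.mul_left
  have hsq : ‖∫ ξ, f ξ ∂ν‖ ^ 2 ≤ C * A * |s| ^ (-(n : ℝ)) := calc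
    ‖∫ ξ, f ξ ∂ν‖ ^ 2 = ‖∫ h, ∫ ξ, f (ξ + h) * (starRingEnd ℂ) (f ξ) ∂ν ∂ν‖ := by
      simp [← norm_integral_sq_eq_integral_integral_mul_conj hf]
    _ ≤ ∫ h, C * (1 + ‖s • h‖) ^ (-((n + 1 : ℕ) : ℝ)) ∂ν := by
      refine norm_integral_le_of_norm_le
        (((integrable_comp_smul_iff ν _ hs).2 hdecay).const_mul C) (.of_forall fun h ↦ ?_)
      simpa only [f, exp_mul_mul_conj_exp_mul, integral_const_mul, norm_mul,
        Complex.norm_exp_I_mul_ofReal, one_mul] using hC s h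
    _ = C * A * |s| ^ (-(n : ℝ)) := by
      rw [integral_const_mul,
        Measure.integral_comp_smul ν (fun h ↦ (1 + ‖h‖) ^ (-((n + 1 : ℕ) : ℝ))), ← hA,
        Real.rpow_neg (abs_nonneg s), Real.rpow_natCast, abs_inv, abs_pow, smul_eq_mul]
      ring
  rw [← Real.sqrt_sq (norm_nonneg (∫ ξ, f ξ ∂ν)), neg_div, ← neg_div, div_eq_mul_one_div,
    Real.rpow_mul (abs_nonneg s), ← Real.sqrt_eq_rpow, ← Real.sqrt_mul' _ (by positivity)]
  exact Real.sqrt_le_sqrt hsq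

end DispersiveEstimate

section SqrtNorm

lemma injective_of_hasFDerivAt_of_eventually_leftInverse {E G : Type*} [NormedAddCommGroup E]
    [NormedSpace ℝ E] [NormedAddCommGroup G] [NormedSpace ℝ G] {f : E → G} {f' : E →L[ℝ] G}
    {g : G → E} {x : E} (hf : HasFDerivAt f f' x) (hg : DifferentiableAt ℝ g (f x))
    (hgf : ∀ᶠ y in nhds x, g (f y) = y) : Function.Injective f' := by
  have hid := (hg.hasFDerivAt.comp x hf).unique ((hasFDerivAt_id x).congr_of_eventuallyEq hgf)
  exact Function.LeftInverse.injective fun v ↦ DFunLike.congr_fun hid v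

variable {E : Type*} [NormedAddCommGroup E] [InnerProductSpace ℝ E]

lemma exists_contDiff_eq_sqrt_norm {α : ℝ} (hα : 0 < α) :
    ∃ φ : E → ℝ, ContDiff ℝ ∞ φ ∧ ∀ ξ, α ≤ ‖ξ‖ → φ ξ = √‖ξ‖ := by
  obtain ⟨η, hη, hη_pos, hη_eq⟩ := exists_contDiff_pos_eq_self (pow_pos hα 2)
  refine ⟨fun ξ ↦ √√(η (‖ξ‖ ^ 2)), ?_, fun ξ hξ ↦ ?_⟩
  · exact ((hη.comp (contDiff_norm_sq ℝ)).sqrt fun ξ ↦ (hη_pos _).ne').sqrt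
      fun ξ ↦ (Real.sqrt_pos.2 (hη_pos _)).ne'
  · simp only [hη_eq _ (pow_le_pow_left₀ hα.le hξ 2), Real.sqrt_sq (norm_nonneg ξ)]

lemma hasFDerivAt_sqrt_norm {ξ : E} (hξ : ξ ≠ 0) :
    HasFDerivAt (fun ξ : E ↦ √‖ξ‖) ((2 * √‖ξ‖ ^ 3)⁻¹ • innerSL ℝ ξ) ξ := by
  have hnorm : 0 < ‖ξ‖ := norm_pos_iff.2 hξ
  have h := (((hasStrictFDerivAt_norm_sq ξ).hasFDerivAt.sqrt (by positivity)).sqrt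
    (by positivity))
  simp only [Real.sqrt_sq (norm_nonneg _)] at h
  convert h using 1
  rw [smul_smul, ← Nat.cast_smul_eq_nsmul ℝ, smul_smul]
  congr 1
  have hsqrt := Real.sq_sqrt hnorm.le
  field_simp
  rw [hsqrt, Nat.cast_ofNat, mul_comm]

/-- The inverse of `ξ ↦ ξ / (2 ‖ξ‖^(3/2))`, the gradient of `√‖ξ‖`. -/
def sqrtNormGradInv (p : E) : E := (4 * ‖p‖ ^ 3)⁻¹ • p

lemma differentiableAt_sqrtNormGradInv {p : E} (hp : p ≠ 0) :
    DifferentiableAt ℝ (sqrtNormGradInv (E := E)) p := by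
  have hnorm : DifferentiableAt ℝ (fun p : E ↦ ‖p‖) p := (contDiffAt_norm ℝ hp).differentiableAt
    one_ne_zero
  exact (((hnorm.pow 3).const_mul 4).inv (by simpa using hp)).smul differentiableAt_id

lemma sqrtNormGradInv_gradient {ξ : E} (hξ : ξ ≠ 0) :
    sqrtNormGradInv ((2 * √‖ξ‖ ^ 3)⁻¹ • ξ) = ξ := by
  have hnorm : 0 < √‖ξ‖ := Real.sqrt_pos.2 (norm_pos_iff.2 hξ)
  have hsqrt : ‖ξ‖ = √‖ξ‖ ^ 2 := (Real.sq_sqrt (norm_nonneg ξ)).symm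
  rw [sqrtNormGradInv, norm_smul, Real.norm_of_nonneg (by positivity), smul_smul]
  conv_rhs => rw [← one_smul ℝ ξ]
  congr 1
  rw [hsqrt, Real.sqrt_sq hnorm.le]
  field_simp
  norm_num

variable [FiniteDimensional ℝ E]

lemma sqrtNormGradInv_fderiv {φ : E → ℝ} {ξ : E} (hξ : ξ ≠ 0)
    (hφ : φ =ᶠ[nhds ξ] fun ξ ↦ √‖ξ‖) :
    sqrtNormGradInv ((InnerProductSpace.toDual ℝ E).symm (fderiv ℝ φ ξ)) = ξ := by
  have hgrad : (InnerProductSpace.toDual ℝ E).symm (innerSL ℝ ξ) = ξ :=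
    (InnerProductSpace.toDual ℝ E).symm_apply_apply ξ
  rw [hφ.fderiv_eq, (hasFDerivAt_sqrt_norm hξ).fderiv, LinearIsometryEquiv.map_smulₛₗ, hgrad]
  exact sqrtNormGradInv_gradient hξ

variable [Nontrivial E] [MeasurableSpace E] [BorelSpace E] {χ : E → ℂ}

lemma dispersive_estimate_sqrt_norm (hχ : ContDiff ℝ ∞ χ) (hχc : HasCompactSupport χ)
    (h0 : (0 : E) ∉ tsupport χ) :
    ∃ C : ℝ, ∀ s : ℝ, s ≠ 0 → ∀ x : E,
      ‖∫ ξ, Complex.exp (Complex.I * (⟪x, ξ⟫ + s * √‖ξ‖ : ℝ)) * χ ξ‖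
        ≤ C * |s| ^ (-(Module.finrank ℝ E : ℝ) / 2) := by
  obtain ⟨α, hα, hball⟩ := Metric.isOpen_iff.1 (isClosed_tsupport χ).isOpen_compl 0 h0
  have hlarge {ξ : E} (hξ : ξ ∈ tsupport χ) : α ≤ ‖ξ‖ := not_lt.1 fun hlt ↦
    hball (by simpa using hlt) hξ
  obtain ⟨φ, hφ, hφ_eq⟩ := exists_contDiff_eq_sqrt_norm (E := E) (half_pos hα)
  have hlocal {ξ : E} (hξ : ξ ∈ tsupport χ) : ∀ᶠ ζ in nhds ξ, α / 2 < ‖ζ‖ :=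
    continuous_norm.continuousAt.eventually_const_lt ((half_lt_self hα).trans_le (hlarge hξ))
  have hinv {ζ : E} (hζ : α / 2 < ‖ζ‖) :
      sqrtNormGradInv ((InnerProductSpace.toDual ℝ E).symm (fderiv ℝ φ ζ)) = ζ := by
    refine sqrtNormGradInv_fderiv (norm_pos_iff.1 ((half_pos hα).trans hζ)) ?_
    filter_upwards [continuous_norm.continuousAt.eventually_const_lt hζ] with ξ hξ
    exact hφ_eq ξ hξ.le
  have hinj : Set.InjOn (fderiv ℝ φ) (tsupport χ) := fun ξ hξ ζ hζ heq ↦ by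
    rw [← hinv (hlocal hξ).self_of_nhds, heq, hinv (hlocal hζ).self_of_nhds]
  have hhess (ξ : E) (hξ : ξ ∈ tsupport χ) :
      Function.Injective (fderiv ℝ (fderiv ℝ φ) ξ) := by
    refine injective_of_hasFDerivAt_of_eventually_leftInverse
      (g := fun ℓ ↦ sqrtNormGradInv ((InnerProductSpace.toDual ℝ E).symm ℓ))
      ((hφ.fderiv_right (m := ∞) (by simp)).differentiable (by simp) ξ).hasFDerivAt ?_
      ((hlocal hξ).mono fun ζ hζ ↦ hinv hζ)
    refine (differentiableAt_sqrtNormGradInv fun h ↦ ?_).comp _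
      (InnerProductSpace.toDual ℝ E).symm.toContinuousLinearEquiv.differentiableAt
    have hξ0 := hinv (hlocal hξ).self_of_nhds
    rw [h, sqrtNormGradInv, smul_zero] at hξ0
    exact h0 (hξ0 ▸ hξ)
  obtain ⟨C, hC⟩ := dispersive_estimate volume hφ hχ hχc hinj hhess
  refine ⟨C, fun s hs x ↦ le_of_eq_of_le (congrArg norm (integral_congr_ae
    (.of_forall fun ξ ↦ ?_))) (hC s hs (innerSL ℝ x))⟩
  by_cases hξ : ξ ∈ tsupport χ
  · simp [hφ_eq ξ (hlocal hξ).self_of_nhds.le]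
  · simp [image_eq_zero_of_notMem_tsupport hξ]

theorem dispersive_estimate_sqrt_norm_rescaled (hχ : ContDiff ℝ ∞ χ)
    (hχc : HasCompactSupport χ) (h0 : (0 : E) ∉ tsupport χ) :
    ∃ C : ℝ, ∀ L : ℝ, 0 < L → ∀ s : ℝ, s ≠ 0 → ∀ x : E,
      ‖∫ ξ, Complex.exp (Complex.I * (⟪x, ξ⟫ + s * √‖ξ‖ : ℝ)) * χ (L⁻¹ • ξ)‖
        ≤ C * L ^ (3 * (Module.finrank ℝ E : ℝ) / 4) *
          |s| ^ (-(Module.finrank ℝ E : ℝ) / 2) := by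
  obtain ⟨C, hC⟩ := dispersive_estimate_sqrt_norm hχ hχc h0
  refine ⟨C, fun L hL s hs x ↦ ?_⟩
  set n := Module.finrank ℝ E
  have hphase (ξ : E) : ⟪L • x, L⁻¹ • ξ⟫ + s * √L * √‖L⁻¹ • ξ‖ = ⟪x, ξ⟫ + s * √‖ξ‖ := by
    rw [real_inner_smul_left, real_inner_smul_right, mul_inv_cancel_left₀ hL.ne', mul_assoc,
      ← Real.sqrt_mul hL.le, norm_smul, Real.norm_of_nonneg (by positivity),
      mul_inv_cancel_left₀ hL.ne']
  have hscale := Measure.integral_comp_smul volume (fun ξ : E ↦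
    Complex.exp (Complex.I * (⟪L • x, ξ⟫ + s * √L * √‖ξ‖ : ℝ)) * χ ξ) L⁻¹
  simp only [hphase] at hscale
  have hpow : |s * √L| ^ (-(n : ℝ) / 2) = |s| ^ (-(n : ℝ) / 2) * L ^ (-(n : ℝ) / 4) := by
    rw [abs_mul, Real.mul_rpow (abs_nonneg s) (abs_nonneg _), abs_of_nonneg (Real.sqrt_nonneg L),
      Real.sqrt_eq_rpow, ← Real.rpow_mul hL.le]
    ring_nf
  have hL_pow : L ^ n * L ^ (-(n : ℝ) / 4) = L ^ (3 * (n : ℝ) / 4) := by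
    rw [← Real.rpow_natCast, ← Real.rpow_add hL]
    ring_nf
  calc _ = L ^ n * ‖∫ ξ, Complex.exp (Complex.I * (⟪L • x, ξ⟫ + s * √L * √‖ξ‖ : ℝ)) * χ ξ‖ := by
        rw [hscale, norm_smul, inv_pow, inv_inv, abs_of_nonneg (by positivity),
          Real.norm_of_nonneg (by positivity)]
    _ ≤ L ^ n * (C * |s * √L| ^ (-(n : ℝ) / 2)) := by
        gcongr
        exact hC _ (mul_ne_zero hs (Real.sqrt_pos.2 hL).ne') _
    _ = C * L ^ (3 * (n : ℝ) / 4) * |s| ^ (-(n : ℝ) / 2) := by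
        rw [hpow, ← hL_pow]
        ring

end SqrtNorm

section Plancherel

open scoped FourierTransform SchwartzMap

variable {E : Type*} [NormedAddCommGroup E] [InnerProductSpace ℝ E] [FiniteDimensional ℝ E]
  [MeasurableSpace E] [BorelSpace E] {F : E → ℂ}

lemma continuous_fourier_of_integrable (hF : Integrable F) : Continuous (𝓕 F) :=
  VectorFourier.fourierIntegral_continuous Real.continuous_fourierChar continuous_inner hF

lemma fourier_ae_eq_fourier_toLp (hF₁ : Integrable F) (hF₂ : MemLp F 2) :
    𝓕 F =ᵐ[volume] (𝓕 (hF₂.toLp F) : Lp ℂ 2 (volume : Measure E)) := by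
  refine ae_eq_of_integral_contDiff_smul_eq
    (continuous_fourier_of_integrable hF₁).locallyIntegrable
    ((Lp.memLp (𝓕 (hF₂.toLp F))).locallyIntegrable (by norm_num)) fun g hg hgc ↦ ?_
  let g' : 𝓢(E, ℂ) := (hgc.comp_left Complex.ofReal_zero).toSchwartzMap
    (Complex.ofRealCLM.contDiff.comp hg)
  have hg' (x : E) : g' x = g x := rfl
  calc ∫ x, g x • 𝓕 F x = ∫ x, g' x • 𝓕 F x := by
        simp only [hg', Complex.real_smul, smul_eq_mul]
    _ = ∫ x, 𝓕 (g' : E → ℂ) x • F x := by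
        simpa using! (VectorFourier.integral_fourierIntegral_smul_eq_flip (L := innerₗ E)
          Real.continuous_fourierChar continuous_inner g'.integrable hF₁).symm
    _ = ∫ x, (𝓕 g') x • hF₂.toLp F x := by
        refine integral_congr_ae ?_
        filter_upwards [hF₂.coeFn_toLp] with x hx
        rw [hx, SchwartzMap.fourier_coe]
    _ = ∫ x, g' x • (𝓕 (hF₂.toLp F) : Lp ℂ 2 (volume : Measure E)) x := by
        rw [← Lp.toTemperedDistribution_apply, ← Lp.toTemperedDistribution_apply,
          ← Lp.fourier_toTemperedDistribution_eq, TemperedDistribution.fourier_apply]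
    _ = ∫ x, g x • (𝓕 (hF₂.toLp F) : Lp ℂ 2 (volume : Measure E)) x := by
        simp only [hg', Complex.real_smul, smul_eq_mul]

lemma eLpNorm_fourier_two (hF₁ : Integrable F) (hF₂ : MemLp F 2) :
    eLpNorm (𝓕 F) 2 volume = eLpNorm F 2 volume := by
  rw [eLpNorm_congr_ae (fourier_ae_eq_fourier_toLp hF₁ hF₂), ← Lp.enorm_def, ← ofReal_norm,
    Lp.norm_fourier_eq, ofReal_norm, Lp.enorm_toLp]

end Plancherel

section Synthesis

open scoped FourierTransform

variable {E : Type*} [NormedAddCommGroup E] [InnerProductSpace ℝ E] [FiniteDimensional ℝ E]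
  [MeasurableSpace E] [BorelSpace E] {F : E → ℂ}

/-- The unnormalised inverse Fourier transform `x ↦ ∫ exp(i x·ξ) F(ξ) dξ`. -/
def synthesis (F : E → ℂ) (x : E) : ℂ := ∫ ξ, Complex.exp (Complex.I * (⟪x, ξ⟫ : ℝ)) * F ξ

lemma synthesis_eq_fourier (F : E → ℂ) (x : E) :
    synthesis F x = 𝓕 F ((-(2 * π)⁻¹) • x) := by
  rw [synthesis, Real.fourier_eq']
  refine integral_congr_ae (.of_forall fun ξ ↦ ?_)
  simp only [smul_eq_mul, inner_smul_right, real_inner_comm]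
  congr 2
  push_cast
  field_simp

lemma continuous_synthesis (hF : Integrable F) : Continuous (synthesis F) := by
  simp only [funext (synthesis_eq_fourier F)]
  exact (continuous_fourier_of_integrable hF).comp (continuous_const_smul _)

lemma norm_synthesis_le (F : E → ℂ) (x : E) : ‖synthesis F x‖ ≤ ∫ ξ, ‖F ξ‖ := by
  refine (norm_integral_le_integral_norm _).trans_eq ?_
  simp only [norm_mul, Complex.norm_exp_I_mul_ofReal, one_mul]

lemma lintegral_comp_const_smul (f : E → ℝ≥0∞) {R : ℝ} (hR : R ≠ 0) :
    ∫⁻ x, f (R • x) = ENNReal.ofReal |(R ^ Module.finrank ℝ E)⁻¹| * ∫⁻ x, f x := by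
  rw [← smul_eq_mul, ← lintegral_smul_measure, ← Measure.map_addHaar_smul volume hR]
  exact ((Homeomorph.smulOfNeZero R hR).measurableEmbedding.lintegral_map f).symm

lemma lintegral_enorm_synthesis_sq (hF₁ : Integrable F) (hF₂ : MemLp F 2) :
    ∫⁻ x, ‖synthesis F x‖ₑ ^ (2 : ℝ)
      = ENNReal.ofReal ((2 * π) ^ Module.finrank ℝ E) * ∫⁻ ξ, ‖F ξ‖ₑ ^ (2 : ℝ) := by
  have plancherel := congrArg (· ^ (2 : ℝ)) (eLpNorm_fourier_two hF₁ hF₂)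
  simp only [eLpNorm_eq_lintegral_rpow_enorm_toReal two_ne_zero ENNReal.ofNat_ne_top,
    ENNReal.toReal_ofNat, ← ENNReal.rpow_mul, one_div_mul_cancel (two_ne_zero' ℝ),
    ENNReal.rpow_one] at plancherel
  simp only [synthesis_eq_fourier]
  rw [lintegral_comp_const_smul (fun x ↦ ‖𝓕 F x‖ₑ ^ (2 : ℝ)) (neg_ne_zero.2 (by positivity)),
    plancherel, ← inv_neg, inv_pow, inv_inv, abs_pow, abs_neg, abs_of_pos (by positivity)]

section OscillatoryFubini

variable {X Y Ξ : Type*} [MeasurableSpace X] [MeasurableSpace Y] [MeasurableSpace Ξ]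
  {μ : Measure X} {ν : Measure Y} {ρ : Measure Ξ} [SFinite μ] [SFinite ν] [SFinite ρ]

lemma integral_mul_integral_kernel_comm {e : X → Ξ → ℂ} (he : Measurable (Function.uncurry e))
    (he₁ : ∀ x ξ, ‖e x ξ‖ ≤ 1) {m : Ξ → ℂ} (hm : Integrable m ρ) {F : X → ℂ}
    (hF : Integrable F μ) :
    ∫ ξ, m ξ * ∫ x, e x ξ * F x ∂μ ∂ρ = ∫ x, (∫ ξ, e x ξ * m ξ ∂ρ) * F x ∂μ := by
  have hint : Integrable (fun z : X × Ξ ↦ Function.uncurry e z * (F z.1 * m z.2)) (μ.prod ρ) :=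
    (hF.mul_prod hm).bdd_mul he.aestronglyMeasurable (.of_forall fun z ↦ he₁ z.1 z.2)
  calc ∫ ξ, m ξ * ∫ x, e x ξ * F x ∂μ ∂ρ = ∫ ξ, ∫ x, e x ξ * (F x * m ξ) ∂μ ∂ρ := by
        simp only [← integral_const_mul]
        simp only [mul_comm, mul_left_comm]
    _ = ∫ x, ∫ ξ, e x ξ * (F x * m ξ) ∂ρ ∂μ := (integral_integral_swap hint).symm
    _ = ∫ x, (∫ ξ, e x ξ * m ξ ∂ρ) * F x ∂μ := by
        simp only [← integral_mul_const]
        simp only [mul_comm, mul_left_comm]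

lemma integral_mul_integral_kernel_mul_integral_kernel {e : X → Ξ → ℂ} {e' : Y → Ξ → ℂ}
    (he : Measurable (Function.uncurry e)) (he' : Measurable (Function.uncurry e'))
    (he₁ : ∀ x ξ, ‖e x ξ‖ ≤ 1) (he'₁ : ∀ y ξ, ‖e' y ξ‖ ≤ 1) {m : Ξ → ℂ} (hm : Integrable m ρ)
    {F : X → ℂ} {G : Y → ℂ} (hF : Integrable F μ) (hG : Integrable G ν) :
    ∫ ξ, m ξ * ((∫ x, e x ξ * F x ∂μ) * ∫ y, e' y ξ * G y ∂ν) ∂ρ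
      = ∫ z, (∫ ξ, e z.1 ξ * e' z.2 ξ * m ξ ∂ρ) * (F z.1 * G z.2) ∂(μ.prod ν) := by
  rw [← integral_mul_integral_kernel_comm (e := fun z ξ ↦ e z.1 ξ * e' z.2 ξ) _ _ hm
    (hF.mul_prod hG)]
  · simp only [← integral_prod_mul, mul_mul_mul_comm]
  · exact (he.comp (by fun_prop : Measurable fun z : (X × Y) × Ξ ↦ (z.1.1, z.2))).mul
      (he'.comp (by fun_prop : Measurable fun z : (X × Y) × Ξ ↦ (z.1.2, z.2)))
  · intro z ξ
    rw [norm_mul]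
    exact mul_le_one₀ (he₁ _ _) (norm_nonneg _) (he'₁ _ _)

end OscillatoryFubini

lemma integral_synthesis_sub_mul {m F G : E → ℂ} (hm : Integrable m) (hF : Integrable F)
    (hG : Integrable G) :
    ∫ z : E × E, synthesis m (z.1 - z.2) * (F z.1 * G z.2)
      = ∫ ξ, m ξ * (synthesis F ξ * synthesis G (-ξ)) := by
  have h := integral_mul_integral_kernel_mul_integral_kernel
    (e := fun x ξ : E ↦ Complex.exp (Complex.I * (⟪ξ, x⟫ : ℝ)))
    (e' := fun y ξ : E ↦ Complex.exp (Complex.I * (⟪-ξ, y⟫ : ℝ)))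
    (by dsimp [Function.uncurry_def]; fun_prop) (by dsimp [Function.uncurry_def]; fun_prop)
    (fun x ξ ↦ (Complex.norm_exp_I_mul_ofReal _).le)
    (fun y ξ ↦ (Complex.norm_exp_I_mul_ofReal _).le) hm hF hG
  refine Eq.trans ?_ h.symm
  refine integral_congr_ae (.of_forall fun z ↦ ?_)
  simp only [synthesis, ← Complex.exp_add, ← mul_add, ← Complex.ofReal_add, inner_neg_left,
    ← sub_eq_add_neg, ← inner_sub_right, real_inner_comm]

lemma formBound_synthesis_sub_half {m : E → ℂ} (hm : Integrable m) (hm₁ : ∀ ξ, ‖m ξ‖ ≤ 1)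
    {S T : Set E} (hS : volume S ≠ ⊤) (hT : volume T ≠ ⊤) :
    FormBound volume volume (fun z : E × E ↦ synthesis m (z.1 - z.2)) S T (1 / 2) (1 / 2)
      (ENNReal.ofReal ((2 * π) ^ Module.finrank ℝ E)) := by
  intro F G hF hG
  have hF₁ := hF.integrable hS
  have hG₁ := hG.integrable hT
  simp only [one_div, inv_inv]
  calc ‖∫ z : E × E, synthesis m (z.1 - z.2) * (F z.1 * G z.2)‖ₑ
      = ‖∫ ξ, m ξ * (synthesis F ξ * synthesis G (-ξ))‖ₑ := by
        rw [integral_synthesis_sub_mul hm hF₁ hG₁]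
    _ ≤ ∫⁻ ξ, ‖synthesis F ξ‖ₑ * ‖synthesis G (-ξ)‖ₑ := by
        refine (enorm_integral_le_lintegral_enorm _).trans (lintegral_mono fun ξ ↦ ?_)
        rw [enorm_mul, enorm_mul]
        exact mul_le_of_le_one_left' (by simpa [← ofReal_norm] using hm₁ ξ)
    _ ≤ (∫⁻ ξ, ‖synthesis F ξ‖ₑ ^ (2 : ℝ)) ^ (2 : ℝ)⁻¹
        * (∫⁻ ξ, ‖synthesis G (-ξ)‖ₑ ^ (2 : ℝ)) ^ (2 : ℝ)⁻¹ := by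
        simpa using! ENNReal.lintegral_mul_le_Lp_mul_Lq volume Real.HolderConjugate.two_two
          (continuous_synthesis hF₁).enorm.measurable.aemeasurable
          ((continuous_synthesis hG₁).comp continuous_neg).enorm.measurable.aemeasurable
    _ = ENNReal.ofReal ((2 * π) ^ Module.finrank ℝ E)
        * ((∫⁻ ξ, ‖F ξ‖ₑ ^ (2 : ℝ)) ^ (2 : ℝ)⁻¹ * (∫⁻ ξ, ‖G ξ‖ₑ ^ (2 : ℝ)) ^ (2 : ℝ)⁻¹) := by
        rw [lintegral_neg_eq_self (fun ξ ↦ ‖synthesis G ξ‖ₑ ^ (2 : ℝ)),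
          lintegral_enorm_synthesis_sq hF₁ (hF.memLp hS 2),
          lintegral_enorm_synthesis_sq hG₁ (hG.memLp hT 2),
          ENNReal.mul_rpow_of_nonneg _ _ (by norm_num),
          ENNReal.mul_rpow_of_nonneg _ _ (by norm_num), mul_mul_mul_comm,
          ← ENNReal.rpow_add_of_nonneg _ _ (by norm_num) (by norm_num)]
        norm_num

lemma formBound_one_one {X Y : Type*} [MeasurableSpace X] [MeasurableSpace Y] {μ : Measure X}
    {ν : Measure Y} [SFinite μ] [SFinite ν] {k : X × Y → ℂ} {B : ℝ≥0∞} (hk : ∀ z, ‖k z‖ₑ ≤ B)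
    (S : Set X) (T : Set Y) : FormBound μ ν k S T 1 1 B := by
  intro F G hF hG
  simp only [inv_one, ENNReal.rpow_one]
  calc ‖∫ z, k z * (F z.1 * G z.2) ∂(μ.prod ν)‖ₑ
      ≤ ∫⁻ z, B * (‖F z.1‖ₑ * ‖G z.2‖ₑ) ∂(μ.prod ν) := by
        refine (enorm_integral_le_lintegral_enorm _).trans (lintegral_mono fun z ↦ ?_)
        rw [enorm_mul, enorm_mul]
        gcongr
        exact hk z
    _ = B * ((∫⁻ x, ‖F x‖ₑ ∂μ) * ∫⁻ y, ‖G y‖ₑ ∂ν) := by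
        have hF' := hF.measurable.enorm
        have hG' := hG.measurable.enorm
        have hFG : Measurable fun z : X × Y ↦ ‖F z.1‖ₑ * ‖G z.2‖ₑ :=
          (hF'.comp measurable_fst).mul (hG'.comp measurable_snd)
        rw [lintegral_const_mul _ hFG, lintegral_prod_mul hF'.aemeasurable hG'.aemeasurable]

lemma formBound_synthesis_sub {m : E → ℂ} (hm : Integrable m) (hm₁ : ∀ ξ, ‖m ξ‖ ≤ 1)
    {B : ℝ} (hB : ∀ x, ‖synthesis m x‖ ≤ B) {S T : Set E} (hS : volume S ≠ ⊤)
    (hT : volume T ≠ ⊤) {r : ℝ} (hr : 2 ≤ r) :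
    FormBound volume volume (fun z : E × E ↦ synthesis m (z.1 - z.2)) S T (1 - 1 / r) (1 - 1 / r)
      (ENNReal.ofReal B ^ (1 - 2 / r)
        * ENNReal.ofReal ((2 * π) ^ Module.finrank ℝ E) ^ (2 / r)) := by
  have h := FormBound.interpolate (θ := 2 / r) hS hT
    ((continuous_synthesis hm).comp (by fun_prop)).measurable (fun z ↦ hB (z.1 - z.2)) one_pos
    one_half_pos one_pos one_half_pos ENNReal.ofReal_ne_top ENNReal.ofReal_ne_top
    (formBound_one_one (fun z ↦ by
      rw [← ofReal_norm]
      exact ENNReal.ofReal_le_ofReal (hB _)) S T)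
    (formBound_synthesis_sub_half hm hm₁ hS hT)
    ⟨by positivity, (div_le_one (by linarith)).2 hr⟩
  rwa [show (1 - 2 / r) * 1 + 2 / r * (1 / 2) = 1 - 1 / r by ring] at h

end Synthesis

section MixedNorm

variable {T X : Type*} [MeasurableSpace T] [MeasurableSpace X]

/-- The mixed norm `‖u‖_{L^q(ρ; L^r(μ))}` of a function of two variables, for real exponents. -/
def mixedNorm (ρ : Measure T) (μ : Measure X) (q r : ℝ) (u : T × X → ℂ) : ℝ≥0∞ :=
  (∫⁻ t, ((∫⁻ x, ‖u (t, x)‖ₑ ^ r ∂μ) ^ (1 / r)) ^ q ∂ρ) ^ (1 / q)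

variable {I : Set T} {S : Set X} {F : T × X → ℂ}

lemma IsTestFunctionOn.prodMk_left (hF : IsTestFunctionOn (I ×ˢ S) F) (t : T) :
    IsTestFunctionOn S fun x ↦ F (t, x) where
  measurable := hF.measurable.comp measurable_prodMk_left
  bddLog := hF.bddLog.imp fun _ hM x ↦ hM (t, x)
  eq_zero_of_notMem x hx := hF.eq_zero_of_notMem (t, x) fun h ↦ hx h.2

lemma IsTestFunctionOn.conj {F : X → ℂ} (hF : IsTestFunctionOn S F) :
    IsTestFunctionOn S fun x ↦ starRingEnd ℂ (F x) where
  measurable := by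
    have := hF.measurable
    fun_prop
  bddLog := by simpa only [RCLike.norm_conj] using hF.bddLog
  eq_zero_of_notMem x hx := by rw [hF.eq_zero_of_notMem x hx, map_zero]

lemma measurable_mixedNorm_inner {μ : Measure X} [SFinite μ] (hF : Measurable F) (r : ℝ) :
    Measurable fun t ↦ (∫⁻ x, ‖F (t, x)‖ₑ ^ r ∂μ) ^ (1 / r) :=
  ((hF.enorm.pow_const r).lintegral_prod_right').pow_const _

end MixedNorm

section TTStar

section ProdProdProdComm

variable {T X T' X' : Type*} [MeasurableSpace T] [MeasurableSpace X] [MeasurableSpace T']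
  [MeasurableSpace X']

lemma measurePreserving_prodProdProdComm (ρ : Measure T) (μ : Measure X) (ρ' : Measure T')
    (μ' : Measure X') [SFinite ρ] [SFinite μ] [SFinite ρ'] [SFinite μ'] :
    MeasurePreserving (Equiv.prodProdProdComm T T' X X') ((ρ.prod ρ').prod (μ.prod μ'))
      ((ρ.prod μ).prod (ρ'.prod μ')) :=
  (((measurePreserving_prodAssoc ρ μ (ρ'.prod μ')).symm _).comp
    ((MeasurePreserving.id ρ).prod ((measurePreserving_prodAssoc μ ρ' μ').comp
      ((Measure.measurePreserving_swap.prod (MeasurePreserving.id μ')).comp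
        ((measurePreserving_prodAssoc ρ' μ μ').symm _))))).comp
    (measurePreserving_prodAssoc ρ ρ' (μ.prod μ'))

lemma enorm_integral_prod_prod_le {ρ : Measure T} {μ : Measure X} {ρ' : Measure T'}
    {μ' : Measure X'} [SFinite ρ] [SFinite μ] [SFinite ρ'] [SFinite μ']
    {H : (T × X) × (T' × X') → ℂ} (hH : Integrable H ((ρ.prod μ).prod (ρ'.prod μ'))) :
    ‖∫ z, H z ∂((ρ.prod μ).prod (ρ'.prod μ'))‖ₑ
      ≤ ∫⁻ t, ∫⁻ s, ‖∫ z, H ((t, z.1), (s, z.2)) ∂(μ.prod μ')‖ₑ ∂ρ' ∂ρ := by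
  have hcomm := measurePreserving_prodProdProdComm ρ μ ρ' μ'
  have hemb : MeasurableEmbedding (Equiv.prodProdProdComm T T' X X') :=
    .of_measurable_inverse hcomm.measurable (by simp) (by fun_prop) (Equiv.left_inv _)
  have hH' : Integrable (fun z ↦ H (Equiv.prodProdProdComm T T' X X' z))
      ((ρ.prod ρ').prod (μ.prod μ')) := (hcomm.integrable_comp_emb hemb).2 hH
  rw [← hcomm.integral_comp hemb, integral_prod _ hH']
  refine (enorm_integral_le_lintegral_enorm _).trans_eq ?_
  exact lintegral_prod _ hH'.integral_prod_left.1.enorm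

end ProdProdProdComm

variable {E : Type*} [NormedAddCommGroup E] [InnerProductSpace ℝ E] [FiniteDimensional ℝ E]
  [MeasurableSpace E] [BorelSpace E] {φ : E → ℝ} {G : E → ℂ} {χ : E → ℝ} {F : ℝ × E → ℂ}

/-- The propagator `(t, x) ↦ ∫ exp(i(x·ξ + tφ(ξ))) G(ξ) dξ` of the dispersion relation `φ`. -/
def propagator (φ : E → ℝ) (G : E → ℂ) (z : ℝ × E) : ℂ :=
  ∫ ξ, Complex.exp (Complex.I * (⟪z.2, ξ⟫ + z.1 * φ ξ : ℝ)) * G ξ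

/-- The transpose of `propagator φ` for the bilinear pairings `∫ F u` on spacetime and on frequency
space. -/
def propagatorTranspose (φ : E → ℝ) (F : ℝ × E → ℂ) (ξ : E) : ℂ :=
  ∫ z : ℝ × E, Complex.exp (Complex.I * (⟪z.2, ξ⟫ + z.1 * φ ξ : ℝ)) * F z

lemma propagator_mk (φ : E → ℝ) (G : E → ℂ) (t : ℝ) (x : E) :
    propagator φ G (t, x)
      = synthesis (fun ξ ↦ Complex.exp (Complex.I * (t * φ ξ : ℝ)) * G ξ) x := by
  simp only [propagator, synthesis, Complex.ofReal_add, mul_add, Complex.exp_add, mul_assoc]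

lemma integral_propagator_mul (hφ : Measurable φ) (hG : Integrable G) (hF : Integrable F) :
    ∫ z, propagator φ G z * F z = ∫ ξ, G ξ * propagatorTranspose φ F ξ :=
  (integral_mul_integral_kernel_comm
    (e := fun (z : ℝ × E) ξ ↦ Complex.exp (Complex.I * (⟪z.2, ξ⟫ + z.1 * φ ξ : ℝ)))
    (by dsimp [Function.uncurry_def]; fun_prop)
    (fun _ _ ↦ (Complex.norm_exp_I_mul_ofReal _).le) hG hF).symm

lemma conj_propagatorTranspose (φ : E → ℝ) (F : ℝ × E → ℂ) (ξ : E) :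
    starRingEnd ℂ (propagatorTranspose φ F ξ) = ∫ z : ℝ × E,
      Complex.exp (Complex.I * (-(⟪z.2, ξ⟫ + z.1 * φ ξ) : ℝ)) * starRingEnd ℂ (F z) := by
  rw [propagatorTranspose, ← integral_conj]
  simp only [map_mul, ← Complex.exp_conj, Complex.conj_I, Complex.conj_ofReal, Complex.ofReal_neg,
    neg_mul, mul_neg]

/- The `TT*` identity: `∫ χ |T* F|² = ⟨TT* F, F⟩`, where `TT*` is a convolution operator. -/
lemma integral_mul_propagatorTranspose_mul_conj (hφ : Measurable φ) (hχ : Integrable χ)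
    (hF : Integrable F) :
    ∫ ξ, χ ξ * (propagatorTranspose φ F ξ * starRingEnd ℂ (propagatorTranspose φ F ξ))
      = ∫ z : (ℝ × E) × (ℝ × E),
        propagator φ (fun ξ ↦ χ ξ) (z.1 - z.2) * (F z.1 * starRingEnd ℂ (F z.2)) := by
  simp only [conj_propagatorTranspose]
  refine (integral_mul_integral_kernel_mul_integral_kernel (m := fun ξ ↦ (χ ξ : ℂ))
    (e := fun (z : ℝ × E) ξ ↦ Complex.exp (Complex.I * (⟪z.2, ξ⟫ + z.1 * φ ξ : ℝ)))
    (e' := fun (z : ℝ × E) ξ ↦ Complex.exp (Complex.I * (-(⟪z.2, ξ⟫ + z.1 * φ ξ) : ℝ)))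
    (by dsimp [Function.uncurry_def]; fun_prop) (by dsimp [Function.uncurry_def]; fun_prop)
    (fun _ _ ↦ (Complex.norm_exp_I_mul_ofReal _).le)
    (fun _ _ ↦ (Complex.norm_exp_I_mul_ofReal _).le) hχ.ofReal hF ?_).trans ?_
  · exact (LinearIsometryEquiv.integrable_comp_iff Complex.conjLIE).2 hF
  · refine integral_congr_ae (.of_forall fun z ↦ ?_)
    simp only [propagator, ← Complex.exp_add, ← mul_add, ← Complex.ofReal_add, Prod.fst_sub,
      Prod.snd_sub, inner_sub_left]
    congr 2
    funext ξ
    ring_nf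

lemma measurable_propagator (hφ : Measurable φ) (hG : Measurable G) :
    Measurable (propagator φ G) := by
  refine (StronglyMeasurable.integral_prod_right' (f := fun w : (ℝ × E) × E ↦
    Complex.exp (Complex.I * (⟪w.1.2, w.2⟫ + w.1.1 * φ w.2 : ℝ)) * G w.2) ?_).measurable
  exact Measurable.stronglyMeasurable (by fun_prop)

lemma measurable_propagatorTranspose (hφ : Measurable φ) (hF : Measurable F) :
    Measurable (propagatorTranspose φ F) := by
  refine (StronglyMeasurable.integral_prod_right' (f := fun w : E × (ℝ × E) ↦
    Complex.exp (Complex.I * (⟪w.2.2, w.1⟫ + w.2.1 * φ w.1 : ℝ)) * F w.2) ?_).measurable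
  exact Measurable.stronglyMeasurable (by fun_prop)

lemma norm_propagator_le (φ : E → ℝ) (G : E → ℂ) (z : ℝ × E) :
    ‖propagator φ G z‖ ≤ ∫ ξ, ‖G ξ‖ := by
  refine (norm_integral_le_integral_norm _).trans_eq ?_
  simp only [norm_mul, Complex.norm_exp_I_mul_ofReal, one_mul]

lemma norm_propagatorTranspose_le (φ : E → ℝ) (F : ℝ × E → ℂ) (ξ : E) :
    ‖propagatorTranspose φ F ξ‖ ≤ ∫ z, ‖F z‖ := by
  refine (norm_integral_le_integral_norm _).trans_eq ?_
  simp only [norm_mul, Complex.norm_exp_I_mul_ofReal, one_mul]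

lemma lintegral_mul_enorm_propagatorTranspose_sq (hφ : Measurable φ) (hχ : Integrable χ)
    (hχ₀ : ∀ ξ, 0 ≤ χ ξ) (hFm : Measurable F) (hF : Integrable F) :
    ∫⁻ ξ, ENNReal.ofReal (χ ξ) * ‖propagatorTranspose φ F ξ‖ₑ ^ (2 : ℝ)
      = ‖∫ z : (ℝ × E) × (ℝ × E),
        propagator φ (fun ξ ↦ χ ξ) (z.1 - z.2) * (F z.1 * starRingEnd ℂ (F z.2))‖ₑ := by
  have hint : Integrable fun ξ ↦ χ ξ * ‖propagatorTranspose φ F ξ‖ ^ 2 :=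
    hχ.mul_bdd (c := (∫ z, ‖F z‖) ^ 2)
      ((measurable_propagatorTranspose hφ hFm).norm.pow_const 2).aestronglyMeasurable
      (.of_forall fun ξ ↦ by
        rw [norm_pow, norm_norm]
        gcongr
        exact norm_propagatorTranspose_le φ F ξ)
  have hnonneg (ξ : E) : 0 ≤ χ ξ * ‖propagatorTranspose φ F ξ‖ ^ 2 :=
    mul_nonneg (hχ₀ ξ) (by positivity)
  simp only [← integral_mul_propagatorTranspose_mul_conj hφ hχ hF, Complex.mul_conj,
    Complex.normSq_eq_norm_sq, ← Complex.ofReal_mul, integral_complex_ofReal]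
  rw [← ofReal_norm, Complex.norm_real, Real.norm_of_nonneg (integral_nonneg hnonneg),
    ofReal_integral_eq_lintegral_ofReal hint (.of_forall hnonneg)]
  simp only [ENNReal.ofReal_mul (hχ₀ _), ENNReal.ofReal_pow (norm_nonneg _), ofReal_norm,
    ENNReal.rpow_ofNat]

lemma enorm_integral_propagator_sub_mul_le {r r' A σ : ℝ} (hr : 2 ≤ r)
    (hrr' : r.HolderConjugate r') (hA : 0 ≤ A) (hφ : Measurable φ) (hχ : Integrable χ)
    (hχ₁ : ∀ ξ, |χ ξ| ≤ 1) {t s : ℝ}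
    (hdisp : ∀ x, ‖propagator φ (fun ξ ↦ χ ξ) (t - s, x)‖ ≤ A * |t - s| ^ (-σ)) {I : Set ℝ}
    {S : Set E} (hS : volume S ≠ ⊤) (hF : IsTestFunctionOn (I ×ˢ S) F) :
    ‖∫ z : E × E, propagator φ (fun ξ ↦ χ ξ) (t - s, z.1 - z.2)
        * (F (t, z.1) * starRingEnd ℂ (F (s, z.2)))‖ₑ
      ≤ ENNReal.ofReal A ^ (1 - 2 / r) * ENNReal.ofReal ((2 * π) ^ Module.finrank ℝ E) ^ (2 / r)
        * (ENNReal.ofReal (|t - s| ^ (-(σ * (1 - 2 / r))))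
          * ((∫⁻ x, ‖F (t, x)‖ₑ ^ r') ^ (1 / r') * (∫⁻ x, ‖F (s, x)‖ₑ ^ r') ^ (1 / r'))) := by
  have hr₂ : 0 ≤ 1 - 2 / r := sub_nonneg.2 ((div_le_one (by linarith)).2 hr)
  have hm : Integrable fun ξ ↦ Complex.exp (Complex.I * ((t - s) * φ ξ : ℝ)) * χ ξ :=
    hχ.ofReal.bdd_mul (by fun_prop) (.of_forall fun ξ ↦ (Complex.norm_exp_I_mul_ofReal _).le)
  have h := formBound_synthesis_sub hm (fun ξ ↦ by
      simpa only [norm_mul, Complex.norm_exp_I_mul_ofReal, one_mul, Complex.norm_real,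
        Real.norm_eq_abs] using hχ₁ ξ)
    (fun x ↦ by simpa only [propagator_mk] using hdisp x) hS hS hr _ _ (hF.prodMk_left t)
    (hF.prodMk_left s).conj
  rw [one_div, hrr'.one_sub_inv, inv_inv, ENNReal.ofReal_mul hA,
    ENNReal.mul_rpow_of_nonneg _ _ hr₂, ENNReal.ofReal_rpow_of_nonneg
    (Real.rpow_nonneg (abs_nonneg (t - s)) _) hr₂, ← Real.rpow_mul (abs_nonneg _)] at h
  simp only [propagator_mk]
  refine h.trans_eq ?_
  simp only [RCLike.enorm_conj, one_div, neg_mul]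
  ring

/-- The frequency cutoff `χ` takes values in `[0, 1]` and the propagator of `φ`, localised by `χ`,
decays like `A |t| ^ (-σ)`. -/
structure HasDispersiveDecay (φ χ : E → ℝ) (σ A : ℝ) : Prop where
  measurable_phase : Measurable φ
  measurable_cutoff : Measurable χ
  integrable_cutoff : Integrable χ
  cutoff_mem_Icc : ∀ ξ, χ ξ ∈ Set.Icc (0 : ℝ) 1
  decay : ∀ t ≠ 0, ∀ x, ‖propagator φ (fun ξ ↦ χ ξ) (t, x)‖ ≤ A * |t| ^ (-σ)

lemma HasDispersiveDecay.nonneg {σ A : ℝ} (h : HasDispersiveDecay φ χ σ A) : 0 ≤ A := by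
  simpa using (norm_nonneg _).trans (h.decay 1 one_ne_zero 0)

lemma HasDispersiveDecay.lintegral_mul_enorm_propagatorTranspose_sq_le_convolution
    {r r' σ A : ℝ} (h : HasDispersiveDecay φ χ σ A) (hr : 2 ≤ r) (hrr' : r.HolderConjugate r')
    {I : Set ℝ} {S : Set E} (hI : volume I ≠ ⊤) (hS : volume S ≠ ⊤)
    (hF : IsTestFunctionOn (I ×ˢ S) F) :
    ∫⁻ ξ, ENNReal.ofReal (χ ξ) * ‖propagatorTranspose φ F ξ‖ₑ ^ (2 : ℝ)
      ≤ ENNReal.ofReal A ^ (1 - 2 / r) * ENNReal.ofReal ((2 * π) ^ Module.finrank ℝ E) ^ (2 / r)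
        * ∫⁻ t, ∫⁻ s, ENNReal.ofReal (|t - s| ^ (-(σ * (1 - 2 / r))))
          * ((∫⁻ x, ‖F (t, x)‖ₑ ^ r') ^ (1 / r') * (∫⁻ x, ‖F (s, x)‖ₑ ^ r') ^ (1 / r')) := by
  have hIS : volume (I ×ˢ S) ≠ ⊤ := by
    rw [Measure.volume_eq_prod, Measure.prod_prod]
    exact ENNReal.mul_ne_top hI hS
  have hconst : ENNReal.ofReal A ^ (1 - 2 / r)
      * ENNReal.ofReal ((2 * π) ^ Module.finrank ℝ E) ^ (2 / r) ≠ ⊤ :=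
    ENNReal.mul_ne_top
      (ENNReal.rpow_ne_top_of_nonneg (sub_nonneg.2 ((div_le_one (by linarith)).2 hr)) (by simp))
      (ENNReal.rpow_ne_top_of_nonneg (by positivity) (by simp))
  have hF₁ : Integrable F := hF.integrable hIS
  have hint : Integrable fun z : (ℝ × E) × (ℝ × E) ↦
      propagator φ (fun ξ ↦ χ ξ) (z.1 - z.2) * (F z.1 * starRingEnd ℂ (F z.2)) :=
    (hF₁.mul_prod (hF.conj.integrable hIS)).bdd_mul
      ((measurable_propagator h.measurable_phase h.measurable_cutoff.complex_ofReal).comp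
        (by fun_prop)).aestronglyMeasurable
      (.of_forall fun z ↦ norm_propagator_le φ _ _)
  rw [lintegral_mul_enorm_propagatorTranspose_sq h.measurable_phase h.integrable_cutoff
    (fun ξ ↦ (h.cutoff_mem_Icc ξ).1) hF.measurable hF₁, ← lintegral_const_mul' _ _ hconst]
  refine (enorm_integral_prod_prod_le hint).trans (lintegral_mono fun t ↦ ?_)
  rw [← lintegral_const_mul' _ _ hconst]
  refine lintegral_mono_ae ?_
  filter_upwards [compl_mem_ae_iff.2 (measure_singleton t)] with s hs
  exact enorm_integral_propagator_sub_mul_le hr hrr' h.nonneg h.measurable_phase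
    h.integrable_cutoff (fun ξ ↦ abs_le.2 ⟨by linarith [(h.cutoff_mem_Icc ξ).1],
      (h.cutoff_mem_Icc ξ).2⟩) (h.decay _ (sub_ne_zero.2 (Ne.symm hs))) hS hF

/- `TT*` followed by the Hardy–Littlewood–Sobolev inequality in time. -/
theorem HasDispersiveDecay.lintegral_mul_enorm_propagatorTranspose_sq_le {q q' r r' σ : ℝ}
    (hq : 2 < q) (hr : 2 ≤ r) (hqq' : q.HolderConjugate q') (hrr' : r.HolderConjugate r')
    (hσ : 2 / q = σ * (1 - 2 / r)) : ∃ C : ℝ≥0, ∀ {φ χ : E → ℝ} {A : ℝ} {I : Set ℝ} {S : Set E}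
      {F : ℝ × E → ℂ}, HasDispersiveDecay φ χ σ A → volume I ≠ ⊤ → volume S ≠ ⊤ →
      IsTestFunctionOn (I ×ˢ S) F →
      ∫⁻ ξ, ENNReal.ofReal (χ ξ) * ‖propagatorTranspose φ F ξ‖ₑ ^ (2 : ℝ)
        ≤ C * ENNReal.ofReal A ^ (1 - 2 / r) * mixedNorm volume volume q' r' F ^ (2 : ℝ) := by
  obtain ⟨C, hls⟩ := hardy_littlewood_sobolev_diagonal (a := 2 / q) (by positivity)
    ((div_lt_one (by linarith)).2 hq)
  refine ⟨(Real.toNNReal ((2 * π) ^ Module.finrank ℝ E)) ^ (2 / r) * C, ?_⟩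
  intro φ χ A I S F h hI hS hF
  have hq' : 2 / (2 - 2 / q) = q' := by
    rw [hqq'.conjugate_eq]
    have := sub_ne_zero.2 hqq'.lt.ne'
    field_simp
  have hq'' : 2 - 2 / q = 1 / q' * 2 := by
    linear_combination (-2) * hqq'.inv_add_inv_eq_one
  have hls_F := hls _ (measurable_mixedNorm_inner (μ := volume) hF.measurable r')
  rw [hq', hq'', ENNReal.rpow_mul, hσ] at hls_F
  refine (h.lintegral_mul_enorm_propagatorTranspose_sq_le_convolution hr hrr' hI hS hF).trans ?_
  refine (mul_le_mul_right hls_F _).trans_eq ?_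
  rw [ENNReal.coe_mul, ENNReal.coe_rpow_of_nonneg _ (by positivity), mixedNorm, ENNReal.ofReal,
    ENNReal.ofReal]
  ring

end TTStar

section MixedNormDuality

namespace IsTestFunctionOn

variable {X Y : Type*} [MeasurableSpace X] [MeasurableSpace Y] {S : Set X} {F G : X → ℂ}

lemma of_norm_mem_Icc {ε M : ℝ} (hε : 0 < ε) (hF : Measurable F)
    (hFM : ∀ x, F x ≠ 0 → ‖F x‖ ∈ Set.Icc ε M) (hFS : ∀ x ∉ S, F x = 0) :
    IsTestFunctionOn S F where
  measurable := hF
  bddLog := by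
    refine ⟨max |Real.log ε| |Real.log M|, fun x ↦ ?_⟩
    rcases eq_or_ne (F x) 0 with h | h
    · simp [h]
    · have hx := hFM x h
      exact abs_le_max_abs_abs (Real.log_le_log hε hx.1)
        (Real.log_le_log (norm_pos_iff.2 h) hx.2)
  eq_zero_of_notMem := hFS

lemma indicator (hF : IsTestFunctionOn S F) {A : Set X} (hA : MeasurableSet A) :
    IsTestFunctionOn S (A.indicator F) where
  measurable := hF.measurable.indicator hA
  bddLog := by
    obtain ⟨M, hM⟩ := hF.bddLog
    refine ⟨M, fun x ↦ ?_⟩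
    by_cases hx : x ∈ A
    · simpa [hx] using hM x
    · simpa [hx] using (abs_nonneg _).trans (hM x)
  eq_zero_of_notMem x hx := by
    by_cases hxA : x ∈ A <;> simp [hxA, hF.eq_zero_of_notMem x hx]

lemma mul_comp {T : Set Y} {G : Y → ℂ} (hF : IsTestFunctionOn S F) (hG : IsTestFunctionOn T G)
    {g : X → Y} (hg : Measurable g) : IsTestFunctionOn S fun x ↦ F x * G (g x) where
  measurable := hF.measurable.mul (hG.measurable.comp hg)
  bddLog := by
    obtain ⟨M, hM⟩ := hF.bddLog
    obtain ⟨N, hN⟩ := hG.bddLog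
    refine ⟨M + N, fun x ↦ ?_⟩
    have hM0 : 0 ≤ M := (abs_nonneg _).trans (hM x)
    have hN0 : 0 ≤ N := (abs_nonneg _).trans (hN (g x))
    by_cases h : F x = 0 ∨ G (g x) = 0
    · rw [mul_eq_zero.2 h, norm_zero, Real.log_zero, abs_zero]
      positivity
    · push Not at h
      rw [norm_mul, Real.log_mul (norm_ne_zero_iff.2 h.1) (norm_ne_zero_iff.2 h.2)]
      exact (abs_add_le _ _).trans (add_le_add (hM x) (hN (g x)))
  eq_zero_of_notMem x hx := by rw [hF.eq_zero_of_notMem x hx, zero_mul]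

end IsTestFunctionOn

lemma signedPow_ofReal_left (α : ℝ) (w : ℂ) :
    signedPow α w = (‖w‖⁻¹ * Real.exp (α * Real.log ‖w‖) : ℝ) * w := by
  rw [signedPow]
  push_cast
  ring

lemma rpow_mul_enorm_signedPow_toReal {s : ℝ≥0∞} (hs : s ≠ ⊤) {γ β : ℝ} (hγ : 0 < γ)
    (hγβ : 0 < γ + β) : s ^ γ * ‖signedPow β s.toReal‖ₑ = s ^ (γ + β) := by
  rcases eq_or_ne s 0 with rfl | hs₀
  · simp [hγ, hγβ]
  · have hpos := ENNReal.toReal_pos hs₀ hs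
    rw [ENNReal.rpow_add _ _ hs₀ hs, signedPow_ofReal_left, ← Complex.ofReal_mul, Complex.norm_real,
      Real.norm_of_nonneg hpos.le, mul_right_comm, inv_mul_cancel₀ hpos.ne', one_mul,
      ← ofReal_norm, Complex.norm_real, Real.norm_of_nonneg (Real.exp_pos _).le, mul_comm β,
      ← Real.rpow_def_of_pos hpos, ENNReal.toReal_rpow,
      ENNReal.ofReal_toReal (by simp [ENNReal.rpow_eq_top_iff, hs₀, hs])]

lemma enorm_integral_eq_lintegral_enorm {Y : Type*} [MeasurableSpace Y] {ν : Measure Y}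
    {f : Y → ℂ} (hf : Integrable f ν) (hf_nonneg : ∀ y, f y = ‖f y‖) :
    ‖∫ y, f y ∂ν‖ₑ = ∫⁻ y, ‖f y‖ₑ ∂ν := by
  rw [integral_congr_ae (.of_forall hf_nonneg), integral_complex_ofReal, ← ofReal_norm,
    Complex.norm_real, Real.norm_of_nonneg (by positivity),
    ofReal_integral_norm_eq_lintegral_enorm hf]

section Dual

variable {T X : Type*} [MeasurableSpace X] {μ : Measure X} {q r : ℝ} {v : T × X → ℂ}

/-- The function dual to `v` in the pairing of `L^q(L^r)` with `L^{q'}(L^{r'})`, namely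
`conj(v) |v| ^ (r - 2) ‖v(t, ·)‖_r ^ (q - r)`. -/
def mixedNormDual (μ : Measure X) (q r : ℝ) (v : T × X → ℂ) (z : T × X) : ℂ :=
  starRingEnd ℂ (signedPow (r - 1 : ℝ) (v z))
    * signedPow ((q - r) / r : ℝ) (∫⁻ x, ‖v (z.1, x)‖ₑ ^ r ∂μ).toReal

lemma mul_mixedNormDual_eq_norm (z : T × X) :
    v z * mixedNormDual μ q r v z = ‖v z * mixedNormDual μ q r v z‖ := by
  set N := (∫⁻ x, ‖v (z.1, x)‖ₑ ^ r ∂μ).toReal with hN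
  obtain ⟨c, hc, hcv⟩ : ∃ c : ℝ, 0 ≤ c ∧ v z * mixedNormDual μ q r v z = c := by
    rw [mixedNormDual, signedPow_ofReal_left, signedPow_ofReal_left, map_mul, Complex.conj_ofReal,
      ← hN, ← Complex.ofReal_mul, ← mul_assoc, mul_left_comm, Complex.mul_conj,
      ← Complex.ofReal_mul, ← Complex.ofReal_mul]
    have := Complex.normSq_nonneg (v z)
    have : 0 ≤ N := ENNReal.toReal_nonneg
    exact ⟨_, by positivity, rfl⟩
  rw [hcv, Complex.norm_real, Real.norm_of_nonneg hc]

lemma enorm_mixedNormDual (hr : 1 < r) (z : T × X) :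
    ‖mixedNormDual μ q r v z‖ₑ = ‖v z‖ₑ ^ (r - 1)
      * ‖signedPow ((q - r) / r : ℝ) (∫⁻ x, ‖v (z.1, x)‖ₑ ^ r ∂μ).toReal‖ₑ := by
  rw [mixedNormDual, enorm_mul, RCLike.enorm_conj, enorm_signedPow (by simpa using hr),
    Complex.ofReal_re]

end Dual

variable {T X : Type*} [MeasurableSpace T] [MeasurableSpace X] {ρ : Measure T} {μ : Measure X}
  {q q' r r' : ℝ} {u v : T × X → ℂ} {B : ℝ≥0∞} {I : Set T} {S : Set X}

lemma mixedNorm_mono (hq : 0 ≤ q) (hr : 0 ≤ r) (h : ∀ z, ‖u z‖ₑ ≤ ‖v z‖ₑ) :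
    mixedNorm ρ μ q r u ≤ mixedNorm ρ μ q r v := by
  unfold mixedNorm
  gcongr
  exact h _

lemma tendsto_mixedNorm_indicator [SFinite μ] (hq : 0 ≤ q) (hr : 0 ≤ r) (hu : Measurable u)
    {A : ℕ → Set (T × X)} (hA : ∀ k, MeasurableSet (A k)) (hA_mono : Monotone A)
    (hA_cover : ∀ t, ∀ᵐ x ∂μ, u (t, x) ≠ 0 → ∃ k, (t, x) ∈ A k) :
    Filter.Tendsto (fun k ↦ mixedNorm ρ μ q r ((A k).indicator u)) Filter.atTop
      (nhds (mixedNorm ρ μ q r u)) := by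
  have hmono (z : T × X) : Monotone fun k ↦ ‖(A k).indicator u z‖ₑ := fun k l hkl ↦ by
    simp only [enorm_indicator_eq_indicator_enorm]
    exact Set.indicator_le_indicator_of_subset (hA_mono hkl) (fun _ ↦ zero_le) z
  have hmeas (k : ℕ) := hu.indicator (hA k)
  refine (ENNReal.continuous_rpow_const.tendsto _).comp
    (lintegral_tendsto_of_tendsto_of_monotone
      (fun k ↦ ((measurable_mixedNorm_inner (hmeas k) r).pow_const q).aemeasurable)
      (.of_forall fun t k l hkl ↦ ?_) (.of_forall fun t ↦ ?_))
  · dsimp only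
    gcongr
    exact hmono _ hkl
  refine (ENNReal.continuous_rpow_const.tendsto _).comp
    ((ENNReal.continuous_rpow_const.tendsto _).comp
    (lintegral_tendsto_of_tendsto_of_monotone
      (fun k ↦ (((hmeas k).comp measurable_prodMk_left).enorm.pow_const r).aemeasurable)
      (.of_forall fun x k l hkl ↦ ?_) ?_))
  · dsimp only
    gcongr
    exact hmono _ hkl
  filter_upwards [hA_cover t] with x hx
  refine (ENNReal.continuous_rpow_const.tendsto _).comp (tendsto_nhds_of_eventually_eq ?_)
  by_cases hux : u (t, x) = 0
  · exact .of_forall fun k ↦ by simp [hux]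
  · obtain ⟨k₀, hk₀⟩ := hx hux
    filter_upwards [Filter.eventually_ge_atTop k₀] with k hk
    rw [Set.indicator_of_mem (hA_mono hk hk₀)]

variable (ρ μ) in
/-- The pairing `F ↦ ∫ u F` is bounded by `B` in the norm of `L^{q'}(ρ; L^{r'}(μ))` on test
functions with support of finite measure. -/
def PairingBound (q' r' : ℝ) (u : T × X → ℂ) (B : ℝ≥0∞) : Prop :=
  ∀ (I : Set T) (S : Set X) (F : T × X → ℂ), ρ I ≠ ⊤ → μ S ≠ ⊤ → IsTestFunctionOn (I ×ˢ S) F →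
    ‖∫ z, u z * F z ∂(ρ.prod μ)‖ₑ ≤ B * mixedNorm ρ μ q' r' F

lemma PairingBound.indicator (hq' : 0 ≤ q') (hr' : 0 ≤ r') (h : PairingBound ρ μ q' r' u B)
    {A : Set (T × X)} (hA : MeasurableSet A) : PairingBound ρ μ q' r' (A.indicator u) B := by
  intro I S F hI hS hF
  have hmove (z : T × X) : A.indicator u z * F z = u z * A.indicator F z := by
    by_cases hz : z ∈ A <;> simp [hz]
  simp only [hmove]
  refine (h I S _ hI hS (hF.indicator hA)).trans (mul_le_mul_right ?_ B)
  refine mixedNorm_mono hq' hr' fun z ↦ ?_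
  rw [enorm_indicator_eq_indicator_enorm]
  exact Set.indicator_le_self _ _ z

lemma isTestFunctionOn_mixedNormDual (hv : IsTestFunctionOn (I ×ˢ S) v)
    (hN : IsTestFunctionOn I fun t ↦ ((∫⁻ x, ‖v (t, x)‖ₑ ^ r ∂μ).toReal : ℂ)) :
    IsTestFunctionOn (I ×ˢ S) (mixedNormDual μ q r v) :=
  (hv.signedPow_comp _).conj.mul_comp (hN.signedPow_comp _) measurable_fst

lemma enorm_integral_mul_mixedNormDual [SFinite μ] [SFinite ρ] (hq : 0 < q) (hr : 1 < r)
    (hI : ρ I ≠ ⊤) (hS : μ S ≠ ⊤) (hv : IsTestFunctionOn (I ×ˢ S) v)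
    (hN : IsTestFunctionOn I fun t ↦ ((∫⁻ x, ‖v (t, x)‖ₑ ^ r ∂μ).toReal : ℂ)) :
    ‖∫ z, v z * mixedNormDual μ q r v z ∂(ρ.prod μ)‖ₑ
      = ∫⁻ t, (∫⁻ x, ‖v (t, x)‖ₑ ^ r ∂μ) ^ (q / r) ∂ρ := by
  have hr₀ : 0 < r := by linarith
  have htest : IsTestFunctionOn (I ×ˢ S) fun z ↦ v z * mixedNormDual μ q r v z :=
    hv.mul_comp (isTestFunctionOn_mixedNormDual hv hN) measurable_id
  have hIS : ρ.prod μ (I ×ˢ S) ≠ ⊤ := by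
    rw [Measure.prod_prod]
    exact ENNReal.mul_ne_top hI hS
  rw [enorm_integral_eq_lintegral_enorm (htest.integrable hIS) mul_mixedNormDual_eq_norm,
    lintegral_prod _ htest.measurable.enorm.aemeasurable]
  refine lintegral_congr fun t ↦ ?_
  have hvt := hv.prodMk_left t
  have hexp : q / r = 1 + (q - r) / r := by
    field_simp
    ring
  rw [hexp, ← rpow_mul_enorm_signedPow_toReal (hvt.lintegral_enorm_rpow_ne_top hS hr₀) one_pos
    (hexp ▸ div_pos hq hr₀), ENNReal.rpow_one,
    ← lintegral_mul_const _ (hvt.measurable.enorm.pow_const r)]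
  refine lintegral_congr fun x ↦ ?_
  rw [enorm_mul, enorm_mixedNormDual hr, ← mul_assoc]
  nth_rw 1 [← ENNReal.rpow_one ‖v (t, x)‖ₑ]
  rw [← ENNReal.rpow_add_of_nonneg _ _ zero_le_one (by linarith), add_sub_cancel]

lemma mixedNorm_mixedNormDual (hqq' : q.HolderConjugate q') (hrr' : r.HolderConjugate r')
    (hS : μ S ≠ ⊤) (hv : IsTestFunctionOn (I ×ˢ S) v) :
    mixedNorm ρ μ q' r' (mixedNormDual μ q r v)
      = (∫⁻ t, (∫⁻ x, ‖v (t, x)‖ₑ ^ r ∂μ) ^ (q / r) ∂ρ) ^ (1 / q') := by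
  have hr₀ := hrr'.pos
  have hr'₀ := hrr'.symm.pos
  rw [mixedNorm]
  congr 1
  refine lintegral_congr fun t ↦ ?_
  have hvt := hv.prodMk_left t
  have hexp : 1 / r' + (q - r) / r = (q - 1) / r := by
    rw [one_div, ← hrr'.one_sub_inv]
    field_simp
    ring
  have hexp_pos : 0 < (q - 1) / r := div_pos (sub_pos.2 hqq'.lt) hr₀
  have hpow (x : X) : ‖mixedNormDual μ q r v (t, x)‖ₑ ^ r' = ‖v (t, x)‖ₑ ^ r
      * ‖signedPow ((q - r) / r : ℝ) (∫⁻ x, ‖v (t, x)‖ₑ ^ r ∂μ).toReal‖ₑ ^ r' := by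
    rw [enorm_mixedNormDual hrr'.lt, ENNReal.mul_rpow_of_nonneg _ _ hr'₀.le, ← ENNReal.rpow_mul,
      hrr'.sub_one_mul_conj]
  simp only [hpow]
  rw [lintegral_mul_const _ (hvt.measurable.enorm.pow_const r),
    ENNReal.mul_rpow_of_nonneg _ _ (by positivity), ← ENNReal.rpow_mul,
    mul_one_div_cancel hr'₀.ne', ENNReal.rpow_one,
    rpow_mul_enorm_signedPow_toReal (hvt.lintegral_enorm_rpow_ne_top hS hr₀) (by positivity)
      (hexp ▸ hexp_pos), hexp, ← ENNReal.rpow_mul, div_mul_eq_mul_div, hqq'.sub_one_mul_conj]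

lemma IsTestFunctionOn.exists_lintegral_enorm_rpow_le (hv : IsTestFunctionOn (I ×ˢ S) v)
    (hS : μ S ≠ ⊤) (hr : 0 < r) : ∃ M : ℝ≥0, ∀ t, ∫⁻ x, ‖v (t, x)‖ₑ ^ r ∂μ ≤ M := by
  obtain ⟨M, hM⟩ := hv.exists_norm_le
  have hfin : ENNReal.ofReal M ^ r * μ S ≠ ⊤ := by finiteness
  refine ⟨(ENNReal.ofReal M ^ r * μ S).toNNReal, fun t ↦ ?_⟩
  rw [ENNReal.coe_toNNReal hfin]
  refine (lintegral_mono fun x ↦ ?_).trans (lintegral_indicator_const_le S _)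
  by_cases hx : x ∈ S
  · rw [Set.indicator_of_mem hx, ← ofReal_norm]
    gcongr
    exact hM _
  · simp [hv.eq_zero_of_notMem (t, x) fun h ↦ hx h.2, hr]

lemma PairingBound.mixedNorm_le_of_isTestFunctionOn_inner [SFinite ρ] [SFinite μ]
    (hqq' : q.HolderConjugate q') (hrr' : r.HolderConjugate r') (h : PairingBound ρ μ q' r' v B)
    (hI : ρ I ≠ ⊤) (hS : μ S ≠ ⊤) (hv : IsTestFunctionOn (I ×ˢ S) v)
    (hN : IsTestFunctionOn I fun t ↦ ((∫⁻ x, ‖v (t, x)‖ₑ ^ r ∂μ).toReal : ℂ)) :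
    mixedNorm ρ μ q r v ≤ B := by
  have hr₀ := hrr'.pos
  have hM : ∫⁻ t, (∫⁻ x, ‖v (t, x)‖ₑ ^ r ∂μ) ^ (q / r) ∂ρ ≠ ⊤ := by
    refine ne_of_eq_of_ne (lintegral_congr fun t ↦ ?_)
      (hN.lintegral_enorm_rpow_ne_top hI (div_pos hqq'.pos hr₀))
    rw [← ofReal_norm, Complex.norm_real, Real.norm_of_nonneg ENNReal.toReal_nonneg,
      ENNReal.ofReal_toReal ((hv.prodMk_left t).lintegral_enorm_rpow_ne_top hS hr₀)]
  have hpair := h I S _ hI hS (isTestFunctionOn_mixedNormDual (q := q) hv hN)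
  rw [enorm_integral_mul_mixedNormDual hqq'.pos hrr'.lt hI hS hv hN,
    mixedNorm_mixedNormDual hqq' hrr' hS hv] at hpair
  simp only [mixedNorm, ← ENNReal.rpow_mul, one_div_mul_eq_div]
  rcases eq_or_ne (∫⁻ t, (∫⁻ x, ‖v (t, x)‖ₑ ^ r ∂μ) ^ (q / r) ∂ρ) 0 with hM₀ | hM₀
  · simp [hM₀, hqq'.pos]
  · rw [one_div, ← hqq'.symm.one_sub_inv, ENNReal.rpow_sub _ _ hM₀ hM, ENNReal.rpow_one]
    exact ENNReal.div_le_of_le_mul (by simpa only [one_div] using hpair)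

lemma PairingBound.mixedNorm_le_of_isTestFunctionOn [SFinite ρ] [SFinite μ]
    (hqq' : q.HolderConjugate q') (hrr' : r.HolderConjugate r') (h : PairingBound ρ μ q' r' v B)
    (hI : ρ I ≠ ⊤) (hS : μ S ≠ ⊤) (hv : IsTestFunctionOn (I ×ˢ S) v) :
    mixedNorm ρ μ q r v ≤ B := by
  have hr₀ := hrr'.pos
  set N : T → ℝ≥0∞ := fun t ↦ ∫⁻ x, ‖v (t, x)‖ₑ ^ r ∂μ with hN_def
  have hN : Measurable N := (hv.measurable.enorm.pow_const r).lintegral_prod_right'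
  have hN_top (t : T) : N t ≠ ⊤ := (hv.prodMk_left t).lintegral_enorm_rpow_ne_top hS hr₀
  let A (k : ℕ) : Set T := {t | 1 / ((k : ℝ) + 1) ≤ (N t).toReal}
  have hA (k : ℕ) : MeasurableSet (A k) := measurableSet_le measurable_const hN.ennreal_toReal
  have hA_mono : Monotone A := fun k l hkl t ht ↦
    show _ ≤ (N t).toReal from (Nat.one_div_le_one_div hkl).trans ht
  have hA_fst (k : ℕ) : MeasurableSet (Prod.fst ⁻¹' A k : Set (T × X)) := measurable_fst (hA k)
  refine le_of_tendsto' (tendsto_mixedNorm_indicator hqq'.nonneg hr₀.le hv.measurable hA_fst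
    (fun k l hkl ↦ Set.preimage_mono (hA_mono hkl)) fun t ↦ ?_) fun k ↦ ?_
  · rcases eq_or_ne (N t) 0 with hNt | hNt
    · have hvt := (hv.measurable.comp (measurable_prodMk_left (x := t))).enorm.pow_const r
      filter_upwards [(lintegral_eq_zero_iff hvt).1 hNt] with x hx hvx
      simp [hvx, hr₀, hr₀.not_gt] at hx
    · obtain ⟨k, hk⟩ := exists_nat_one_div_lt (ENNReal.toReal_pos hNt (hN_top t))
      exact .of_forall fun x _ ↦ ⟨k, hk.le⟩
  · have hNk (t : T) : (∫⁻ x, ‖(Prod.fst ⁻¹' A k).indicator v (t, x)‖ₑ ^ r ∂μ).toReal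
        = (A k).indicator (fun t ↦ (N t).toReal) t := by
      by_cases ht : t ∈ A k <;> simp [Set.indicator, ht, hr₀, hN_def]
    obtain ⟨M, hM⟩ := hv.exists_lintegral_enorm_rpow_le hS hr₀
    refine (h.indicator hqq'.symm.nonneg hrr'.symm.nonneg (hA_fst k)
      ).mixedNorm_le_of_isTestFunctionOn_inner hqq' hrr' hI hS (hv.indicator (hA_fst k)) ?_
    simp only [hNk]
    refine .of_norm_mem_Icc (ε := 1 / ((k : ℝ) + 1)) (M := M) Nat.one_div_pos_of_nat
      (hN.ennreal_toReal.indicator (hA k)).complex_ofReal (fun t ht ↦ ?_) fun t ht ↦ ?_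
    · have htA : t ∈ A k := Set.mem_of_indicator_ne_zero (Complex.ofReal_ne_zero.1 ht)
      rw [Set.indicator_of_mem htA, Complex.norm_real, Real.norm_of_nonneg ENNReal.toReal_nonneg]
      exact ⟨htA, ENNReal.toReal_le_coe_of_le_coe (hM t)⟩
    · have hNt : N t = 0 := by simp [hN_def, hv.eq_zero_of_notMem (t, _) fun h ↦ ht h.1, hr₀]
      simp [Set.indicator, hNt]

theorem PairingBound.mixedNorm_le [SigmaFinite ρ] [SigmaFinite μ] (hu : Measurable u)
    (hqq' : q.HolderConjugate q') (hrr' : r.HolderConjugate r') (h : PairingBound ρ μ q' r' u B) :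
    mixedNorm ρ μ q r u ≤ B := by
  let A (k : ℕ) : Set (T × X) :=
    spanningSets ρ k ×ˢ spanningSets μ k ∩ (‖u ·‖) ⁻¹' Set.Icc (1 / ((k : ℝ) + 1)) k
  have hA (k : ℕ) : MeasurableSet (A k) :=
    ((measurableSet_spanningSets ρ k).prod (measurableSet_spanningSets μ k)).inter
      (hu.norm measurableSet_Icc)
  have hA_mono : Monotone A := fun k l hkl ↦ Set.inter_subset_inter
    (Set.prod_mono (monotone_spanningSets ρ hkl) (monotone_spanningSets μ hkl))
    (Set.preimage_mono (Set.Icc_subset_Icc (Nat.one_div_le_one_div hkl) (Nat.cast_le.2 hkl)))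
  have hA_cover (z : T × X) (hz : u z ≠ 0) : ∃ k, z ∈ A k := by
    obtain ⟨k, hk⟩ := exists_nat_one_div_lt (norm_pos_iff.2 hz)
    obtain ⟨l, hl⟩ := exists_nat_ge ‖u z‖
    let m := max (max k l) (max (spanningSetsIndex ρ z.1) (spanningSetsIndex μ z.2))
    exact ⟨m, ⟨mem_spanningSets_of_index_le ρ z.1 (by simp [m]),
      mem_spanningSets_of_index_le μ z.2 (by simp [m])⟩,
      (Nat.one_div_le_one_div (by simp [m])).trans hk.le, hl.trans (Nat.cast_le.2 (by simp [m]))⟩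
  refine le_of_tendsto' (tendsto_mixedNorm_indicator hqq'.nonneg hrr'.nonneg hu hA hA_mono
    fun t ↦ .of_forall fun x ↦ hA_cover (t, x)) fun k ↦ ?_
  refine (h.indicator hqq'.symm.nonneg hrr'.symm.nonneg (hA k)).mixedNorm_le_of_isTestFunctionOn
    hqq' hrr' (measure_spanningSets_lt_top ρ k).ne (measure_spanningSets_lt_top μ k).ne
    (.of_norm_mem_Icc (M := k) (Nat.one_div_pos_of_nat (n := k)) (hu.indicator (hA k))
      (fun z hz ↦ ?_) fun z hz ↦ Set.indicator_of_notMem (fun hzA ↦ hz hzA.1) u)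
  have hzA := Set.mem_of_indicator_ne_zero hz
  rw [Set.indicator_of_mem hzA]
  exact hzA.2

end MixedNormDuality

section Strichartz

section MixedNormReal

variable {T X : Type*} [MeasurableSpace T] [MeasurableSpace X] {ρ ρ' : Measure T} {μ : Measure X}
  {q r : ℝ} {u v : T × X → ℂ}

lemma mixedNorm_mono_measure (hq : 0 ≤ q) (hρ : ρ ≤ ρ') :
    mixedNorm ρ μ q r u ≤ mixedNorm ρ' μ q r u := by
  unfold mixedNorm
  gcongr

lemma mixedNorm_add_le [SFinite μ] (hq : 1 ≤ q) (hr : 1 ≤ r) (hu : Measurable u)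
    (hv : Measurable v) :
    mixedNorm ρ μ q r (u + v) ≤ mixedNorm ρ μ q r u + mixedNorm ρ μ q r v := by
  refine le_trans ?_ (ENNReal.lintegral_Lp_add_le (measurable_mixedNorm_inner hu r).aemeasurable
    (measurable_mixedNorm_inner hv r).aemeasurable hq)
  unfold mixedNorm
  gcongr with t
  refine le_trans ?_ (ENNReal.lintegral_Lp_add_le
    (hu.comp measurable_prodMk_left).enorm.aemeasurable
    (hv.comp measurable_prodMk_left).enorm.aemeasurable hr)
  gcongr
  exact enorm_add_le _ _

lemma integral_norm_rpow_eq_toReal_lintegral (f : X → ℂ) (hf : AEStronglyMeasurable f μ)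
    (hr : 0 ≤ r) : ∫ x, ‖f x‖ ^ r ∂μ = (∫⁻ x, ‖f x‖ₑ ^ r ∂μ).toReal := by
  rw [integral_eq_lintegral_of_nonneg_ae (.of_forall fun x ↦ by positivity)
    (hf.norm.aemeasurable.pow_const r).aestronglyMeasurable]
  simp only [← ENNReal.ofReal_rpow_of_nonneg (norm_nonneg _) hr, ofReal_norm]

lemma integral_integral_norm_rpow_eq_toReal_mixedNorm [SFinite μ] (hq : 0 < q) (hr : 0 < r)
    (hu : Measurable u) (hu_top : mixedNorm ρ μ q r u ≠ ⊤) :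
    (∫ t, ((∫ x, ‖u (t, x)‖ ^ r ∂μ) ^ (1 / r)) ^ q ∂ρ) ^ (1 / q)
      = (mixedNorm ρ μ q r u).toReal := by
  have hmeas := (measurable_mixedNorm_inner (μ := μ) hu r).pow_const q
  have hfin : ∫⁻ t, ((∫⁻ x, ‖u (t, x)‖ₑ ^ r ∂μ) ^ (1 / r)) ^ q ∂ρ ≠ ⊤ := by
    intro h
    exact hu_top (by rw [mixedNorm, h, ENNReal.top_rpow_of_pos (by positivity)])
  have hinner (t : T) : ∫ x, ‖u (t, x)‖ ^ r ∂μ = (∫⁻ x, ‖u (t, x)‖ₑ ^ r ∂μ).toReal :=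
    integral_norm_rpow_eq_toReal_lintegral _
      (hu.comp measurable_prodMk_left).aestronglyMeasurable hr.le
  rw [mixedNorm, ← ENNReal.toReal_rpow, ← integral_toReal hmeas.aemeasurable
    (ae_lt_top hmeas hfin)]
  simp only [← ENNReal.toReal_rpow, hinner]

end MixedNormReal

lemma exists_contDiff_cutoff {E : Type*} [NormedAddCommGroup E] [NormedSpace ℝ E]
    [FiniteDimensional ℝ E] {K : Set E} (hK : IsCompact K) {x : E} (hx : x ∉ K) :
    ∃ χ : E → ℝ, ContDiff ℝ ∞ χ ∧ HasCompactSupport χ ∧ x ∉ tsupport χ ∧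
      (∀ ξ, χ ξ ∈ Set.Icc (0 : ℝ) 1) ∧ ∀ ξ ∈ K, χ ξ = 1 := by
  obtain ⟨K', hK', hKK', hK'x⟩ := exists_compact_between hK isOpen_compl_singleton
    (Set.subset_compl_singleton_iff.2 hx)
  obtain ⟨χ, hχ_one, hχ_zero, hχ_mem⟩ := exists_contMDiffMap_one_nhds_of_subset_interior
    (n := ⊤) (modelWithCornersSelf ℝ E) hK.isClosed hKK'
  have hsupp : tsupport χ ⊆ K' :=
    closure_minimal (Function.support_subset_iff'.2 hχ_zero) hK'.isClosed
  exact ⟨χ, χ.contMDiff.contDiff, hK'.of_isClosed_subset (isClosed_tsupport _) hsupp,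
    fun h ↦ hK'x (hsupp h) rfl, hχ_mem, fun ξ hξ ↦ hχ_one.self_of_nhdsSet ξ hξ⟩

variable {E : Type*} [NormedAddCommGroup E] [InnerProductSpace ℝ E] [FiniteDimensional ℝ E]
  [MeasurableSpace E] [BorelSpace E] {G : E → ℂ}

lemma enorm_integral_mul_propagatorTranspose_le {φ χ : E → ℝ} {F : ℝ × E → ℂ}
    (hφ : Measurable φ) (hχ : Measurable χ) (hG : Measurable G) (hF : Measurable F)
    (hGχ : ∀ ξ, G ξ ≠ 0 → χ ξ = 1) :
    ‖∫ ξ, G ξ * propagatorTranspose φ F ξ‖ₑ ≤ (∫⁻ ξ, ‖G ξ‖ₑ ^ (2 : ℝ)) ^ (1 / 2 : ℝ)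
      * (∫⁻ ξ, ENNReal.ofReal (χ ξ) * ‖propagatorTranspose φ F ξ‖ₑ ^ (2 : ℝ)) ^ (1 / 2 : ℝ) := by
  have hT := measurable_propagatorTranspose hφ hF
  have hweight (ξ : E) : ‖G ξ * propagatorTranspose φ F ξ‖ₑ
      = ‖G ξ‖ₑ * (ENNReal.ofReal (χ ξ) ^ (1 / 2 : ℝ) * ‖propagatorTranspose φ F ξ‖ₑ) := by
    rcases eq_or_ne (G ξ) 0 with h | h
    · simp [h]
    · simp [hGχ ξ h]
  have hsq (ξ : E) : (ENNReal.ofReal (χ ξ) ^ (1 / 2 : ℝ) * ‖propagatorTranspose φ F ξ‖ₑ) ^ (2 : ℝ)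
      = ENNReal.ofReal (χ ξ) * ‖propagatorTranspose φ F ξ‖ₑ ^ (2 : ℝ) := by
    rw [ENNReal.mul_rpow_of_nonneg _ _ zero_le_two, ← ENNReal.rpow_mul,
      one_div_mul_cancel two_ne_zero, ENNReal.rpow_one]
  refine (enorm_integral_le_lintegral_enorm _).trans ?_
  simp only [hweight, ← hsq]
  exact ENNReal.lintegral_mul_le_Lp_mul_Lq volume .two_two (by fun_prop) (by fun_prop)

/- Duality turns the `TT*` bound on the transpose into a bound on the propagator itself. -/
theorem HasDispersiveDecay.strichartz {q r σ : ℝ} (hq : 2 < q) (hr : 2 ≤ r)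
    (hσ : 2 / q = σ * (1 - 2 / r)) : ∃ C : ℝ≥0, ∀ {φ χ : E → ℝ} {A : ℝ} {G : E → ℂ},
      HasDispersiveDecay φ χ σ A → Measurable G → Integrable G → (∀ ξ, G ξ ≠ 0 → χ ξ = 1) →
      mixedNorm volume volume q r (propagator φ G)
        ≤ C * ENNReal.ofReal A ^ (1 / 2 - 1 / r) * (∫⁻ ξ, ‖G ξ‖ₑ ^ (2 : ℝ)) ^ (1 / 2 : ℝ) := by
  have hqq' := Real.HolderConjugate.conjExponent (show 1 < q by linarith)
  have hrr' := Real.HolderConjugate.conjExponent (show 1 < r by linarith)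
  obtain ⟨C, hC⟩ := lintegral_mul_enorm_propagatorTranspose_sq_le (E := E) hq hr hqq' hrr' hσ
  refine ⟨C ^ (1 / 2 : ℝ), fun {φ χ A G} h hGm hG hGχ ↦ PairingBound.mixedNorm_le
    (measurable_propagator h.measurable_phase hGm) hqq' hrr' fun I S F hI hS hF ↦ ?_⟩
  have hIS : volume (I ×ˢ S) ≠ ⊤ := by
    rw [Measure.volume_eq_prod, Measure.prod_prod]
    exact ENNReal.mul_ne_top hI hS
  rw [← Measure.volume_eq_prod, integral_propagator_mul h.measurable_phase hG (hF.integrable hIS)]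
  refine (enorm_integral_mul_propagatorTranspose_le h.measurable_phase h.measurable_cutoff hGm
    hF.measurable hGχ).trans ?_
  refine (mul_le_mul_right (ENNReal.rpow_le_rpow (hC h hI hS hF) (by norm_num)) _).trans_eq ?_
  rw [ENNReal.mul_rpow_of_nonneg _ _ (by norm_num), ENNReal.mul_rpow_of_nonneg _ _ (by norm_num),
    ← ENNReal.rpow_mul, ← ENNReal.rpow_mul, ENNReal.coe_rpow_of_nonneg _ (by norm_num),
    mul_one_div_cancel two_ne_zero, ENNReal.rpow_one]
  ring_nf

lemma exists_hasDispersiveDecay_sqrt_norm [Nontrivial E] {χ : E → ℝ} (hχ : ContDiff ℝ ∞ χ)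
    (hχc : HasCompactSupport χ) (hχ₀ : (0 : E) ∉ tsupport χ)
    (hχ_mem : ∀ ξ, χ ξ ∈ Set.Icc (0 : ℝ) 1) {m : ℝ} (hm : m ≠ 0) :
    ∃ C : ℝ, ∀ L : ℝ, 0 < L → HasDispersiveDecay (fun ξ : E ↦ m * √‖ξ‖) (fun ξ ↦ χ (L⁻¹ • ξ))
      (Module.finrank ℝ E / 2) (C * L ^ (3 * (Module.finrank ℝ E : ℝ) / 4)) := by
  have hsupp : tsupport (fun ξ ↦ (χ ξ : ℂ)) ⊆ tsupport χ :=
    closure_mono fun ξ hξ ↦ Complex.ofReal_ne_zero.1 hξ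
  obtain ⟨C, hC⟩ := dispersive_estimate_sqrt_norm_rescaled
    (Complex.ofRealCLM.contDiff.comp hχ) (hχc.comp_left Complex.ofReal_zero) fun h ↦ hχ₀ (hsupp h)
  refine ⟨C * |m| ^ (-(Module.finrank ℝ E : ℝ) / 2), fun L hL ↦ ⟨by fun_prop, ?_, ?_,
    fun ξ ↦ hχ_mem _, fun t ht x ↦ ?_⟩⟩
  · exact (hχ.continuous.comp (continuous_const_smul _)).measurable
  · exact (hχ.continuous.comp (continuous_const_smul _)).integrable_of_hasCompactSupport
      (hχc.comp_smul (inv_ne_zero hL.ne'))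
  · have h := hC L hL (t * m) (mul_ne_zero ht hm) x
    rw [abs_mul, Real.mul_rpow (abs_nonneg t) (abs_nonneg m)] at h
    simp only [propagator, ← mul_assoc, ← neg_div]
    refine h.trans_eq (by ring)

theorem strichartz_sqrt_norm [Nontrivial E] {K : Set E} (hK : IsCompact K) (hK₀ : (0 : E) ∉ K)
    {m : ℝ} (hm : m ≠ 0) {q r : ℝ} (hq : 2 < q) (hr : 2 ≤ r)
    (hqr : 1 / q = Module.finrank ℝ E / 2 * (1 / 2 - 1 / r)) :
    ∃ C : ℝ≥0, ∀ L : ℝ, 0 < L → ∀ G : E → ℂ, Measurable G → Integrable G →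
      (∀ ξ, G ξ ≠ 0 → L⁻¹ • ξ ∈ K) →
      mixedNorm volume volume q r (propagator (fun ξ ↦ m * √‖ξ‖) G)
        ≤ C * ENNReal.ofReal (L ^ (3 * (Module.finrank ℝ E : ℝ) / 4 * (1 / 2 - 1 / r)))
          * (∫⁻ ξ, ‖G ξ‖ₑ ^ (2 : ℝ)) ^ (1 / 2 : ℝ) := by
  obtain ⟨χ, hχ, hχc, hχ₀, hχ_mem, hχ_one⟩ := exists_contDiff_cutoff hK hK₀
  obtain ⟨A, hA⟩ := exists_hasDispersiveDecay_sqrt_norm hχ hχc hχ₀ hχ_mem hm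
  obtain ⟨C, hC⟩ := HasDispersiveDecay.strichartz (E := E) (σ := Module.finrank ℝ E / 2) hq hr
    (by linear_combination 2 * hqr)
  have hexp : 0 ≤ 1 / 2 - 1 / r := sub_nonneg.2 (one_div_le_one_div_of_le two_pos hr)
  have hA₀ : 0 ≤ A := by simpa using (hA 1 one_pos).nonneg
  refine ⟨C * A.toNNReal ^ (1 / 2 - 1 / r), fun L hL G hGm hG hGK ↦ ?_⟩
  refine (hC (hA L hL) hGm hG fun ξ hξ ↦ hχ_one _ (hGK ξ hξ)).trans_eq ?_
  rw [ENNReal.ofReal_mul hA₀, ENNReal.mul_rpow_of_nonneg _ _ hexp,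
    ENNReal.ofReal_rpow_of_nonneg (Real.rpow_nonneg hL.le _) hexp, ← Real.rpow_mul hL.le,
    ENNReal.coe_mul, ENNReal.coe_rpow_of_nonneg _ hexp, ENNReal.ofReal, ← mul_assoc (C : ℝ≥0∞)]

lemma synthesis_cos_mul {φ : E → ℝ} (hφ : Measurable φ) (hG : Integrable G) (t : ℝ) (x : E) :
    synthesis (fun ξ ↦ Real.cos (t * φ ξ) * G ξ) x
      = 2⁻¹ * (propagator φ G (t, x) + propagator (fun ξ ↦ -φ ξ) G (t, x)) := by
  have hint {ϑ : E → ℝ} (hϑ : Measurable ϑ) : Integrable fun ξ ↦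
      Complex.exp (Complex.I * (⟪x, ξ⟫ + t * ϑ ξ : ℝ)) * G ξ :=
    hG.bdd_mul (by fun_prop) (.of_forall fun ξ ↦ (Complex.norm_exp_I_mul_ofReal _).le)
  simp only [propagator]
  rw [← integral_add (hint hφ) (hint (ϑ := fun ξ ↦ -φ ξ) hφ.neg), ← integral_const_mul, synthesis]
  congr 1 with ξ
  rw [Complex.ofReal_cos, Complex.cos]
  push_cast
  simp only [mul_add, Complex.exp_add]
  ring_nf

theorem strichartz_cos_sqrt_norm [Nontrivial E] {K : Set E} (hK : IsCompact K)
    (hK₀ : (0 : E) ∉ K) {m : ℝ} (hm : m ≠ 0) {q r : ℝ} (hq : 2 < q) (hr : 2 ≤ r)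
    (hqr : 1 / q = Module.finrank ℝ E / 2 * (1 / 2 - 1 / r)) :
    ∃ C : ℝ≥0, ∀ L : ℝ, 0 < L → ∀ G : E → ℂ, Measurable G → Integrable G →
      (∀ ξ, G ξ ≠ 0 → L⁻¹ • ξ ∈ K) →
      mixedNorm volume volume q r
          (fun z ↦ synthesis (fun ξ ↦ Real.cos (z.1 * (m * √‖ξ‖)) * G ξ) z.2)
        ≤ C * ENNReal.ofReal (L ^ (3 * (Module.finrank ℝ E : ℝ) / 4 * (1 / 2 - 1 / r)))
          * (∫⁻ ξ, ‖G ξ‖ₑ ^ (2 : ℝ)) ^ (1 / 2 : ℝ) := by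
  obtain ⟨C₁, h₁⟩ := strichartz_sqrt_norm hK hK₀ hm hq hr hqr
  obtain ⟨C₂, h₂⟩ := strichartz_sqrt_norm hK hK₀ (neg_ne_zero.2 hm) hq hr hqr
  refine ⟨C₁ + C₂, fun L hL G hGm hG hGK ↦ ?_⟩
  have hφ (m : ℝ) : Measurable fun ξ : E ↦ m * √‖ξ‖ := by fun_prop
  have hcos (z : ℝ × E) : ‖synthesis (fun ξ ↦ Real.cos (z.1 * (m * √‖ξ‖)) * G ξ) z.2‖ₑ
      ≤ ‖(propagator (fun ξ ↦ m * √‖ξ‖) G + propagator (fun ξ ↦ -m * √‖ξ‖) G) z‖ₑ := by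
    rw [synthesis_cos_mul (hφ m) hG, enorm_mul]
    simp only [← neg_mul]
    exact mul_le_of_le_one_left' (by simp [← ofReal_norm])
  refine (mixedNorm_mono (by linarith) (by linarith) hcos).trans
    ((mixedNorm_add_le (by linarith) (by linarith) (measurable_propagator (hφ m) hGm)
    (measurable_propagator (hφ (-m)) hGm)).trans
    ((add_le_add (h₁ L hL G hGm hG hGK) (h₂ L hL G hGm hG hGK)).trans_eq ?_))
  rw [ENNReal.coe_add]
  ring

end Strichartz

section HalfWave

section Plancherel

variable {E : Type*} [NormedAddCommGroup E] [InnerProductSpace ℝ E] [FiniteDimensional ℝ E]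
  [MeasurableSpace E] [BorelSpace E] {F : E → ℂ}

lemma lintegral_enorm_sq_le_lintegral_enorm_synthesis_sq (hF₁ : Integrable F) (hF₂ : MemLp F 2) :
    ∫⁻ ξ, ‖F ξ‖ₑ ^ (2 : ℝ) ≤ ∫⁻ x, ‖synthesis F x‖ₑ ^ (2 : ℝ) := by
  rw [lintegral_enorm_synthesis_sq hF₁ hF₂]
  refine le_mul_of_one_le_left' (ENNReal.one_le_ofReal.2 (one_le_pow₀ ?_))
  linarith [Real.pi_gt_three]

lemma memLp_synthesis_two (hF₁ : Integrable F) (hF₂ : MemLp F 2) : MemLp (synthesis F) 2 := by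
  refine ⟨(continuous_synthesis hF₁).aestronglyMeasurable, ?_⟩
  rw [eLpNorm_lt_top_iff_lintegral_rpow_enorm_lt_top two_ne_zero ENNReal.ofNat_ne_top,
    ENNReal.toReal_ofNat, lintegral_enorm_synthesis_sq hF₁ hF₂]
  exact ENNReal.mul_lt_top ENNReal.ofReal_lt_top (by
    simpa using lintegral_rpow_enorm_lt_top_of_eLpNorm_lt_top two_ne_zero ENNReal.ofNat_ne_top
      hF₂.eLpNorm_lt_top)

lemma lintegral_enorm_sq_rpow_le_ofReal_integral_synthesis_sq (hF₁ : Integrable F)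
    (hF₂ : MemLp F 2) :
    (∫⁻ ξ, ‖F ξ‖ₑ ^ (2 : ℝ)) ^ (1 / 2 : ℝ)
      ≤ ENNReal.ofReal ((∫ x, ‖synthesis F x‖ ^ 2) ^ (1 / (2 : ℝ))) := by
  have hfin := (memLp_synthesis_two hF₁ hF₂).eLpNorm_lt_top
  rw [eLpNorm_lt_top_iff_lintegral_rpow_enorm_lt_top two_ne_zero ENNReal.ofNat_ne_top,
    ENNReal.toReal_ofNat] at hfin
  simp only [← Real.rpow_two]
  rw [integral_norm_rpow_eq_toReal_lintegral _ (continuous_synthesis hF₁).aestronglyMeasurable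
    zero_le_two, ← ENNReal.ofReal_rpow_of_nonneg ENNReal.toReal_nonneg (by norm_num),
    ENNReal.ofReal_toReal hfin.ne]
  exact ENNReal.rpow_le_rpow (lintegral_enorm_sq_le_lintegral_enorm_synthesis_sq hF₁ hF₂)
    (by norm_num)

end Plancherel

lemma fhat_eq_synthesis_neg {n : ℕ} (f : EuclideanSpace ℝ (Fin n) → ℂ)
    (ξ : EuclideanSpace ℝ (Fin n)) : fhat f ξ = synthesis f (-ξ) := by
  simp only [fhat, synthesis, inner_neg_left, real_inner_comm, Complex.ofReal_neg, neg_mul,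
    mul_neg]

variable {d : ℕ} {ψ : EuclideanSpace ℝ (Fin (d - 1)) → ℝ} {j : ℕ}
  {f₀ : EuclideanSpace ℝ (Fin (d - 1)) → ℂ}

/-- The Fourier transform of `ψ(2^{−2j}D) f₀`, normalised by `(2π)^{1−d}` so that the solution is
a plain `synthesis`. -/
def localizedData (d : ℕ) (ψ : EuclideanSpace ℝ (Fin (d - 1)) → ℝ) (j : ℕ)
    (f₀ : EuclideanSpace ℝ (Fin (d - 1)) → ℂ) (ξ : EuclideanSpace ℝ (Fin (d - 1))) : ℂ :=
  ((2 * π) ^ ((1 : ℤ) - (d : ℤ)) : ℝ) * (ψ (((2 : ℝ) ^ (2 * j))⁻¹ • ξ) * fhat f₀ ξ)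

lemma cutoff_eq_synthesis : cutoff d ψ j f₀ = synthesis (localizedData d ψ j f₀) := by
  funext x
  rw [cutoff, ← integral_const_mul, synthesis]
  congr 1 with ξ
  rw [localizedData]
  ring

lemma halfWave_eq_synthesis (μ t : ℝ) (x : EuclideanSpace ℝ (Fin (d - 1))) :
    halfWave d μ ψ j f₀ t x
      = synthesis (fun ξ ↦ Real.cos (t * (√μ * √‖ξ‖)) * localizedData d ψ j f₀ ξ) x := by
  rw [halfWave, ← integral_const_mul, synthesis]
  congr 1 with ξ
  rw [localizedData, mul_assoc t]
  ring

lemma smul_mem_tsupport_of_localizedData_ne_zero {ξ : EuclideanSpace ℝ (Fin (d - 1))}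
    (hξ : localizedData d ψ j f₀ ξ ≠ 0) : ((2 : ℝ) ^ (2 * j))⁻¹ • ξ ∈ tsupport ψ := by
  refine subset_tsupport ψ fun h ↦ hξ ?_
  simp [localizedData, h]

lemma measurable_localizedData (hψ : Measurable ψ) (hf₀ : Integrable f₀) :
    Measurable (localizedData d ψ j f₀) := by
  have hfhat : Measurable (fhat f₀) := by
    rw [funext (fhat_eq_synthesis_neg f₀)]
    exact ((continuous_synthesis hf₀).comp continuous_neg).measurable
  unfold localizedData
  fun_prop

lemma memLp_localizedData (hψ : Measurable ψ) {M : ℝ} (hM : ∀ η, ‖ψ η‖ ≤ M)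
    (hψc : HasCompactSupport ψ) (hf₀ : Integrable f₀) (p : ℝ≥0∞) :
    MemLp (localizedData d ψ j f₀) p := by
  have hK := hψc.comp_smul (inv_ne_zero (pow_ne_zero (2 * j) (two_ne_zero' ℝ)))
  refine (memLp_indicator_const p hK.isCompact.measurableSet
    ((2 * π) ^ ((1 : ℤ) - (d : ℤ)) * (M * ∫ x, ‖f₀ x‖)) (.inr hK.isCompact.measure_ne_top)).mono
    (measurable_localizedData hψ hf₀).aestronglyMeasurable (.of_forall fun ξ ↦ ?_)
  by_cases hξ : ψ (((2 : ℝ) ^ (2 * j))⁻¹ • ξ) = 0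
  · simp [localizedData, hξ]
  · rw [Set.indicator_of_mem (subset_tsupport (fun ξ ↦ ψ (((2 : ℝ) ^ (2 * j))⁻¹ • ξ)) hξ),
      localizedData, fhat_eq_synthesis_neg]
    refine le_trans ?_ (le_abs_self _)
    rw [norm_mul, norm_mul, Complex.norm_real, Complex.norm_real,
      Real.norm_of_nonneg (by positivity)]
    gcongr
    exacts [(norm_nonneg _).trans (hM 0), hM _, norm_synthesis_le _ _]

lemma measurable_halfWave (μ : ℝ) (hG : Measurable (localizedData d ψ j f₀))
    (hG_int : Integrable (localizedData d ψ j f₀)) :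
    Measurable fun z : ℝ × EuclideanSpace ℝ (Fin (d - 1)) ↦ halfWave d μ ψ j f₀ z.1 z.2 := by
  have hφ : Measurable fun ξ : EuclideanSpace ℝ (Fin (d - 1)) ↦ √μ * √‖ξ‖ := by fun_prop
  simp only [halfWave_eq_synthesis, synthesis_cos_mul hφ hG_int, Prod.mk.eta]
  exact ((measurable_propagator hφ hG).add (measurable_propagator hφ.neg hG)).const_mul _

theorem stmt13_general (hd : 2 ≤ d) {μ : ℝ} (hμ : 0 < μ) (hψ : Measurable ψ)
    (hψ_bdd : ∃ M, ∀ η, ‖ψ η‖ ≤ M) (hψc : HasCompactSupport ψ) (hψ₀ : 0 ∉ tsupport ψ) {q r : ℝ}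
    (hq : 2 < q) (hr : 2 ≤ r) (hqr : 1 / q = (((d : ℝ) - 1) / 2) * (1 / 2 - 1 / r)) :
    ∃ C : ℝ, 0 < C ∧ ∀ (j : ℕ) (f₀ : EuclideanSpace ℝ (Fin (d - 1)) → ℂ), Integrable f₀ →
      ∀ I : Set ℝ,
        (∫ t in I, ((∫ x, ‖halfWave d μ ψ j f₀ t x‖ ^ r) ^ (1 / r)) ^ q) ^ (1 / q)
          ≤ C * (2 : ℝ) ^ (2 * (j : ℝ) * (3 * ((d : ℝ) - 1) / 4) * (1 / 2 - 1 / r))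
            * (∫ x, ‖cutoff d ψ j f₀ x‖ ^ 2) ^ (1 / (2 : ℝ)) := by
  have hn : Module.finrank ℝ (EuclideanSpace ℝ (Fin (d - 1))) = (d : ℝ) - 1 := by
    rw [finrank_euclideanSpace_fin, Nat.cast_sub (by lia), Nat.cast_one]
  have : Nontrivial (EuclideanSpace ℝ (Fin (d - 1))) :=
    Module.nontrivial_of_finrank_pos (R := ℝ) (by rw [finrank_euclideanSpace_fin]; lia)
  obtain ⟨M, hM⟩ := hψ_bdd
  obtain ⟨C, hC⟩ := strichartz_cos_sqrt_norm hψc hψ₀ (Real.sqrt_pos.2 hμ).ne' hq hr (hn ▸ hqr)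
  refine ⟨C + 1, by positivity, fun j f₀ hf₀ I ↦ ?_⟩
  have hGm := measurable_localizedData (j := j) hψ hf₀
  have hG := memLp_localizedData (j := j) hψ hM hψc hf₀
  have hG₁ := memLp_one_iff_integrable.1 (hG 1)
  have hL : ((2 : ℝ) ^ (2 * j)) ^ (3 * ((d : ℝ) - 1) / 4 * (1 / 2 - 1 / r))
      = 2 ^ (2 * (j : ℝ) * (3 * ((d : ℝ) - 1) / 4) * (1 / 2 - 1 / r)) := by
    rw [← Real.rpow_natCast, ← Real.rpow_mul zero_le_two, mul_assoc (2 * (j : ℝ))]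
    push_cast
    rfl
  have hmixed : mixedNorm (volume.restrict I) volume q r (fun z ↦ halfWave d μ ψ j f₀ z.1 z.2)
      ≤ ENNReal.ofReal (C * 2 ^ (2 * (j : ℝ) * (3 * ((d : ℝ) - 1) / 4) * (1 / 2 - 1 / r))
        * (∫ x, ‖cutoff d ψ j f₀ x‖ ^ 2) ^ (1 / (2 : ℝ))) := by
    rw [ENNReal.ofReal_mul (by positivity), ENNReal.ofReal_mul C.coe_nonneg,
      ENNReal.ofReal_coe_nnreal, ← hL, ← hn, cutoff_eq_synthesis]
    simp only [halfWave_eq_synthesis]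
    exact ((mixedNorm_mono_measure (by linarith) Measure.restrict_le_self).trans
      (hC _ (by positivity) _ hGm hG₁ fun _ ↦ smul_mem_tsupport_of_localizedData_ne_zero)).trans
      (mul_le_mul_right (lintegral_enorm_sq_rpow_le_ofReal_integral_synthesis_sq hG₁ (hG 2)) _)
  rw [integral_integral_norm_rpow_eq_toReal_mixedNorm (by linarith) (by linarith)
    (measurable_halfWave μ hGm hG₁) (ne_top_of_le_ne_top ENNReal.ofReal_ne_top hmixed)]
  refine (ENNReal.toReal_le_of_le_ofReal (by positivity) hmixed).trans ?_
  gcongr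
  linarith

end HalfWave

/-- frequency-localized Strichartz estimate with loss
`2^{2j(3(d−1)/4)(1/2−1/r)}` for the half-wave equation `∂_t²f + μ|∇|f = 0`. -/
theorem stmt13 {d : ℕ} (hd : 2 ≤ d) (μ : ℝ) (hμ : 0 < μ)
    (c₀ c₁ : ℝ) (hc₀ : 0 < c₀) (hc₀₁ : c₀ ≤ c₁)
    (ψ : EuclideanSpace ℝ (Fin (d - 1)) → ℝ)
    (hψ : ContDiff ℝ (⊤ : ℕ∞) ψ) (hψc : HasCompactSupport ψ)
    (hsupp : tsupport ψ ⊆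
      {η : EuclideanSpace ℝ (Fin (d - 1)) | c₀ ≤ ‖η‖ ∧ ‖η‖ ≤ c₁})
    (q r : ℝ) (hq : 2 < q) (hr : 2 ≤ r)
    (hqr : 1 / q = (((d : ℝ) - 1) / 2) * (1 / 2 - 1 / r)) :
    ∃ C : ℝ, 0 < C ∧
      ∀ j : ℕ, ∀ f₀ : SchwartzMap (EuclideanSpace ℝ (Fin (d - 1))) ℂ,
        (∫ t in Set.Icc (0 : ℝ) 1,
            ((∫ x' : EuclideanSpace ℝ (Fin (d - 1)),
              ‖halfWave d μ ψ j (fun x => f₀ x) t x'‖ ^ r) ^ (1 / r)) ^ q) ^ (1 / q)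
          ≤ C * (2 : ℝ) ^ (2 * (j : ℝ) * (3 * ((d : ℝ) - 1) / 4) * (1 / 2 - 1 / r)) *
              (∫ x' : EuclideanSpace ℝ (Fin (d - 1)),
                ‖cutoff d ψ j (fun x => f₀ x) x'‖ ^ 2) ^ (1 / (2 : ℝ)) := by
  have hψ₀ : 0 ∉ tsupport ψ := fun h ↦ hc₀.not_ge (by simpa using (hsupp h).1)
  obtain ⟨C, hC_pos, hC⟩ := stmt13_general hd hμ hψ.continuous.measurable
    (hψc.exists_bound_of_continuous hψ.continuous) hψc hψ₀ hq hr hqr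
  exact ⟨C, hC_pos, fun j f₀ ↦ hC j f₀ f₀.integrable _⟩

end
end

section
/- Let d ≥ 2, κ > 0, μ > 0, and let b : [0,∞) → ℝ be continuous, C² on (0,∞) with b, b', b'' locally bounded on [0,∞), satisfying the eigenfunction equation κ y b''(y) + b'(y) + (μ − κ y) b(y) = 0 for all y > 0. Let φ₀ ∈ 𝒮(ℝ^{d−1}) with φ̂₀ smooth and compactly supported in ℝ^{d−1} \ {0}. Define u : ℝ × (0,∞) × ℝ^{d−1} → ℂ by u(t, x_d, x′) = (2π)^{1−d} ∫ e^{i x′·ξ′} b(|ξ′| x_d) cos(t μ^{1/2} |ξ′|^{1/2}) φ̂₀(ξ′) dξ′. Then u is smooth on ℝ × Ω, satisfies the acoustic wave equation ∂_t² u − κ x_d Δ_x u − ∂_{x_d} u = 0 there, and has initial data u(0, x) = (2π)^{1−d} ∫ e^{i x′·ξ′} b(|ξ′| x_d) φ̂₀(ξ′) dξ′ and ∂_t u(0, x) = 0. -/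
open Real MeasureTheory
open scoped RealInnerProductSpace

noncomputable section

/-!
Each plane gallery wave `exp(i⟨x, ξ⟩) b(‖ξ‖y) cos(t √μ √‖ξ‖)` with `ξ ≠ 0` is an exact solution:
the second time derivative contributes `-μ‖ξ‖`, the tangential Laplacian `-‖ξ‖²`, and the ODE for
`b` at the point `‖ξ‖y` is what makes the terms cancel.  Bootstrapping the ODE shows that `b` is
smooth on `(0, ∞)`, so the waves depend smoothly on all variables as long as `ξ ≠ 0`.  The amplitude
is compactly supported away from `0`, so every derivative of the superposition may be taken under
the integral sign.
-/

open Set Filter Topology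
open scoped ContDiff

section Amplitude

variable {X F : Type*} [NormedAddCommGroup X] [MeasurableSpace X] [NormedAddCommGroup F]
  [NormedSpace ℂ F] {U : Set X} {φ : X → ℂ} {ν : Measure X}

/-- An integrable amplitude with compact support inside `U`, against which kernels that are regular
only on `U` can be integrated. -/
structure IsAmplitudeOn (φ : X → ℂ) (U : Set X) (ν : Measure X) : Prop where
  integrable : Integrable φ ν
  hasCompactSupport : HasCompactSupport φ
  tsupport_subset : tsupport φ ⊆ U

theorem IsAmplitudeOn.integrable_smul [BorelSpace X] [SecondCountableTopology X]
    (hφ : IsAmplitudeOn φ U ν) {A : X → F} (hA : ContinuousOn A U) :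
    Integrable (fun ξ => φ ξ • A ξ) ν := by
  have hK : IntegrableOn (fun ξ => φ ξ • A ξ) (tsupport φ) ν :=
    hφ.integrable.integrableOn.smul_continuousOn (hA.mono hφ.tsupport_subset) hφ.hasCompactSupport
  refine (integrableOn_iff_integrable_of_support_subset fun ξ hξ => ?_).1 hK
  exact subset_tsupport φ (left_ne_zero_of_smul hξ)

end Amplitude

section SmoothKernel

variable {P X F : Type*} [NormedAddCommGroup P] [NormedSpace ℝ P]
  [NormedAddCommGroup X] [NormedSpace ℝ X] [NormedAddCommGroup F] [NormedSpace ℝ F]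
  {s : Set P} {U : Set X} {G : P → X → F}

/-- A kernel `G p ξ`, with parameter `p` and integration variable `ξ`, that is jointly smooth on
`s × U`. -/
def IsSmoothKernel (G : P → X → F) (s : Set P) (U : Set X) : Prop :=
  ContDiffOn ℝ ∞ (fun q : P × X => G q.1 q.2) (s ×ˢ U)

namespace IsSmoothKernel

theorem contDiffAt (hG : IsSmoothKernel G s U) (hs : IsOpen s) (hU : IsOpen U) {p : P} {ξ : X}
    (hp : p ∈ s) (hξ : ξ ∈ U) : ContDiffAt ℝ ∞ (fun q : P × X => G q.1 q.2) (p, ξ) :=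
  ContDiffOn.contDiffAt hG ((hs.prod hU).mem_nhds ⟨hp, hξ⟩)

theorem continuousOn_right (hG : IsSmoothKernel G s U) {p : P} (hp : p ∈ s) :
    ContinuousOn (G p) U :=
  (ContDiffOn.continuousOn hG).comp (f := fun ξ => (p, ξ)) (by fun_prop) fun _ hξ => ⟨hp, hξ⟩

theorem differentiableAt_left (hG : IsSmoothKernel G s U) (hs : IsOpen s) (hU : IsOpen U)
    {p : P} {ξ : X} (hp : p ∈ s) (hξ : ξ ∈ U) : DifferentiableAt ℝ (fun p => G p ξ) p :=
  ((hG.contDiffAt hs hU hp hξ).differentiableAt (by simp)).comp p (f := fun p => (p, ξ))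
    (by fun_prop)

theorem comp_left {Q : Type*} [NormedAddCommGroup Q] [NormedSpace ℝ Q] {t : Set Q} {f : Q → P}
    (hG : IsSmoothKernel G s U) (hf : ContDiff ℝ ∞ f) (hst : MapsTo f t s) :
    IsSmoothKernel (fun q => G (f q)) t U :=
  ContDiffOn.comp hG (f := fun q : Q × X => (f q.1, q.2)) (by fun_prop) fun _ hq => ⟨hst hq.1, hq.2⟩

theorem fderiv_left (hG : IsSmoothKernel G s U) (hs : IsOpen s) (hU : IsOpen U) :
    IsSmoothKernel (fun p ξ => fderiv ℝ (fun p => G p ξ) p) s U := by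
  rintro ⟨p, ξ⟩ ⟨hp, hξ⟩
  have hswap : ContDiffAt ℝ ∞ (Function.uncurry fun (q : P × X) p => G p q.2) ((p, ξ), p) :=
    (hG.contDiffAt hs hU hp hξ).comp ((p, ξ), p)
      (f := fun r : (P × X) × P => (r.2, r.1.2)) (by fun_prop)
  exact (hswap.fderiv contDiffAt_fst le_rfl).contDiffWithinAt

theorem fderiv_left_apply (hG : IsSmoothKernel G s U) (hs : IsOpen s) (hU : IsOpen U) (v : P) :
    IsSmoothKernel (fun p ξ => fderiv ℝ (fun p => G p ξ) p v) s U :=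
  ContDiffOn.clm_apply (hG.fderiv_left hs hU) contDiffOn_const

end IsSmoothKernel

end SmoothKernel

section KernelIntegral

variable {P X F : Type*} [NormedAddCommGroup P] [NormedSpace ℝ P] [FiniteDimensional ℝ P]
  [NormedAddCommGroup X] [NormedSpace ℝ X] [MeasurableSpace X] [BorelSpace X]
  [SecondCountableTopology X] [NormedAddCommGroup F] [NormedSpace ℂ F]
  {s : Set P} {U : Set X} {G : P → X → F} {φ : X → ℂ} {ν : Measure X}

namespace IsSmoothKernel

theorem hasFDerivAt_integral (hG : IsSmoothKernel G s U) (hs : IsOpen s) (hU : IsOpen U)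
    (hφ : IsAmplitudeOn φ U ν) {p : P} (hp : p ∈ s) :
    HasFDerivAt (fun p => ∫ ξ, φ ξ • G p ξ ∂ν)
      (∫ ξ, φ ξ • fderiv ℝ (fun p => G p ξ) p ∂ν) p := by
  have hG' := hG.fderiv_left hs hU
  obtain ⟨K, hK, hpK, hKs⟩ : ∃ K, IsCompact K ∧ K ∈ 𝓝 p ∧ K ⊆ s := by
    obtain ⟨K, hpK, hKs, hK⟩ := local_compact_nhds (hs.mem_nhds hp)
    exact ⟨K, hK, hpK, hKs⟩
  obtain ⟨C, hC⟩ := (hK.prod hφ.hasCompactSupport).exists_bound_of_continuousOn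
    ((ContDiffOn.continuousOn hG').mono (prod_mono hKs hφ.tsupport_subset))
  refine hasFDerivAt_integral_of_dominated_of_fderiv_le
    (F' := fun p ξ => φ ξ • fderiv ℝ (fun p => G p ξ) p) (bound := fun ξ => ‖φ ξ‖ * C) hpK
    (eventually_of_mem hpK fun q hq => ?_) (hφ.integrable_smul (hG.continuousOn_right hp))
    (hφ.integrable_smul (hG'.continuousOn_right hp)).aestronglyMeasurable
    (.of_forall fun ξ q hq => ?_) (hφ.integrable.norm.mul_const C) (.of_forall fun ξ q hq => ?_)
  · exact (hφ.integrable_smul (hG.continuousOn_right (hKs hq))).aestronglyMeasurable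
  · by_cases hξ : ξ ∈ tsupport φ
    · exact (norm_smul_le _ _).trans
        (mul_le_mul_of_nonneg_left (hC (q, ξ) ⟨hq, hξ⟩) (norm_nonneg _))
    · simp [image_eq_zero_of_notMem_tsupport hξ]
  · by_cases hξ : ξ ∈ tsupport φ
    · exact (hG.differentiableAt_left hs hU (hKs hq)
        (hφ.tsupport_subset hξ)).hasFDerivAt.const_smul (φ ξ)
    · simpa [image_eq_zero_of_notMem_tsupport hξ] using hasFDerivAt_const (0 : F) q

theorem fderiv_integral_apply (hG : IsSmoothKernel G s U) (hs : IsOpen s) (hU : IsOpen U)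
    (hφ : IsAmplitudeOn φ U ν) {p : P} (hp : p ∈ s) (v : P) :
    fderiv ℝ (fun p => ∫ ξ, φ ξ • G p ξ ∂ν) p v =
      ∫ ξ, φ ξ • fderiv ℝ (fun p => G p ξ) p v ∂ν := by
  rw [(hG.hasFDerivAt_integral hs hU hφ hp).fderiv, ContinuousLinearMap.integral_apply
    (hφ.integrable_smul ((hG.fderiv_left hs hU).continuousOn_right hp))]
  rfl

theorem fderiv_fderiv_integral_apply (hG : IsSmoothKernel G s U) (hs : IsOpen s) (hU : IsOpen U)
    (hφ : IsAmplitudeOn φ U ν) {p : P} (hp : p ∈ s) (v w : P) :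
    fderiv ℝ (fun p => fderiv ℝ (fun p => ∫ ξ, φ ξ • G p ξ ∂ν) p v) p w =
      ∫ ξ, φ ξ • fderiv ℝ (fun p => fderiv ℝ (fun p => G p ξ) p v) p w ∂ν := by
  have hfirst : (fun p => fderiv ℝ (fun p => ∫ ξ, φ ξ • G p ξ ∂ν) p v) =ᶠ[𝓝 p]
      fun p => ∫ ξ, φ ξ • fderiv ℝ (fun p => G p ξ) p v ∂ν :=
    eventually_of_mem (hs.mem_nhds hp) fun q hq => hG.fderiv_integral_apply hs hU hφ hq v
  rw [hfirst.fderiv_eq, (hG.fderiv_left_apply hs hU v).fderiv_integral_apply hs hU hφ hp w]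

theorem contDiffOn_integral (hG : IsSmoothKernel G s U) (hs : IsOpen s) (hU : IsOpen U)
    (hφ : IsAmplitudeOn φ U ν) : ContDiffOn ℝ ∞ (fun p => ∫ ξ, φ ξ • G p ξ ∂ν) s := by
  refine contDiffOn_infty.2 fun n => ?_
  have hdiff {H : P → X → F} (hH : IsSmoothKernel H s U) :
      DifferentiableOn ℝ (fun p => ∫ ξ, φ ξ • H p ξ ∂ν) s := fun p hp =>
    (hH.hasFDerivAt_integral hs hU hφ hp).differentiableAt.differentiableWithinAt
  induction n generalizing G with
  | zero => exact contDiffOn_zero.2 (hdiff hG).continuousOn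
  | succ n ih =>
    refine contDiffOn_succ_of_fderiv_apply (n := n) (hdiff hG) (by simp) fun v => ?_
    refine (ih (hG.fderiv_left_apply hs hU v)).congr fun p hp => ?_
    rw [fderivWithin_of_isOpen hs hp, hG.fderiv_integral_apply hs hU hφ hp v]

end IsSmoothKernel

end KernelIntegral

section OneVariable

variable {𝕜 F : Type*} [NontriviallyNormedField 𝕜] [NormedAddCommGroup F] [NormedSpace 𝕜 F]

theorem contDiffOn_infty_of_deriv_deriv_eq {s : Set 𝕜} (hs : IsOpen s) {f : 𝕜 → F} {a c : 𝕜 → 𝕜}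
    (hf : DifferentiableOn 𝕜 f s) (hf' : DifferentiableOn 𝕜 (deriv f) s)
    (ha : ContDiffOn 𝕜 ∞ a s) (hc : ContDiffOn 𝕜 ∞ c s)
    (hode : ∀ y ∈ s, deriv (deriv f) y = a y • deriv f y + c y • f y) :
    ContDiffOn 𝕜 ∞ f s := by
  have hboth : ∀ n : ℕ, ContDiffOn 𝕜 n f s ∧ ContDiffOn 𝕜 n (deriv f) s := by
    intro n
    induction n with
    | zero => exact ⟨contDiffOn_zero.2 hf.continuousOn, contDiffOn_zero.2 hf'.continuousOn⟩
    | succ n ih =>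
      have hf'' : ContDiffOn 𝕜 n (deriv (deriv f)) s :=
        (((contDiffOn_infty.1 ha n).smul ih.2).add ((contDiffOn_infty.1 hc n).smul ih.1)).congr hode
      exact ⟨(contDiffOn_succ_iff_deriv_of_isOpen hs).2 ⟨hf, by simp, ih.2⟩,
        (contDiffOn_succ_iff_deriv_of_isOpen hs).2 ⟨hf', by simp, hf''⟩⟩
  exact contDiffOn_infty.2 fun n => (hboth n).1

theorem deriv_zero_of_even [CharZero 𝕜] {f : 𝕜 → F} (hf : f.Even) : deriv f 0 = 0 := by
  have hneg : deriv f 0 = -deriv f 0 := by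
    conv_lhs => rw [← funext hf, deriv_comp_neg, neg_zero]
  have htwo : (2 : 𝕜) • deriv f 0 = 0 := by rw [two_smul, ← eq_neg_iff_add_eq_zero, ← hneg]
  exact (smul_eq_zero.1 htwo).resolve_left two_ne_zero

theorem deriv_ofReal_comp (f : ℝ → ℝ) (x : ℝ) :
    deriv (fun x => (f x : ℂ)) x = (deriv f x : ℝ) := by
  by_cases hf : DifferentiableAt ℝ f x
  · exact hf.hasDerivAt.ofReal_comp.deriv
  · have hf' : ¬DifferentiableAt ℝ (fun x => (f x : ℂ)) x := fun h =>
      hf (Complex.reCLM.differentiableAt.comp x h)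
    rw [deriv_zero_of_not_differentiableAt hf, deriv_zero_of_not_differentiableAt hf',
      Complex.ofReal_zero]

end OneVariable

theorem contDiffOn_infty_of_gallery_ode {κ μ : ℝ} (hκ : κ ≠ 0) {b : ℝ → ℝ}
    (hb : ContDiffOn ℝ 2 b (Ioi 0))
    (hode : ∀ y : ℝ, 0 < y →
      κ * y * deriv (deriv b) y + deriv b y + (μ - κ * y) * b y = 0) :
    ContDiffOn ℝ ∞ b (Ioi 0) := by
  obtain ⟨hb0, -, hb1⟩ := (contDiffOn_succ_iff_deriv_of_isOpen (n := 1) isOpen_Ioi).1 hb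
  have hinv : ContDiffOn ℝ ∞ (fun y => (κ * y)⁻¹) (Ioi 0) :=
    ContDiffOn.inv (by fun_prop) fun y hy => mul_ne_zero hκ (ne_of_gt hy)
  refine contDiffOn_infty_of_deriv_deriv_eq (a := fun y => -(κ * y)⁻¹)
    (c := fun y => -((μ - κ * y) * (κ * y)⁻¹)) isOpen_Ioi hb0 (hb1.differentiableOn one_ne_zero)
    ?_ ?_ fun y hy => ?_
  · exact hinv.neg
  · exact (ContDiffOn.mul (by fun_prop) hinv).neg
  · have hy0 : y ≠ 0 := ne_of_gt hy
    simp only [smul_eq_mul]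
    field_simp
    linear_combination hode y hy

section GalleryWave

variable {ι E : Type*} [Fintype ι] [NormedAddCommGroup E] [InnerProductSpace ℝ E]

/-- The linearized acoustic operator `∂_t² − κ y Δ − ∂_y` at `(t, y, x)`, where `y` is the normal
and `x` the tangential variable, with the tangential Laplacian written in the orthonormal basis `e`.
-/
def acousticOperator (κ : ℝ) (e : OrthonormalBasis ι ℝ E) (u : ℝ → ℝ → E → ℂ) (t y : ℝ) (x : E) :
    ℂ :=
  deriv (fun s => deriv (fun s' => u s' y x) s) t
    - ((κ * y : ℝ) : ℂ) *
        (deriv (fun r => deriv (fun r' => u t r' x) r) y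
          + ∑ i, fderiv ℝ (fun z => fderiv ℝ (fun z' => u t y z') z (e i)) x (e i))
    - deriv (fun r => u t r x) y

/-- The plane gallery wave of tangential frequency `ξ`, normal profile `b` and time frequency
`√μ √‖ξ‖`. -/
def galleryWave (b : ℝ → ℝ) (μ t y : ℝ) (x ξ : E) : ℂ :=
  Complex.exp (Complex.I * (⟪x, ξ⟫ : ℝ)) * (b (‖ξ‖ * y) : ℂ) * (cos (t * √μ * √‖ξ‖) : ℂ)

theorem acousticOperator_integral {X : Type*} [NormedAddCommGroup X] [NormedSpace ℝ X]
    [MeasurableSpace X] [BorelSpace X] [SecondCountableTopology X]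
    {ν : Measure X} {U : Set X} {φ : X → ℂ} {G : ℝ → ℝ → E → X → ℂ}
    (hG : IsSmoothKernel (fun p : ℝ × ℝ × E => G p.1 p.2.1 p.2.2) (univ ×ˢ Ioi 0 ×ˢ univ) U)
    (hU : IsOpen U) (hφ : IsAmplitudeOn φ U ν) (κ : ℝ) (e : OrthonormalBasis ι ℝ E)
    (t : ℝ) {y : ℝ} (hy : 0 < y) (x : E) :
    acousticOperator κ e (fun t y x => ∫ ξ, φ ξ • G t y x ξ ∂ν) t y x =
      ∫ ξ, φ ξ • acousticOperator κ e (fun t y x => G t y x ξ) t y x ∂ν := by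
  have : FiniteDimensional ℝ E := e.toBasis.finiteDimensional_of_finite
  have htime : IsSmoothKernel (fun s => G s y x) univ U :=
    hG.comp_left (f := fun s => (s, y, x)) (by fun_prop) fun _ _ => ⟨trivial, hy, trivial⟩
  have hnormal : IsSmoothKernel (fun r => G t r x) (Ioi 0) U :=
    hG.comp_left (f := fun r => (t, r, x)) (by fun_prop) fun _ hr => ⟨trivial, hr, trivial⟩
  have htang : IsSmoothKernel (fun z => G t y z) univ U :=
    hG.comp_left (f := fun z => (t, y, z)) (by fun_prop) fun _ _ => ⟨trivial, hy, trivial⟩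
  have int_tt := hφ.integrable_smul <| ((htime.fderiv_left_apply isOpen_univ hU 1).fderiv_left_apply
    isOpen_univ hU 1).continuousOn_right (mem_univ t)
  have int_y := hφ.integrable_smul <|
    (hnormal.fderiv_left_apply isOpen_Ioi hU 1).continuousOn_right hy
  have int_yy := hφ.integrable_smul <|
    ((hnormal.fderiv_left_apply isOpen_Ioi hU 1).fderiv_left_apply
      isOpen_Ioi hU 1).continuousOn_right hy
  have int_xx (i : ι) := hφ.integrable_smul <|
    ((htang.fderiv_left_apply isOpen_univ hU (e i)).fderiv_left_apply
      isOpen_univ hU (e i)).continuousOn_right (mem_univ x)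
  simp only [acousticOperator, ← fderiv_apply_one_eq_deriv]
  rw [htime.fderiv_fderiv_integral_apply isOpen_univ hU hφ (mem_univ t),
    hnormal.fderiv_fderiv_integral_apply isOpen_Ioi hU hφ hy,
    hnormal.fderiv_integral_apply isOpen_Ioi hU hφ hy]
  simp only [htang.fderiv_fderiv_integral_apply isOpen_univ hU hφ (mem_univ x)]
  have int_sum := integrable_finsetSum Finset.univ fun i _ => int_xx i
  have int_lap := (int_yy.fun_add int_sum).const_mul ((κ * y : ℝ) : ℂ)
  rw [← integral_finsetSum _ fun i _ => int_xx i, ← integral_add int_yy int_sum,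
    ← integral_const_mul, sub_sub, ← integral_add int_lap int_y,
    ← integral_sub int_tt (int_lap.fun_add int_y)]
  congr 1 with ξ
  simp only [smul_eq_mul, ← Finset.mul_sum]
  ring

variable (b : ℝ → ℝ) (μ t y : ℝ) (x ξ : E)

theorem deriv_deriv_galleryWave_time {μ : ℝ} (hμ : 0 ≤ μ) :
    deriv (fun s => deriv (fun s' => galleryWave b μ s' y x ξ) s) t =
      -(μ * ‖ξ‖) * galleryWave b μ t y x ξ := by
  have hcos (a s : ℝ) : HasDerivAt (fun s => cos (s * a)) (-sin (s * a) * a) s :=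
    (hasDerivAt_mul_const a).cos
  have hsin (a s : ℝ) : HasDerivAt (fun s => -sin (s * a) * a) (-a ^ 2 * cos (s * a)) s :=
    ((hasDerivAt_mul_const a).sin.neg.mul_const a).congr_deriv (by ring)
  have hsq : (√μ * √‖ξ‖) ^ 2 = μ * ‖ξ‖ := by
    rw [mul_pow, sq_sqrt hμ, sq_sqrt (norm_nonneg ξ)]
  simp only [galleryWave, mul_assoc _ √μ, deriv_const_mul_field, deriv_ofReal_comp,
    (hcos _ _).deriv, (hsin _ _).deriv, hsq]
  push_cast
  ring

theorem deriv_galleryWave_normal :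
    deriv (fun r => galleryWave b μ t r x ξ) y = ‖ξ‖ * galleryWave (deriv b) μ t y x ξ := by
  simp only [galleryWave, deriv_mul_const_field, deriv_const_mul_field, deriv_ofReal_comp,
    deriv_comp_mul_left, smul_eq_mul, Complex.ofReal_mul]
  ring

theorem deriv_deriv_galleryWave_normal :
    deriv (fun r => deriv (fun r' => galleryWave b μ t r' x ξ) r) y =
      ‖ξ‖ ^ 2 * galleryWave (deriv (deriv b)) μ t y x ξ := by
  simp only [deriv_galleryWave_normal, deriv_const_mul_field]
  ring

theorem hasFDerivAt_galleryWave_tangential :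
    HasFDerivAt (fun z => galleryWave b μ t y z ξ)
      ((Complex.I * galleryWave b μ t y x ξ) • Complex.ofRealCLM.comp (innerSL ℝ ξ)) x := by
  have hphase : HasFDerivAt (fun z => ((⟪z, ξ⟫ : ℝ) : ℂ))
      (Complex.ofRealCLM.comp (innerSL ℝ ξ)) x := by
    simp only [real_inner_comm ξ]
    exact (Complex.ofRealCLM.comp (innerSL ℝ ξ)).hasFDerivAt
  refine (((hphase.const_mul Complex.I).cexp.mul_const (b (‖ξ‖ * y) : ℂ)).mul_const
    (cos (t * √μ * √‖ξ‖) : ℂ)).congr_fderiv ?_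
  simp only [smul_smul, galleryWave]
  ring_nf

theorem fderiv_galleryWave_tangential (v : E) :
    fderiv ℝ (fun z => galleryWave b μ t y z ξ) x v =
      Complex.I * (⟪v, ξ⟫ : ℝ) * galleryWave b μ t y x ξ := by
  rw [(hasFDerivAt_galleryWave_tangential b μ t y x ξ).fderiv, real_inner_comm]
  exact mul_right_comm _ _ _

theorem fderiv_fderiv_galleryWave_tangential (v : E) :
    fderiv ℝ (fun z => fderiv ℝ (fun z' => galleryWave b μ t y z' ξ) z v) x v =
      -(⟪v, ξ⟫ : ℝ) ^ 2 * galleryWave b μ t y x ξ := by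
  simp only [fderiv_galleryWave_tangential]
  rw [fderiv_const_mul (hasFDerivAt_galleryWave_tangential b μ t y x ξ).differentiableAt,
    smul_apply, fderiv_galleryWave_tangential, smul_eq_mul]
  linear_combination (⟪v, ξ⟫ : ℂ) ^ 2 * galleryWave b μ t y x ξ * Complex.I_sq

theorem sum_fderiv_fderiv_galleryWave_tangential (e : OrthonormalBasis ι ℝ E) :
    ∑ i, fderiv ℝ (fun z => fderiv ℝ (fun z' => galleryWave b μ t y z' ξ) z (e i)) x (e i) =
      -‖ξ‖ ^ 2 * galleryWave b μ t y x ξ := by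
  have hparseval : ∑ i, ((⟪e i, ξ⟫ : ℝ) : ℂ) ^ 2 = (‖ξ‖ : ℂ) ^ 2 := by
    exact_mod_cast e.sum_sq_inner_right ξ
  rw [Finset.sum_congr rfl fun i _ => fderiv_fderiv_galleryWave_tangential b μ t y x ξ (e i),
    ← Finset.sum_mul, Finset.sum_neg_distrib, hparseval]

theorem acousticOperator_galleryWave {κ μ : ℝ} (hμ : 0 ≤ μ) (e : OrthonormalBasis ι ℝ E)
    (hode : κ * (‖ξ‖ * y) * deriv (deriv b) (‖ξ‖ * y) + deriv b (‖ξ‖ * y) +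
      (μ - κ * (‖ξ‖ * y)) * b (‖ξ‖ * y) = 0) :
    acousticOperator κ e (fun t y x => galleryWave b μ t y x ξ) t y x = 0 := by
  have hode' : (κ : ℂ) * (‖ξ‖ * y) * deriv (deriv b) (‖ξ‖ * y) + deriv b (‖ξ‖ * y) +
      (μ - κ * (‖ξ‖ * y)) * b (‖ξ‖ * y) = 0 := by exact_mod_cast hode
  rw [acousticOperator, deriv_deriv_galleryWave_time b t y x ξ hμ,
    deriv_deriv_galleryWave_normal, deriv_galleryWave_normal,
    sum_fderiv_fderiv_galleryWave_tangential]
  simp only [galleryWave, Complex.ofReal_mul]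
  linear_combination (-(Complex.exp (Complex.I * (⟪x, ξ⟫ : ℝ)) * ‖ξ‖ *
    (cos (t * √μ * √‖ξ‖) : ℂ))) * hode'

variable {b} in
theorem isSmoothKernel_galleryWave (hb : ContDiffOn ℝ ∞ b (Ioi 0)) :
    IsSmoothKernel (fun (p : ℝ × ℝ × E) ξ => galleryWave b μ p.1 p.2.1 p.2.2 ξ)
      (univ ×ˢ Ioi 0 ×ˢ univ) {0}ᶜ := by
  rintro ⟨⟨t, y, x⟩, ξ⟩ ⟨⟨-, hy, -⟩, hξ⟩
  have hnorm : ContDiffAt ℝ ∞ (fun q : (ℝ × ℝ × E) × E => ‖q.2‖) ((t, y, x), ξ) :=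
    contDiffAt_snd.norm ℝ hξ
  have hprofile : ContDiffAt ℝ ∞ (fun q : (ℝ × ℝ × E) × E => b (‖q.2‖ * q.1.2.1))
      ((t, y, x), ξ) :=
    (hb.contDiffAt (Ioi_mem_nhds (mul_pos (norm_pos_iff.2 hξ) hy))).comp ((t, y, x), ξ)
      (f := fun q : (ℝ × ℝ × E) × E => ‖q.2‖ * q.1.2.1) (hnorm.mul (by fun_prop))
  have hosc : ContDiffAt ℝ ∞ (fun q : (ℝ × ℝ × E) × E => cos (q.1.1 * √μ * √‖q.2‖))
      ((t, y, x), ξ) :=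
    (ContDiffAt.mul (by fun_prop) (hnorm.sqrt (norm_ne_zero_iff.2 hξ))).cos
  have hphase : ContDiffAt ℝ ∞ (fun q : (ℝ × ℝ × E) × E => ⟪q.1.2.2, q.2⟫) ((t, y, x), ξ) :=
    ContDiffAt.inner ℝ (by fun_prop) contDiffAt_snd
  have hofReal : ContDiff ℝ ∞ ((↑) : ℝ → ℂ) := Complex.ofRealCLM.contDiff
  exact (((contDiffAt_const.mul (hofReal.contDiffAt.comp _ hphase)).cexp.mul
    (hofReal.contDiffAt.comp _ hprofile)).mul
    (hofReal.contDiffAt.comp _ hosc)).contDiffWithinAt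

end GalleryWave

theorem stmt14_general {ι E : Type*} [Fintype ι] [NormedAddCommGroup E] [InnerProductSpace ℝ E]
    [MeasurableSpace E] [BorelSpace E] {ν : Measure E}
    {κ μ : ℝ} (hκ : κ ≠ 0) (hμ : 0 ≤ μ) {b : ℝ → ℝ} (hb : ContDiffOn ℝ 2 b (Ioi 0))
    (hode : ∀ y : ℝ, 0 < y →
      κ * y * deriv (deriv b) y + deriv b y + (μ - κ * y) * b y = 0)
    {φ : E → ℂ} (hφ : Integrable φ ν) (hφc : HasCompactSupport φ) (hφ0 : (0 : E) ∉ tsupport φ)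
    (c : ℂ) (e : OrthonormalBasis ι ℝ E) {u : ℝ → ℝ → E → ℂ}
    (hu : u = fun t y x => c * ∫ ξ, galleryWave b μ t y x ξ * φ ξ ∂ν) :
    ContDiffOn ℝ ∞ (fun p : ℝ × ℝ × E => u p.1 p.2.1 p.2.2) (univ ×ˢ Ioi 0 ×ˢ univ) ∧
    (∀ t y : ℝ, 0 < y → ∀ x, acousticOperator κ e u t y x = 0) ∧
    ∀ y : ℝ, 0 < y → ∀ x,
      u 0 y x = c * ∫ ξ, Complex.exp (Complex.I * (⟪x, ξ⟫ : ℝ)) * b (‖ξ‖ * y) * φ ξ ∂ν ∧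
      deriv (fun s => u s y x) 0 = 0 := by
  have : FiniteDimensional ℝ E := e.toBasis.finiteDimensional_of_finite
  have hkernel := isSmoothKernel_galleryWave (E := E) μ (contDiffOn_infty_of_gallery_ode hκ hb hode)
  have hamp : IsAmplitudeOn (fun ξ => c * φ ξ) {0}ᶜ ν :=
    ⟨hφ.const_mul c, hφc.mul_left,
      tsupport_mul_subset_right.trans (subset_compl_singleton_iff.2 hφ0)⟩
  have hu' : u = fun t y x => ∫ ξ, (c * φ ξ) • galleryWave b μ t y x ξ ∂ν := by
    simp only [hu, ← integral_const_mul, smul_eq_mul, mul_left_comm, mul_comm]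
  refine ⟨?_, fun t y hy x => ?_, fun y _ x => ⟨?_, ?_⟩⟩
  · rw [hu']
    exact hkernel.contDiffOn_integral (isOpen_univ.prod (isOpen_Ioi.prod isOpen_univ))
      isOpen_compl_singleton hamp
  · rw [hu', acousticOperator_integral hkernel isOpen_compl_singleton hamp κ e t hy x]
    refine integral_eq_zero_of_ae (.of_forall fun ξ => ?_)
    rcases eq_or_ne ξ 0 with rfl | hξ
    · simp [image_eq_zero_of_notMem_tsupport hφ0]
    · simp [acousticOperator_galleryWave b t y x ξ hμ e
        (hode _ (mul_pos (norm_pos_iff.2 hξ) hy))]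
  · simp [hu, galleryWave]
  · exact deriv_zero_of_even fun s => by simp [hu, galleryWave]

/-- a gallery mode whose normal profile solves the eigenfunction
ODE, evolved by the tangential half-wave flow, is a smooth solution of the
acoustic wave equation `∂_t²u − κx_dΔu − ∂_{x_d}u = 0` on ℝ × Ω with initial
data `(u₀, 0)`. -/
theorem stmt14 {d : ℕ} (hd : 2 ≤ d) (κ μ : ℝ) (hκ : 0 < κ) (hμ : 0 < μ)
    (b : ℝ → ℝ) (hbcont : ContinuousOn b (Set.Ici 0))
    (hbC2 : ContDiffOn ℝ 2 b (Set.Ioi 0))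
    (hbloc : ∀ K : Set ℝ, IsCompact K → K ⊆ Set.Ici 0 → ∃ C : ℝ,
      ∀ y ∈ K ∩ Set.Ioi 0,
        |b y| + |deriv b y| + |deriv (deriv b) y| ≤ C)
    (hODE : ∀ y : ℝ, 0 < y →
      κ * y * deriv (deriv b) y + deriv b y + (μ - κ * y) * b y = 0)
    (φ₀ : SchwartzMap (EuclideanSpace ℝ (Fin (d - 1))) ℂ)
    (φhat : EuclideanSpace ℝ (Fin (d - 1)) → ℂ)
    (hφhat : φhat = fun ξ => ∫ x : EuclideanSpace ℝ (Fin (d - 1)),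
      Complex.exp (-Complex.I * (⟪x, ξ⟫ : ℝ)) * φ₀ x)
    (hφs : ContDiff ℝ (⊤ : ℕ∞) φhat) (hφc : HasCompactSupport φhat)
    (hφ0 : (0 : EuclideanSpace ℝ (Fin (d - 1))) ∉ tsupport φhat)
    (u : ℝ → ℝ → EuclideanSpace ℝ (Fin (d - 1)) → ℂ)
    (hu : u = fun t xd x' =>
      (((2 * π) ^ ((1 : ℤ) - (d : ℤ)) : ℝ) : ℂ) *
        ∫ ξ : EuclideanSpace ℝ (Fin (d - 1)),
          Complex.exp (Complex.I * (⟪x', ξ⟫ : ℝ)) * (b (‖ξ‖ * xd) : ℂ) *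
            (Real.cos (t * Real.sqrt μ * Real.sqrt ‖ξ‖) : ℂ) * φhat ξ) :
    ContDiffOn ℝ (⊤ : ℕ∞)
      (fun p : ℝ × ℝ × EuclideanSpace ℝ (Fin (d - 1)) => u p.1 p.2.1 p.2.2)
      (Set.univ ×ˢ Set.Ioi 0 ×ˢ Set.univ) ∧
    (∀ t : ℝ, ∀ xd : ℝ, 0 < xd → ∀ x' : EuclideanSpace ℝ (Fin (d - 1)),
      deriv (fun s => deriv (fun s' => u s' xd x') s) t
        - ((κ * xd : ℝ) : ℂ) *
            (deriv (fun y => deriv (fun y' => u t y' x') y) xd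
              + ∑ i : Fin (d - 1),
                  fderiv ℝ (fun z => fderiv ℝ (fun z' => u t xd z') z
                    (EuclideanSpace.single i 1)) x' (EuclideanSpace.single i 1))
        - deriv (fun y => u t y x') xd = 0) ∧
    (∀ xd : ℝ, 0 < xd → ∀ x' : EuclideanSpace ℝ (Fin (d - 1)),
      u 0 xd x' = (((2 * π) ^ ((1 : ℤ) - (d : ℤ)) : ℝ) : ℂ) *
          ∫ ξ : EuclideanSpace ℝ (Fin (d - 1)),
            Complex.exp (Complex.I * (⟪x', ξ⟫ : ℝ)) * (b (‖ξ‖ * xd) : ℂ) * φhat ξ ∧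
      deriv (fun s => u s xd x') 0 = 0) := by
  have hν : Integrable φhat := hφs.continuous.integrable_of_hasCompactSupport hφc
  obtain ⟨hsmooth, hwave, hinit⟩ := stmt14_general hκ.ne' hμ.le hbC2 hODE hν hφc hφ0 _
    (EuclideanSpace.basisFun (Fin (d - 1)) ℝ) hu
  exact ⟨hsmooth, by simpa [acousticOperator] using hwave, hinit⟩

end
end
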